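/- Let α ∈ (0, 2s) and M ≥ 0. There exist δ > 0 and r ∈ (0,1), depending only on s, n, α and M, such that the following holds: if b : [−1,0] × B_1^0 → ℝ^n satisfies sup_{t∈[−1,0]} ‖b(t,·)‖_{C^{1−2s}(B_1^0)} ≤ M and sup |b| ≤ δ, if f : [−1,0] × B_1^0 → ℝ satisfies sup |f| ≤ δ, and if u is a classical solution of the extended drift–diffusion equation with drift b and right-hand side f satisfying sup_{[−1,0]×B_1^+} |u| ≤ 1, then there exist a vector A ∈ ℝ^n and a differentiable function D : [−r^{2s},0] → ℝ, with |A|, sup |D| and sup |D'| bounded by a constant depending only on s, n and M, such that sup over (t,x,y) ∈ [−r^{2s},0] × (B_r^+ ∪ B_r^0) of |u(t,x,y) − A·x − D(t) − (D'(t)/(1−a)) y^{1−a}| is at most r^{1+α}. -/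

import Mathlib

open Set Filter Topology MeasureTheory
open scoped RealInnerProductSpace

noncomputable section

abbrev En (n : ℕ) := EuclideanSpace ℝ (Fin n)

/-- The open upper half ball `B_r^+`. -/
def halfBall (n : ℕ) (r : ℝ) : Set (En n × ℝ) :=
  {p | ‖p.1‖ ^ 2 + p.2 ^ 2 < r ^ 2 ∧ 0 < p.2}

/-- The closure of the upper half ball. -/
def closedHalfBall (n : ℕ) (r : ℝ) : Set (En n × ℝ) :=
  {p | ‖p.1‖ ^ 2 + p.2 ^ 2 ≤ r ^ 2 ∧ 0 ≤ p.2}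

/-- `B_r^+ ∪ B_r^0`. -/
def halfBallWithBase (n : ℕ) (r : ℝ) : Set (En n × ℝ) :=
  {p | ‖p.1‖ ^ 2 + p.2 ^ 2 < r ^ 2 ∧ 0 ≤ p.2}

/-- The flat ball `B_r^0` in `ℝⁿ`. -/
def flatBall (n : ℕ) (r : ℝ) : Set (En n) := {x | ‖x‖ < r}

/-- `(∂B_1)^+`. -/
def spherePlus (n : ℕ) : Set (En n × ℝ) := {p | ‖p.1‖ ^ 2 + p.2 ^ 2 = 1 ∧ 0 < p.2}

/-- closure of `(∂B_1)^+`. -/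
def closedSpherePlus (n : ℕ) : Set (En n × ℝ) := {p | ‖p.1‖ ^ 2 + p.2 ^ 2 = 1 ∧ 0 ≤ p.2}

/-- Second directional derivative of `u` at `p` in direction `v`. -/
def D2 {n : ℕ} (u : En n × ℝ → ℝ) (p v : En n × ℝ) : ℝ :=
  fderiv ℝ (fun q => fderiv ℝ u q v) p v

/-- The Laplacian in the `n+1` variables `(x, y)`. -/
def lap {n : ℕ} (u : En n × ℝ → ℝ) (p : En n × ℝ) : ℝ :=
  (∑ i : Fin n, D2 u p (EuclideanSpace.single i 1, 0)) + D2 u p (0, 1)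

/-- `u` is `a`-harmonic on `Ω`: it is `C²` there and `Δu + (a/y) ∂_y u = 0`. -/
def IsAHarmonicOn {n : ℕ} (a : ℝ) (u : En n × ℝ → ℝ) (Ω : Set (En n × ℝ)) : Prop :=
  ContDiffOn ℝ 2 u Ω ∧ ∀ p ∈ Ω, lap u p + (a / p.2) * fderiv ℝ u p (0, 1) = 0

/-- `lim_{y → 0⁺} y^a ∂_y w(x, y) = L`. -/
def NormalDerivLimit {n : ℕ} (a : ℝ) (w : En n × ℝ → ℝ) (x : En n) (L : ℝ) : Prop :=
  Tendsto (fun y : ℝ => y ^ a * fderiv ℝ w (x, y) (0, 1)) (𝓝[>] (0 : ℝ)) (𝓝 L)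

/-- The boundary-restriction `(t, x) ↦ u(t, x, 0)`. -/
def bdryFun {n : ℕ} (u : ℝ → En n × ℝ → ℝ) : ℝ × En n → ℝ := fun q => u q.1 (q.2, 0)

/-- A classical solution of the extended drift–diffusion equation on
`[-1,0] × closure (B_1^+)` with drift `b` and right-hand side `f`. -/
def IsExtDDSolution {n : ℕ} (a : ℝ) (b : ℝ → En n → En n) (f : ℝ → En n → ℝ)
    (u : ℝ → En n × ℝ → ℝ) : Prop :=
  ContinuousOn (fun q : ℝ × (En n × ℝ) => u q.1 q.2) (Icc (-1 : ℝ) 0 ×ˢ closedHalfBall n 1) ∧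
  (∀ t ∈ Icc (-1 : ℝ) 0, IsAHarmonicOn a (u t) (halfBall n 1)) ∧
  (∀ q ∈ Ioc (-1 : ℝ) 0 ×ˢ flatBall n 1,
      DifferentiableWithinAt ℝ (bdryFun u) (Ioc (-1 : ℝ) 0 ×ˢ flatBall n 1) q) ∧
  (∀ t x, (t, x) ∈ Ioc (-1 : ℝ) 0 ×ˢ flatBall n 1 →
      ∃ L : ℝ, NormalDerivLimit a (u t) x L ∧
        fderivWithin ℝ (bdryFun u) (Ioc (-1 : ℝ) 0 ×ˢ flatBall n 1) (t, x) (1, 0) +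
          fderivWithin ℝ (bdryFun u) (Ioc (-1 : ℝ) 0 ×ˢ flatBall n 1) (t, x) (0, b t x) -
          L = f t x)

/-- A classical solution of the localized fractional heat equation on
`[-1,0] × closure (B_1^+)`. -/
def IsFracHeatSolution {n : ℕ} (a : ℝ) (u : ℝ → En n × ℝ → ℝ) : Prop :=
  ContinuousOn (fun q : ℝ × (En n × ℝ) => u q.1 q.2) (Icc (-1 : ℝ) 0 ×ˢ closedHalfBall n 1) ∧
  (∀ t ∈ Icc (-1 : ℝ) 0, IsAHarmonicOn a (u t) (halfBall n 1)) ∧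
  (∀ t ∈ Ioc (-1 : ℝ) 0, ∀ x ∈ flatBall n 1,
      DifferentiableWithinAt ℝ (fun τ => u τ (x, 0)) (Ioc (-1 : ℝ) 0) t ∧
      NormalDerivLimit a (u t) x (derivWithin (fun τ => u τ (x, 0)) (Ioc (-1 : ℝ) 0) t))


/-- Second derivative predicate. -/
def SD (g : ℝ → ℝ) (x q : ℝ) : Prop :=
  ∃ g' : ℝ → ℝ, (∀ᶠ z in 𝓝 x, HasDerivAt g (g' z) z) ∧ HasDerivAt g' q x

lemma SD.add {g h : ℝ → ℝ} {x q r : ℝ} (hg : SD g x q) (hh : SD h x r) :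
    SD (fun z => g z + h z) x (q + r) := by
  obtain ⟨g', h1, h2⟩ := hg
  obtain ⟨h', h3, h4⟩ := hh
  exact ⟨fun z => g' z + h' z, by filter_upwards [h1, h3] with z a b using a.add b, h2.add h4⟩

lemma SD.const_mul {g : ℝ → ℝ} {x q : ℝ} (c : ℝ) (hg : SD g x q) :
    SD (fun z => c * g z) x (c * q) := by
  obtain ⟨g', h1, h2⟩ := hg
  exact ⟨fun z => c * g' z, by filter_upwards [h1] with z a using a.const_mul c, h2.const_mul c⟩

lemma SD.const (c x : ℝ) : SD (fun _ => c) x 0 :=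
  ⟨fun _ => 0, Eventually.of_forall fun z => hasDerivAt_const z c, hasDerivAt_const x 0⟩

lemma SD.sub {g h : ℝ → ℝ} {x q r : ℝ} (hg : SD g x q) (hh : SD h x r) :
    SD (fun z => g z - h z) x (q - r) := by
  have := hg.add (hh.const_mul (-1))
  convert this using 1
  · ext z; ring
  · ring

lemma SD.sum {ι : Type*} (s : Finset ι) {g : ι → ℝ → ℝ} {x : ℝ} {q : ι → ℝ}
    (h : ∀ i ∈ s, SD (g i) x (q i)) : SD (fun z => ∑ i ∈ s, g i z) x (∑ i ∈ s, q i) := by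
  classical
  induction s using Finset.induction_on with
  | empty => simpa using SD.const 0 x
  | insert i s hi ih =>
    have := (h i (Finset.mem_insert_self i s)).add (ih fun j hj => h j (Finset.mem_insert_of_mem hj))
    convert this using 1
    · ext z; rw [Finset.sum_insert hi]
    · rw [Finset.sum_insert hi]

lemma SD.congr {g h : ℝ → ℝ} {x q : ℝ} (hg : SD g x q) (e : g =ᶠ[𝓝 x] h) : SD h x q := by
  obtain ⟨g', h1, h2⟩ := hg
  refine ⟨g', ?_, h2⟩
  filter_upwards [h1, e.eventuallyEq_nhds] with z a b
  exact a.congr_of_eventuallyEq b.symm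

lemma SD.hasDerivAt {g : ℝ → ℝ} {x q : ℝ} (hg : SD g x q) : DifferentiableAt ℝ g x := by
  obtain ⟨g', h1, h2⟩ := hg
  exact h1.self_of_nhds.differentiableAt

lemma SD.quad (A B C x : ℝ) : SD (fun z => A + B * z + C * z ^ 2) x (2 * C) := by
  refine ⟨fun z => B + C * (2 * z), Eventually.of_forall fun z => ?_, ?_⟩
  · have := (((hasDerivAt_id z).const_mul B).const_add A).add ((hasDerivAt_pow 2 z).const_mul C)
    refine this.congr_deriv ?_
    simp
  · have := ((((hasDerivAt_id x).const_mul 2).const_mul C).const_add B)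
    refine this.congr_deriv ?_
    simp; ring

lemma SD.comp_affine {g : ℝ → ℝ} {q : ℝ} (r c : ℝ) (hg : SD g r q) :
    SD (fun z => g (r + c * z)) 0 (c ^ 2 * q) := by
  obtain ⟨g', h1, h2⟩ := hg
  have hd : ∀ z, HasDerivAt (fun z : ℝ => r + c * z) c z := fun z => by
    simpa using ((hasDerivAt_id z).const_mul c).const_add r
  refine ⟨fun z => c * g' (r + c * z), ?_, ?_⟩
  · have ht : Tendsto (fun z : ℝ => r + c * z) (𝓝 0) (𝓝 r) := by
      have := (hd 0).continuousAt.tendsto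
      simpa using this
    filter_upwards [ht.eventually h1] with z hz
    have := hz.comp z (hd z)
    refine this.congr_deriv ?_
    ring
  · have h2' : HasDerivAt g' q (r + c * 0) := by simpa using h2
    have := (h2'.comp 0 (hd 0)).const_mul c
    refine this.congr_deriv ?_
    ring

lemma SD.nonpos {g : ℝ → ℝ} {x q : ℝ} (hg : SD g x q) (hm : IsLocalMax g x) : q ≤ 0 := by
  by_contra hq
  push Not at hq
  obtain ⟨g', h1, h2⟩ := hg
  have e : deriv g =ᶠ[𝓝 x] g' := by
    filter_upwards [h1] with z hz using hz.deriv
  have d2 : deriv (deriv g) x = q := by rw [e.deriv_eq, h2.deriv]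
  have d1 : deriv g x = 0 := hm.deriv_eq_zero
  have hmin := isLocalMin_of_deriv_deriv_pos (by rw [d2]; exact hq) d1
    h1.self_of_nhds.continuousAt
  have e2 : g =ᶠ[𝓝 x] fun _ => g x := by
    filter_upwards [hm, hmin] with z a b using le_antisymm a b
  have e3 : deriv g =ᶠ[𝓝 x] fun _ => 0 := by
    filter_upwards [e2.eventuallyEq_nhds] with z hz
    rw [hz.deriv_eq]; simp
  have : deriv (deriv g) x = 0 := by rw [e3.deriv_eq]; simp
  linarith

/-- standard basis vector -/
def ek {n : ℕ} (k : Fin n) : En n := EuclideanSpace.single k 1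

lemma sum_rot {n : ℕ} (B : En n →L[ℝ] En n →L[ℝ] ℝ) (O : En n ≃ₗᵢ[ℝ] En n) :
    ∑ k, B (O (ek k)) (O (ek k)) = ∑ k, B (ek k) (ek k) := by
  let T : En n →ₗ[ℝ] En n :=
    ((InnerProductSpace.toDual ℝ (En n)).symm.toLinearEquiv.toLinearMap : _ →ₗ[ℝ] _) ∘ₗ
      (B : En n →ₗ[ℝ] (En n →L[ℝ] ℝ))
  have hT : ∀ v w, ⟪v, T w⟫ = B w v := by
    intro v w
    rw [real_inner_comm]
    exact InnerProductSpace.toDual_symm_apply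
  let b := EuclideanSpace.basisFun (Fin n) ℝ
  have h1 := LinearMap.trace_eq_sum_inner T b
  have h2 := LinearMap.trace_eq_sum_inner T (b.map O)
  rw [h1] at h2
  simp only [hT, OrthonormalBasis.map_apply, b, EuclideanSpace.basisFun_apply] at h2
  exact h2.symm

lemma isOpen_halfBall (n : ℕ) (r : ℝ) : IsOpen (halfBall n r) := by
  have h1 : IsOpen {p : En n × ℝ | ‖p.1‖ ^ 2 + p.2 ^ 2 < r ^ 2} :=
    isOpen_lt (by fun_prop) (by fun_prop)
  have h2 : IsOpen {p : En n × ℝ | 0 < p.2} := isOpen_lt (by fun_prop) (by fun_prop)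
  exact h1.inter h2

lemma aharm_facts {n : ℕ} {a : ℝ} {v : En n × ℝ → ℝ} (hv : IsAHarmonicOn a v (halfBall n 1))
    {p : En n × ℝ} (hp : p ∈ halfBall n 1) :
    ∃ (B : (En n × ℝ) →L[ℝ] (En n × ℝ) →L[ℝ] ℝ) (g : ℝ),
      (∀ w, SD (fun τ : ℝ => v (p + τ • w)) 0 (B w w)) ∧
      HasDerivAt (fun τ : ℝ => v (p.1, τ)) g p.2 ∧
      SD (fun τ : ℝ => v (p.1, τ)) p.2 (B (0, 1) (0, 1)) ∧
      ∀ O : En n ≃ₗᵢ[ℝ] En n,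
        ∑ k, B (O (ek k), 0) (O (ek k), 0) + B (0, 1) (0, 1) + a / p.2 * g = 0 := by
  obtain ⟨hc, he⟩ := hv
  have ho := isOpen_halfBall n 1
  have hcp : ∀ q ∈ halfBall n 1, ContDiffAt ℝ 2 v q := fun q hq =>
    hc.contDiffAt (ho.mem_nhds hq)
  have hd1 : ∀ᶠ q in 𝓝 p, HasFDerivAt v (fderiv ℝ v q) q := by
    filter_upwards [ho.mem_nhds hp] with q hq
    exact ((hcp q hq).differentiableAt (by norm_num)).hasFDerivAt
  have hd2 : DifferentiableAt ℝ (fderiv ℝ v) p :=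
    ((hcp p hp).fderiv_right (m := 1) (by norm_num)).differentiableAt (by norm_num)
  set B := fderiv ℝ (fderiv ℝ v) p with hB
  have hD2 : ∀ w, D2 v p w = B w w := by
    intro w
    unfold D2
    have := (hd2.hasFDerivAt.clm_apply (hasFDerivAt_const w p)).fderiv
    rw [this]
    simp [hB]
  have hline : ∀ w, ∀ τ : ℝ, HasDerivAt (fun τ : ℝ => p + τ • w) w τ := by
    intro w τ
    simpa using ((hasDerivAt_id τ).smul_const w).const_add p
  have hSD : ∀ w, SD (fun τ : ℝ => v (p + τ • w)) 0 (B w w) := by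
    intro w
    refine ⟨fun τ => fderiv ℝ v (p + τ • w) w, ?_, ?_⟩
    · have ht : Tendsto (fun τ : ℝ => p + τ • w) (𝓝 0) (𝓝 p) := by
        simpa using (hline w 0).continuousAt.tendsto
      filter_upwards [ht.eventually hd1] with τ hτ
      exact hτ.comp_hasDerivAt τ (hline w τ)
    · have h0 : HasFDerivAt (fderiv ℝ v) B (p + (0:ℝ) • w) := by
        simpa using hd2.hasFDerivAt
      have := (h0.comp_hasDerivAt 0 (hline w 0))
      have h2 := this.clm_apply (hasDerivAt_const 0 w)
      simpa using h2
  have hvert : ∀ τ : ℝ, HasDerivAt (fun τ : ℝ => (p.1, τ)) ((0 : En n), (1:ℝ)) τ := by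
    intro τ
    exact (hasDerivAt_const τ p.1).prodMk (hasDerivAt_id τ)
  refine ⟨B, fderiv ℝ v p (0, 1), hSD, ?_, ?_, ?_⟩
  · exact (hd1.self_of_nhds).comp_hasDerivAt (f := fun τ : ℝ => (p.1, τ)) p.2 (hvert p.2)
  · have := (hSD (0, 1))
    refine ⟨fun τ => fderiv ℝ v (p.1, τ) (0, 1), ?_, ?_⟩
    · have ht : Tendsto (fun τ : ℝ => (p.1, τ)) (𝓝 p.2) (𝓝 p) := by
        simpa using (hvert p.2).continuousAt.tendsto
      filter_upwards [ht.eventually hd1] with τ hτ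
      exact hτ.comp_hasDerivAt τ (hvert τ)
    · have h0 : HasFDerivAt (fderiv ℝ v) B (p.1, p.2) := hd2.hasFDerivAt
      have := (h0.comp_hasDerivAt p.2 (hvert p.2))
      have h2 := this.clm_apply (hasDerivAt_const p.2 ((0 : En n), (1:ℝ)))
      simpa using h2
  · intro O
    have h := he p hp
    unfold lap at h
    simp only [hD2] at h
    let B' : En n →L[ℝ] En n →L[ℝ] ℝ :=
      ((ContinuousLinearMap.compL ℝ (En n) (En n × ℝ) ℝ).flip
        (ContinuousLinearMap.inl ℝ (En n) ℝ)) ∘L B ∘L (ContinuousLinearMap.inl ℝ (En n) ℝ)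
    have hB' : ∀ x z, B' x z = B (x, 0) (z, 0) := by intro x z; simp [B']
    have := sum_rot B' O
    simp only [hB'] at this
    rw [this]
    exact h

lemma normal_quot {n : ℕ} {a γ : ℝ} (hγ : 0 < γ) (ha : a = 1 - γ) {v : En n × ℝ → ℝ} {x : En n}
    {L : ℝ} (hx : ‖x‖ < 1) (hv : IsAHarmonicOn a v (halfBall n 1))
    (hc : Tendsto (fun y : ℝ => v (x, y)) (𝓝[>] 0) (𝓝 (v (x, 0))))
    (hL : NormalDerivLimit a v x L) :
    Tendsto (fun y : ℝ => (v (x, y) - v (x, 0)) / y ^ γ) (𝓝[>] 0) (𝓝 (L / γ)) := by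
  have hsmall : ∀ᶠ y : ℝ in 𝓝[>] 0, (x, y) ∈ halfBall n 1 := by
    have h1 : ∀ᶠ y : ℝ in 𝓝[>] 0, ‖x‖ ^ 2 + y ^ 2 < 1 ^ 2 := by
      have : ContinuousAt (fun y : ℝ => ‖x‖ ^ 2 + y ^ 2) 0 := by fun_prop
      apply nhdsWithin_le_nhds
      apply this.eventually_lt continuousAt_const
      simp; nlinarith [norm_nonneg x]
    filter_upwards [h1, self_mem_nhdsWithin] with y h2 h3
    exact ⟨h2, h3⟩
  have hpos : ∀ᶠ y : ℝ in 𝓝[>] 0, 0 < y := self_mem_nhdsWithin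
  refine HasDerivAt.lhopital_zero_nhdsGT (f' := fun y => fderiv ℝ v (x, y) (0, 1))
    (g' := fun y => γ * y ^ (γ - 1)) ?_ ?_ ?_ ?_ ?_ ?_
  · filter_upwards [hsmall] with y hy
    have h1 : DifferentiableAt ℝ v (x, y) :=
      (hv.1.contDiffAt ((isOpen_halfBall n 1).mem_nhds hy)).differentiableAt (by norm_num)
    have h2 : HasDerivAt (fun τ : ℝ => (x, τ)) ((0 : En n), (1:ℝ)) y :=
      (hasDerivAt_const y x).prodMk (hasDerivAt_id y)
    exact (h1.hasFDerivAt.comp_hasDerivAt y h2).sub_const _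
  · filter_upwards [hpos] with y hy
    exact Real.hasDerivAt_rpow_const (Or.inl hy.ne')
  · filter_upwards [hpos] with y hy
    have := Real.rpow_pos_of_pos hy (γ - 1)
    positivity
  · simpa using hc.sub_const (v (x, 0))
  · have : ContinuousAt (fun y : ℝ => y ^ γ) 0 := Real.continuousAt_rpow_const _ _ (Or.inr hγ.le)
    have h2 := this.tendsto
    rw [Real.zero_rpow hγ.ne'] at h2
    exact h2.mono_left nhdsWithin_le_nhds
  · refine (hL.div_const γ).congr' ?_
    filter_upwards [hpos] with y hy
    have e : y ^ a = (y ^ (γ - 1))⁻¹ := by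
      rw [← Real.rpow_neg hy.le]; congr 1; rw [ha]; ring
    rw [e]
    field_simp

/-- admissible solutions -/
def Adm {n : ℕ} (γ δ : ℝ) (u : ℝ → En n × ℝ → ℝ) : Prop :=
  ∃ (b : ℝ → En n → En n) (f : ℝ → En n → ℝ),
    (∀ t ∈ Icc (-1 : ℝ) 0, ∀ x ∈ flatBall n 1, ‖b t x‖ ≤ δ) ∧
    (∀ t ∈ Icc (-1 : ℝ) 0, ∀ x ∈ flatBall n 1, |f t x| ≤ δ) ∧
    IsExtDDSolution (1 - γ) b f u ∧
    (∀ t ∈ Icc (-1 : ℝ) 0, ∀ p ∈ halfBall n 1, |u t p| ≤ 1)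

lemma Adm.mono {n : ℕ} {γ δ δ' : ℝ} {u : ℝ → En n × ℝ → ℝ} (h : Adm γ δ u) (hd : δ ≤ δ') :
    Adm γ δ' u := by
  obtain ⟨b, f, h1, h2, h3, h4⟩ := h
  exact ⟨b, f, fun t ht x hx => (h1 t ht x hx).trans hd, fun t ht x hx => (h2 t ht x hx).trans hd,
    h3, h4⟩

lemma Adm.cont {n : ℕ} {γ δ : ℝ} {u : ℝ → En n × ℝ → ℝ} (h : Adm γ δ u) :
    ContinuousOn (fun q : ℝ × (En n × ℝ) => u q.1 q.2) (Icc (-1 : ℝ) 0 ×ˢ closedHalfBall n 1) := by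
  obtain ⟨b, f, h1, h2, h3, h4⟩ := h
  exact h3.1

lemma Adm.aharm {n : ℕ} {γ δ : ℝ} {u : ℝ → En n × ℝ → ℝ} (h : Adm γ δ u) {t : ℝ}
    (ht : t ∈ Icc (-1:ℝ) 0) : IsAHarmonicOn (1 - γ) (u t) (halfBall n 1) := by
  obtain ⟨b, f, h1, h2, h3, h4⟩ := h
  exact h3.2.1 t ht

lemma Adm.tend {n : ℕ} {γ δ : ℝ} {u : ℝ → En n × ℝ → ℝ} (h : Adm γ δ u) {t : ℝ} {x : En n}
    (ht : t ∈ Icc (-1:ℝ) 0) (hx : ‖x‖ < 1) :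
    Tendsto (fun y : ℝ => u t (x, y)) (𝓝[>] 0) (𝓝 (u t (x, 0))) := by
  have h0 := h.cont (t, (x, 0)) ⟨ht, by constructor <;> simp; nlinarith [norm_nonneg x]⟩
  have h1 : Tendsto (fun y : ℝ => (t, (x, y))) (𝓝[>] 0)
      (𝓝[Icc (-1 : ℝ) 0 ×ˢ closedHalfBall n 1] (t, (x, 0))) := by
    apply tendsto_nhdsWithin_of_tendsto_nhds_of_eventually_within
    · apply Tendsto.mono_left _ nhdsWithin_le_nhds
      have : Continuous (fun y : ℝ => (t, (x, y))) := by fun_prop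
      exact this.tendsto 0
    · have h1 : ∀ᶠ y : ℝ in 𝓝[>] 0, ‖x‖ ^ 2 + y ^ 2 < 1 ^ 2 := by
        have : ContinuousAt (fun y : ℝ => ‖x‖ ^ 2 + y ^ 2) 0 := by fun_prop
        apply nhdsWithin_le_nhds
        apply this.eventually_lt continuousAt_const
        simp; nlinarith [norm_nonneg x]
      filter_upwards [h1, self_mem_nhdsWithin] with y h2 h3
      exact ⟨ht, h2.le, le_of_lt h3⟩
  exact h0.tendsto.comp h1

lemma Adm.bound {n : ℕ} {γ δ : ℝ} {u : ℝ → En n × ℝ → ℝ} (h : Adm γ δ u) {t y : ℝ} {x : En n}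
    (ht : t ∈ Icc (-1:ℝ) 0) (hx : ‖x‖ ^ 2 + y ^ 2 < 1) (hy : 0 ≤ y) : |u t (x, y)| ≤ 1 := by
  have h' := h
  obtain ⟨b, f, h1, h2, h3, h4⟩ := h
  rcases hy.eq_or_lt with rfl | hy
  · have hx1 : ‖x‖ < 1 := by nlinarith [norm_nonneg x]
    have := (h'.tend ht hx1).abs
    refine le_of_tendsto this ?_
    have h1 : ∀ᶠ y : ℝ in 𝓝[>] 0, ‖x‖ ^ 2 + y ^ 2 < 1 ^ 2 := by
      have : ContinuousAt (fun y : ℝ => ‖x‖ ^ 2 + y ^ 2) 0 := by fun_prop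
      apply nhdsWithin_le_nhds
      apply this.eventually_lt continuousAt_const
      simp; nlinarith [norm_nonneg x]
    filter_upwards [h1, self_mem_nhdsWithin] with y h2 h3
    exact h4 t ht _ ⟨h2, h3⟩
  · exact h4 t ht _ ⟨by simpa using hx, hy⟩

lemma Adm.base {n : ℕ} {γ δ : ℝ} {u : ℝ → En n × ℝ → ℝ} (hγ : 0 < γ) (h : Adm γ δ u) {t : ℝ}
    {x : En n} (ht : t ∈ Ioc (-1:ℝ) 0) (hx : ‖x‖ < 1) :
    ∃ (v : En n) (ut d L : ℝ), ‖v‖ ≤ δ ∧ HasDerivWithinAt (fun τ => u τ (x, 0)) ut (Iic t) t ∧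
      HasDerivAt (fun τ : ℝ => u t (x + τ • v, 0)) d 0 ∧
      Tendsto (fun y : ℝ => (u t (x, y) - u t (x, 0)) / y ^ γ) (𝓝[>] 0) (𝓝 (L / γ)) ∧
      |ut + d - L| ≤ δ := by
  have h' := h
  obtain ⟨b, f, h1, h2, h3, h4⟩ := h
  have ht' : t ∈ Icc (-1:ℝ) 0 := ⟨ht.1.le, ht.2⟩
  obtain ⟨-, -, hd, he⟩ := h3
  obtain ⟨L, hL, heq⟩ := he t x ⟨ht, hx⟩
  have hD := (hd (t, x) ⟨ht, hx⟩).hasFDerivWithinAt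
  set F := fderivWithin ℝ (bdryFun u) (Ioc (-1 : ℝ) 0 ×ˢ flatBall n 1) (t, x) with hF
  refine ⟨b t x, F (1, 0), F (0, b t x), L, h1 t ht' x hx, ?_, ?_, ?_, ?_⟩
  · have hl : HasDerivWithinAt (fun τ : ℝ => (τ, x)) ((1:ℝ), (0 : En n)) (Ioc (-1) t) t :=
      ((hasDerivAt_id t).prodMk (hasDerivAt_const t x)).hasDerivWithinAt
    have hmt : MapsTo (fun τ : ℝ => (τ, x)) (Ioc (-1) t) (Ioc (-1 : ℝ) 0 ×ˢ flatBall n 1) :=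
      fun τ hτ => ⟨⟨hτ.1, hτ.2.trans ht.2⟩, hx⟩
    have := hD.comp_hasDerivWithinAt t hl hmt
    refine this.mono_of_mem_nhdsWithin ?_
    filter_upwards [self_mem_nhdsWithin, nhdsWithin_le_nhds (Ioi_mem_nhds ht.1)] with τ h1 h2
    exact ⟨h2, h1⟩
  · have hl : HasDerivAt (fun τ : ℝ => (t, x + τ • b t x)) ((0:ℝ), b t x) 0 := by
      refine (hasDerivAt_const 0 t).prodMk ?_
      simpa using ((hasDerivAt_id (0:ℝ)).smul_const (b t x)).const_add x
    have hD' : HasFDerivWithinAt (bdryFun u) F (Ioc (-1 : ℝ) 0 ×ˢ flatBall n 1)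
        (t, x + (0:ℝ) • b t x) := by simpa using hD
    have hev : ∀ᶠ τ : ℝ in 𝓝 0, (t, x + τ • b t x) ∈ Ioc (-1 : ℝ) 0 ×ˢ flatBall n 1 := by
      have : ContinuousAt (fun τ : ℝ => ‖x + τ • b t x‖) 0 := by fun_prop
      have := this.eventually_lt (continuousAt_const (y := (1:ℝ))) (by simpa using hx)
      filter_upwards [this] with τ hτ
      exact ⟨ht, hτ⟩
    have := hD'.comp_hasDerivWithinAt (s := {τ : ℝ | (t, x + τ • b t x) ∈ Ioc (-1 : ℝ) 0 ×ˢ flatBall n 1})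
      0 hl.hasDerivWithinAt (fun τ hτ => hτ)
    exact this.hasDerivAt hev
  · exact normal_quot hγ rfl hx (h'.aharm ht') (h'.tend ht' hx) hL
  · rw [heq]; exact h2 t ht' x hx

lemma Adm.neg {n : ℕ} {γ δ : ℝ} {u : ℝ → En n × ℝ → ℝ} (h : Adm γ δ u) :
    Adm γ δ (fun t p => - u t p) := by
  obtain ⟨b, f, h1, h2, h3, h4⟩ := h
  refine ⟨b, fun t x => - f t x, h1, fun t ht x hx => by simpa using h2 t ht x hx, ?_,
    fun t ht p hp => by simpa using h4 t ht p hp⟩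
  obtain ⟨g1, g2, g3, g4⟩ := h3
  refine ⟨g1.neg, ?_, fun q hq => (g3 q hq).neg, ?_⟩
  · intro t ht
    obtain ⟨k1, k2⟩ := g2 t ht
    refine ⟨k1.neg, fun p hp => ?_⟩
    have e1 : ∀ q v, fderiv ℝ (fun p => - u t p) q v = - fderiv ℝ (u t) q v := by
      intro q v
      rw [fderiv_fun_neg]; simp
    have e2 : ∀ v, D2 (fun p => - u t p) p v = - D2 (u t) p v := by
      intro v
      unfold D2
      simp only [e1]
      rw [fderiv_fun_neg]; simp
    have := k2 p hp
    unfold lap at this ⊢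
    simp only [e2, e1, Finset.sum_neg_distrib]
    linarith
  · intro t x hq
    obtain ⟨L, k1, k2⟩ := g4 t x hq
    refine ⟨-L, ?_, ?_⟩
    · unfold NormalDerivLimit at k1 ⊢
      refine k1.neg.congr ?_
      intro y
      rw [fderiv_fun_neg]; simp
    · have hb : bdryFun (fun t p => - u t p) = fun q => - bdryFun u q := rfl
      have hu : UniqueDiffWithinAt ℝ (Ioc (-1 : ℝ) 0 ×ˢ flatBall n 1) (t, x) := by
        apply UniqueDiffWithinAt.prod
        · exact (uniqueDiffOn_Ioc _ _) t hq.1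
        · have : IsOpen (flatBall n 1) := isOpen_lt (by fun_prop) (by fun_prop)
          exact this.uniqueDiffWithinAt hq.2
      rw [hb, fderivWithin_fun_neg hu]
      simp only [neg_apply]
      linarith

lemma deriv_nonneg_left {g : ℝ → ℝ} {g' t : ℝ} (hg : HasDerivWithinAt g g' (Iic t) t)
    (h : ∀ᶠ τ in 𝓝[<] t, g τ ≤ g t) : 0 ≤ g' := by
  have h1 := (hasDerivWithinAt_iff_tendsto_slope' (by simp : t ∉ Iio t)).1 (hg.mono Iio_subset_Iic_self)
  refine ge_of_tendsto h1 ?_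
  filter_upwards [h, self_mem_nhdsWithin] with τ h2 h3
  rw [slope_def_field]
  have : τ < t := h3
  exact div_nonneg_of_nonpos (by linarith) (by linarith)

/-- the multi-point function -/
def wf {ι : Type*} [Fintype ι] {n : ℕ} (c : ι → ℝ) (u : ℝ → En n × ℝ → ℝ) (t : ℝ) (x : ι → En n)
    (y : ℝ) : ℝ := ∑ j, c j * u t (x j, y)

def IntSuper {ι : Type*} {n : ℕ} (γ : ℝ) (Φ : (ι → En n) → ℝ → ℝ) (x : ι → En n) (y : ℝ) : Prop :=
  ∃ (Ψ : (ι → En n) → ℝ → ℝ) (O : ι → En n ≃ₗᵢ[ℝ] En n) (q : Fin n → ℝ) (φ1 φ2 : ℝ),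
    Ψ x y = Φ x y ∧ (∀ᶠ z : (ι → En n) × ℝ in 𝓝 (x, y), Φ z.1 z.2 ≤ Ψ z.1 z.2) ∧
    (∀ k, SD (fun τ : ℝ => Ψ (fun j => x j + τ • O j (ek k)) y) 0 (q k)) ∧
    HasDerivAt (Ψ x) φ1 y ∧ SD (Ψ x) y φ2 ∧ ∑ k, q k + φ2 + (1 - γ) / y * φ1 < 0

def BaseSuper {ι : Type*} [Fintype ι] [DecidableEq ι] {n : ℕ} (γ δ : ℝ) (c : ι → ℝ)
    (Φ : ℝ → (ι → En n) → ℝ → ℝ) (t : ℝ) (x : ι → En n) : Prop :=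
  ∃ (φt l G : ℝ), HasDerivWithinAt (fun τ => Φ τ x 0) φt (Iic t) t ∧ 0 ≤ G ∧
    (∀ j, ∀ᶠ z in 𝓝 (x j), Φ t (Function.update x j z) 0 - Φ t x 0 ≤ G * ‖z - x j‖) ∧
    Tendsto (fun y : ℝ => (Φ t x y - Φ t x 0) / y ^ γ) (𝓝[>] 0) (𝓝 (l / γ)) ∧
    l + δ * (∑ j, |c j| + Fintype.card ι * G) < φt

lemma interior_test {ι : Type*} [Fintype ι] {n : ℕ} {γ δ : ℝ} {u : ℝ → En n × ℝ → ℝ}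
    (h : Adm γ δ u) (c : ι → ℝ) {Φ : (ι → En n) → ℝ → ℝ} {x : ι → En n} {y t : ℝ}
    (ht : t ∈ Icc (-1:ℝ) 0) (hy : 0 < y) (hx : ∀ j, ‖x j‖ ^ 2 + y ^ 2 < 1)
    (hmax : ∀ᶠ z : (ι → En n) × ℝ in 𝓝 (x, y), wf c u t z.1 z.2 - Φ z.1 z.2 ≤ wf c u t x y - Φ x y)
    (hS : IntSuper γ Φ x y) : False := by
  obtain ⟨Ψ, O, q, φ1, φ2, hΨ, hle, hq, h1, h2, hneg⟩ := hS
  have hmax' : ∀ᶠ z : (ι → En n) × ℝ in 𝓝 (x, y),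
      wf c u t z.1 z.2 - Ψ z.1 z.2 ≤ wf c u t x y - Ψ x y := by
    filter_upwards [hmax, hle] with z a b
    linarith
  have F : ∀ j, _ := fun j => aharm_facts (h.aharm ht) (p := (x j, y))
    (⟨by simpa using hx j, hy⟩ : (x j, y) ∈ halfBall n 1)
  choose B g F1 F2 F3 F4 using F
  -- directions
  have hk : ∀ k, ∑ j, c j * B j (O j (ek k), 0) (O j (ek k), 0) - q k ≤ 0 := by
    intro k
    have hsd : SD (fun τ : ℝ => wf c u t (fun j => x j + τ • O j (ek k)) y
        - Ψ (fun j => x j + τ • O j (ek k)) y) 0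
        (∑ j, c j * B j (O j (ek k), 0) (O j (ek k), 0) - q k) := by
      refine SD.sub ?_ (hq k)
      unfold wf
      apply SD.sum
      intro j _
      have := (F1 j (O j (ek k), 0)).const_mul (c j)
      simpa using this
    apply hsd.nonpos
    have hcont : Tendsto (fun τ : ℝ => ((fun j => x j + τ • O j (ek k)), y)) (𝓝 0) (𝓝 (x, y)) := by
      have : Continuous (fun τ : ℝ => ((fun j => x j + τ • O j (ek k)), y)) := by fun_prop
      simpa using this.tendsto 0
    have := hcont.eventually hmax'
    simpa [IsLocalMax, IsMaxFilter] using this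
  have hmy : IsLocalMax (fun η => wf c u t x η - Ψ x η) y := by
    have hcont : Tendsto (fun η : ℝ => (x, η)) (𝓝 y) (𝓝 (x, y)) := by
      have : Continuous (fun η : ℝ => (x, η)) := by fun_prop
      exact this.tendsto y
    exact hcont.eventually hmax'
  have hy2 : ∑ j, c j * B j (0, 1) (0, 1) - φ2 ≤ 0 := by
    have hsd : SD (fun η : ℝ => wf c u t x η - Ψ x η) y
        (∑ j, c j * B j (0, 1) (0, 1) - φ2) := by
      refine SD.sub ?_ h2
      unfold wf
      apply SD.sum
      intro j _
      exact (F3 j).const_mul (c j)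
    exact hsd.nonpos hmy
  have hy1 : ∑ j, c j * g j - φ1 = 0 := by
    apply hmy.hasDerivAt_eq_zero
    refine HasDerivAt.sub ?_ h1
    unfold wf
    apply HasDerivAt.fun_sum
    intro j _
    exact (F2 j).const_mul (c j)
  have hsum : ∑ k, (∑ j, c j * B j (O j (ek k), 0) (O j (ek k), 0)) +
      ∑ j, c j * B j (0, 1) (0, 1) + (1 - γ) / y * ∑ j, c j * g j = 0 := by
    rw [Finset.sum_comm]
    simp only [← Finset.mul_sum]
    rw [Finset.mul_sum, ← Finset.sum_add_distrib, ← Finset.sum_add_distrib]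
    apply Finset.sum_eq_zero
    intro j _
    have := F4 j (O j)
    simp only at this
    linear_combination c j * this
  have hk' := Finset.sum_le_sum (fun k (_ : k ∈ Finset.univ) => hk k)
  rw [Finset.sum_sub_distrib] at hk'
  simp only [Finset.sum_const_zero] at hk'
  have : φ1 = ∑ j, c j * g j := by linarith
  rw [this] at hneg
  linarith

lemma base_test {ι : Type*} [Fintype ι] [DecidableEq ι] {n : ℕ} {γ δ : ℝ} {u : ℝ → En n × ℝ → ℝ}
    (hγ : 0 < γ) (h : Adm γ δ u) (c : ι → ℝ) {Φ : ℝ → (ι → En n) → ℝ → ℝ} {x : ι → En n} {t : ℝ}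
    (ht : t ∈ Ioc (-1:ℝ) 0) (hx : ∀ j, ‖x j‖ < 1)
    (hm1 : ∀ᶠ τ in 𝓝[<] t, wf c u τ x 0 - Φ τ x 0 ≤ wf c u t x 0 - Φ t x 0)
    (hm2 : ∀ᶠ z in 𝓝 x, wf c u t z 0 - Φ t z 0 ≤ wf c u t x 0 - Φ t x 0)
    (hm3 : ∀ᶠ y in 𝓝[>] (0:ℝ), wf c u t x y - Φ t x y ≤ wf c u t x 0 - Φ t x 0)
    (hS : BaseSuper γ δ c Φ t x) : False := by
  obtain ⟨φt, l, G, h1, hG, h2, h3, h4⟩ := hS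
  choose v ut d L f1 f2 f3 f4 f5 using fun j => h.base hγ ht (hx j)
  have a1 : 0 ≤ ∑ j, c j * ut j - φt := by
    refine deriv_nonneg_left (g := fun τ => wf c u τ x 0 - Φ τ x 0) ?_ hm1
    refine HasDerivWithinAt.sub ?_ h1
    unfold wf
    apply HasDerivWithinAt.fun_sum
    intro j _
    exact (f2 j).const_mul (c j)
  have a3 : ∑ j, c j * (L j / γ) ≤ l / γ := by
    have : Tendsto (fun y : ℝ => ∑ j, c j * ((u t (x j, y) - u t (x j, 0)) / y ^ γ)) (𝓝[>] 0)
        (𝓝 (∑ j, c j * (L j / γ))) := tendsto_finsetSum _ fun j _ => (f4 j).const_mul (c j)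
    refine le_of_tendsto_of_tendsto this h3 ?_
    filter_upwards [hm3, self_mem_nhdsWithin] with y hy hy0
    have hy0 : 0 < y := hy0
    have e : ∑ j, c j * ((u t (x j, y) - u t (x j, 0)) / y ^ γ) =
        (wf c u t x y - wf c u t x 0) / y ^ γ := by
      unfold wf
      rw [← Finset.sum_sub_distrib, Finset.sum_div]
      apply Finset.sum_congr rfl; intro j _; ring
    rw [e]
    have := Real.rpow_pos_of_pos hy0 γ
    exact div_le_div_of_nonneg_right (by linarith) this.le
  have a2 : ∀ j, 0 ≤ c j * d j + G * ‖v j‖ := by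
    intro j
    have hd : HasDerivAt (fun τ : ℝ => c j * u t (x j + τ • v j, 0) + G * ‖v j‖ * τ)
        (c j * d j + G * ‖v j‖ ) 0 := by
      have := ((f3 j).const_mul (c j)).add ((hasDerivAt_id (0:ℝ)).const_mul (G * ‖v j‖))
      refine this.congr_deriv ?_
      simp
    refine deriv_nonneg_left hd.hasDerivWithinAt ?_
    have hc1 : Tendsto (fun τ : ℝ => x j + τ • v j) (𝓝[<] 0) (𝓝 (x j)) := by
      have : Continuous (fun τ : ℝ => x j + τ • v j) := by fun_prop
      have := this.tendsto 0
      simp only [zero_smul, add_zero] at this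
      exact this.mono_left nhdsWithin_le_nhds
    have hc2 : Tendsto (fun τ : ℝ => Function.update x j (x j + τ • v j)) (𝓝[<] 0) (𝓝 x) := by
      have := (tendsto_const_nhds (x := x)).update j hc1
      simpa using this
    filter_upwards [hc1.eventually (h2 j), hc2.eventually hm2, self_mem_nhdsWithin] with τ b1 b2 b3
    have b3 : τ < 0 := b3
    have e : wf c u t (Function.update x j (x j + τ • v j)) 0 - wf c u t x 0 =
        c j * u t (x j + τ • v j, 0) - c j * u t (x j, 0) := by
      unfold wf
      rw [← Finset.sum_sub_distrib, Finset.sum_eq_single j]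
      · simp
      · intro i _ hi
        simp [Function.update_of_ne hi]
      · simp
    have e2 : ‖x j + τ • v j - x j‖ = -τ * ‖v j‖ := by
      rw [add_sub_cancel_left, norm_smul, Real.norm_eq_abs, abs_of_neg b3]
    rw [e2] at b1
    simp only [zero_smul, add_zero, mul_zero]
    nlinarith
  have a3' : ∑ j, c j * L j ≤ l := by
    have e : ∑ j, c j * (L j / γ) = (∑ j, c j * L j) / γ := by
      rw [Finset.sum_div]; apply Finset.sum_congr rfl; intro j _; ring
    rw [e] at a3
    exact (div_le_div_iff_of_pos_right hγ).1 a3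
  have key : ∑ j, c j * ut j ≤ ∑ j, (c j * L j + δ * |c j| + δ * G) := by
    apply Finset.sum_le_sum
    intro j _
    have k1 : c j * (ut j + d j - L j) ≤ |c j| * δ := by
      calc _ ≤ |c j * (ut j + d j - L j)| := le_abs_self _
        _ = |c j| * |ut j + d j - L j| := abs_mul _ _
        _ ≤ _ := by gcongr; exact f5 j
    have k2 := a2 j
    have k3 : G * ‖v j‖ ≤ G * δ := by gcongr; exact f1 j
    nlinarith
  rw [Finset.sum_add_distrib, Finset.sum_add_distrib, ← Finset.mul_sum] at key
  simp only [Finset.sum_const, nsmul_eq_mul, Finset.card_univ] at key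
  nlinarith

/-- the domain -/
def KK (ι : Type*) (n : ℕ) (ta tb ρ : ℝ) (t : ℝ) (x : ι → En n) (y : ℝ) : Prop :=
  t ∈ Icc ta tb ∧ (∀ j, ‖x j‖ ≤ ρ) ∧ y ∈ Icc 0 ρ

theorem comparison {ι : Type*} [Fintype ι] [DecidableEq ι] {n : ℕ} {γ δ : ℝ}
    {u : ℝ → En n × ℝ → ℝ} (hγ : 0 < γ) (h : Adm γ δ u) (c : ι → ℝ)
    (Φ : ℝ → (ι → En n) → ℝ → ℝ) {ta tb ρ : ℝ} (hta : -1 ≤ ta) (htb : tb ≤ 0) (hρ0 : 0 < ρ)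
    (hρ : ρ ≤ 1 / 2)
    (hcont : ContinuousOn (fun P : ℝ × (ι → En n) × ℝ => Φ P.1 P.2.1 P.2.2)
      {P | KK ι n ta tb ρ P.1 P.2.1 P.2.2})
    (H : ∀ t x y, KK ι n ta tb ρ t x y → 0 < wf c u t x y - Φ t x y →
      (∃ t' x' y', KK ι n ta tb ρ t' x' y' ∧ wf c u t x y - Φ t x y < wf c u t' x' y' - Φ t' x' y') ∨
      ((∀ j, ‖x j‖ < ρ) ∧ 0 < y ∧ y < ρ ∧ IntSuper γ (Φ t) x y) ∨
      ((∀ j, ‖x j‖ < ρ) ∧ y = 0 ∧ ta < t ∧ BaseSuper γ δ c Φ t x)) :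
    ∀ t x y, KK ι n ta tb ρ t x y → wf c u t x y ≤ Φ t x y := by
  intro t0 x0 y0 hK0
  by_contra hlt
  push Not at hlt
  set S : Set (ℝ × (ι → En n) × ℝ) := {P | KK ι n ta tb ρ P.1 P.2.1 P.2.2} with hS
  have hScomp : IsCompact S := by
    have : S = Icc ta tb ×ˢ ((Set.pi univ fun _ : ι => Metric.closedBall (0 : En n) ρ) ×ˢ Icc 0 ρ) := by
      ext P; simp [hS, KK, Set.mem_pi]
    rw [this]
    exact isCompact_Icc.prod ((isCompact_univ_pi fun _ => isCompact_closedBall 0 ρ).prod isCompact_Icc)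
  have hin : ∀ (x : En n) (y : ℝ), ‖x‖ ≤ ρ → y ∈ Icc 0 ρ → ‖x‖ ^ 2 + y ^ 2 < 1 := by
    intro x y hx hy
    have := norm_nonneg x
    nlinarith [hy.1, hy.2]
  have hwc : ContinuousOn (fun P : ℝ × (ι → En n) × ℝ => wf c u P.1 P.2.1 P.2.2) S := by
    unfold wf
    apply continuousOn_finsetSum
    intro j _
    apply ContinuousOn.mul continuousOn_const
    have hm : ContinuousOn (fun P : ℝ × (ι → En n) × ℝ => (P.1, (P.2.1 j, P.2.2))) S := by fun_prop
    refine h.cont.comp hm ?_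
    intro P hP
    refine ⟨⟨hta.trans hP.1.1, hP.1.2.trans htb⟩, ?_, hP.2.2.1⟩
    have := hin (P.2.1 j) P.2.2 (hP.2.1 j) hP.2.2
    simpa using this.le
  obtain ⟨⟨t, x, y⟩, hP, hmax⟩ := hScomp.exists_isMaxOn ⟨(t0, x0, y0), hK0⟩ (hwc.sub hcont)
  have hmax' : ∀ t' x' y', KK ι n ta tb ρ t' x' y' →
      wf c u t' x' y' - Φ t' x' y' ≤ wf c u t x y - Φ t x y := fun t' x' y' h' =>
    hmax (show (t', x', y') ∈ S from h')
  have hP' : KK ι n ta tb ρ t x y := hP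
  have hpos : 0 < wf c u t x y - Φ t x y := by
    have := hmax' t0 x0 y0 hK0
    linarith
  have htt : t ∈ Icc (-1:ℝ) 0 := ⟨hta.trans hP'.1.1, hP'.1.2.trans htb⟩
  have hxnear : (∀ j, ‖x j‖ < ρ) → ∀ᶠ z in 𝓝 x, ∀ j, ‖z j‖ ≤ ρ := by
    intro hx
    rw [eventually_all]
    intro j
    have : ContinuousAt (fun z : ι → En n => ‖z j‖) x := ((continuous_apply j).norm).continuousAt
    filter_upwards [this.eventually_lt continuousAt_const (hx j)] with z hz using hz.le
  rcases H t x y hP' hpos with ⟨t', x', y', k1, k2⟩ | ⟨hx, hy, hyR, hI⟩ | ⟨hx, rfl, htlt, hB⟩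
  · exact absurd (hmax' t' x' y' k1) (not_le.2 k2)
  · refine interior_test h c htt hy (fun j => hin _ _ (hP'.2.1 j) hP'.2.2) ?_ hI
    have e1 := (continuous_fst.tendsto (x, y)).eventually (hxnear hx)
    have e2 := (continuous_snd.tendsto (x, y)).eventually (Ioo_mem_nhds hy hyR)
    filter_upwards [e1, e2] with z h1 h2
    exact hmax' _ _ _ ⟨hP'.1, h1, ⟨h2.1.le, h2.2.le⟩⟩
  · refine base_test hγ h c ⟨lt_of_le_of_lt hta htlt, htt.2⟩
      (fun j => lt_of_lt_of_le (hx j) (by linarith)) ?_ ?_ ?_ hB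
    · filter_upwards [self_mem_nhdsWithin, nhdsWithin_le_nhds (Ioi_mem_nhds htlt)] with τ h1 h2
      exact hmax' _ _ _ ⟨⟨le_of_lt h2, (le_of_lt h1).trans hP'.1.2⟩, hP'.2.1, hP'.2.2⟩
    · filter_upwards [hxnear hx] with z hz
      exact hmax' _ _ _ ⟨hP'.1, hz, hP'.2.2⟩
    · filter_upwards [Ioo_mem_nhdsGT hρ0] with τ h1
      exact hmax' _ _ _ ⟨hP'.1, hP'.2.1, ⟨h1.1.le, h1.2.le⟩⟩

def psi (γ N r y : ℝ) : ℝ := N * r ^ γ - y ^ γ * (r ^ 2 / (r ^ 2 + y ^ 2))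

lemma young_aux {γ r y : ℝ} (h0 : 0 < γ) (h1 : γ < 1) (hr : 0 < r) (hy : 0 ≤ y) :
    y ^ γ * r ^ 2 ≤ r ^ γ * (r ^ 2 + y ^ 2) := by
  rcases le_total y r with h | h
  · have : y ^ γ ≤ r ^ γ := Real.rpow_le_rpow hy h h0.le
    have h2 := Real.rpow_pos_of_pos hr γ
    nlinarith [sq_nonneg y, sq_nonneg r]
  · have hy' : 0 < y := lt_of_lt_of_le hr h
    have e1 : r ^ 2 = r ^ γ * r ^ (2 - γ) := by
      rw [← Real.rpow_add hr]; simp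
    have e2 : y ^ 2 = y ^ γ * y ^ (2 - γ) := by
      rw [← Real.rpow_add hy']; simp
    have h3 : r ^ (2 - γ) ≤ y ^ (2 - γ) := Real.rpow_le_rpow hr.le h (by linarith)
    have p1 := Real.rpow_pos_of_pos hr γ
    have p2 := Real.rpow_pos_of_pos hy' γ
    have : y ^ γ * r ^ 2 ≤ r ^ γ * y ^ 2 := by
      rw [e1, e2]
      calc y ^ γ * (r ^ γ * r ^ (2 - γ)) = (r ^ γ * y ^ γ) * r ^ (2 - γ) := by ring
        _ ≤ (r ^ γ * y ^ γ) * y ^ (2 - γ) := by gcongr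
        _ = _ := by ring
    nlinarith [sq_nonneg r]

lemma psi_ge {γ N r y : ℝ} (h0 : 0 < γ) (h1 : γ < 1) (hr : 0 < r) (hy : 0 ≤ y) :
    (N - 1) * r ^ γ ≤ psi γ N r y := by
  unfold psi
  have := young_aux h0 h1 hr hy
  have h2 : y ^ γ * (r ^ 2 / (r ^ 2 + y ^ 2)) ≤ r ^ γ := by
    rw [← mul_div_assoc, div_le_iff₀ (by positivity)]; exact this
  linarith

lemma psi_le {γ N r y : ℝ} (hy : 0 ≤ y) :
    psi γ N r y ≤ N * r ^ γ := by
  unfold psi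
  have : 0 ≤ y ^ γ * (r ^ 2 / (r ^ 2 + y ^ 2)) := by positivity
  linarith

lemma psi_zero {γ N r : ℝ} (h0 : 0 < γ) : psi γ N r 0 = N * r ^ γ := by
  unfold psi
  rw [Real.zero_rpow h0.ne']; simp

lemma SD.rpow {γ r : ℝ} (hr : 0 < r) : SD (fun z => z ^ γ) r (γ * ((γ - 1) * r ^ (γ - 2))) := by
  refine ⟨fun z => γ * z ^ (γ - 1), ?_, ?_⟩
  · filter_upwards [Ioi_mem_nhds hr] with z hz
    exact Real.hasDerivAt_rpow_const (Or.inl (ne_of_gt hz))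
  · have := (Real.hasDerivAt_rpow_const (p := γ - 1) (Or.inl hr.ne')).const_mul γ
    have e : γ - 1 - 1 = γ - 2 := by ring
    rw [e] at this
    exact this

lemma psi_SDr {γ N r y : ℝ} (hr : 0 < r) : SD (fun z => psi γ N z y) r
    (N * (γ * ((γ - 1) * r ^ (γ - 2))) -
      y ^ γ * (2 * y ^ 2 / (r ^ 2 + y ^ 2) ^ 2 - 8 * r ^ 2 * y ^ 2 / (r ^ 2 + y ^ 2) ^ 3)) := by
  unfold psi
  refine SD.sub ((SD.rpow hr).const_mul N) (SD.const_mul _ ?_)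
  refine ⟨fun z => 2 * z * y ^ 2 / (z ^ 2 + y ^ 2) ^ 2, ?_, ?_⟩
  · filter_upwards [Ioi_mem_nhds hr] with z hz
    have hz : 0 < z := hz
    have hq : z ^ 2 + y ^ 2 ≠ 0 := by positivity
    have := (hasDerivAt_pow 2 z).div ((hasDerivAt_pow 2 z).add_const (y ^ 2)) hq
    refine this.congr_deriv ?_
    field_simp; simp; ring
  · have hq : r ^ 2 + y ^ 2 ≠ 0 := by positivity
    have h1 : HasDerivAt (fun z : ℝ => 2 * z * y ^ 2) (2 * y ^ 2) r := by
      have := ((hasDerivAt_id r).const_mul 2).mul_const (y ^ 2)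
      simpa using this
    have h2 := ((hasDerivAt_pow 2 r).add_const (y ^ 2)).pow 2
    have := h1.div h2 (by simpa using pow_ne_zero 2 hq)
    refine this.congr_deriv ?_
    simp
    field_simp; ring

lemma psi_dy {γ N r y : ℝ} (hr : 0 < r) (hy : 0 < y) : HasDerivAt (psi γ N r)
    (-(γ * y ^ (γ - 1) * (r ^ 2 / (r ^ 2 + y ^ 2)) +
      y ^ γ * (-(2 * r ^ 2 * y) / (r ^ 2 + y ^ 2) ^ 2))) y := by
  have hq : r ^ 2 + y ^ 2 ≠ 0 := by positivity
  have h1 : HasDerivAt (fun z : ℝ => r ^ 2 / (r ^ 2 + z ^ 2))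
      (-(2 * r ^ 2 * y) / (r ^ 2 + y ^ 2) ^ 2) y := by
    have := (hasDerivAt_const y (r ^ 2)).div ((hasDerivAt_pow 2 y).const_add (r ^ 2)) hq
    refine this.congr_deriv ?_
    simp; ring
  have h2 := Real.hasDerivAt_rpow_const (p := γ) (Or.inl hy.ne')
  have := (h2.mul h1).const_sub (N * r ^ γ)
  exact this

lemma psi_SDy {γ N r y : ℝ} (hr : 0 < r) (hy : 0 < y) : SD (psi γ N r) y
    (-(γ * ((γ - 1) * y ^ (γ - 2)) * (r ^ 2 / (r ^ 2 + y ^ 2)) +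
      2 * (γ * y ^ (γ - 1) * (-(2 * r ^ 2 * y) / (r ^ 2 + y ^ 2) ^ 2)) +
      y ^ γ * (-(2 * r ^ 2) / (r ^ 2 + y ^ 2) ^ 2 + 8 * r ^ 2 * y ^ 2 / (r ^ 2 + y ^ 2) ^ 3))) := by
  have hq : r ^ 2 + y ^ 2 ≠ 0 := by positivity
  refine ⟨fun y => -(γ * y ^ (γ - 1) * (r ^ 2 / (r ^ 2 + y ^ 2)) +
      y ^ γ * (-(2 * r ^ 2 * y) / (r ^ 2 + y ^ 2) ^ 2)), ?_, ?_⟩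
  · filter_upwards [Ioi_mem_nhds hy] with z hz
    exact psi_dy hr hz
  · have h1 : HasDerivAt (fun z : ℝ => r ^ 2 / (r ^ 2 + z ^ 2))
        (-(2 * r ^ 2 * y) / (r ^ 2 + y ^ 2) ^ 2) y := by
      have := (hasDerivAt_const y (r ^ 2)).div ((hasDerivAt_pow 2 y).const_add (r ^ 2)) hq
      refine this.congr_deriv ?_
      simp; ring
    have h2 := Real.hasDerivAt_rpow_const (p := γ) (Or.inl hy.ne')
    have h3 := (Real.hasDerivAt_rpow_const (p := γ - 1) (Or.inl hy.ne')).const_mul γ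
    have h4 : HasDerivAt (fun z : ℝ => -(2 * r ^ 2 * z) / (r ^ 2 + z ^ 2) ^ 2)
        (-(2 * r ^ 2) / (r ^ 2 + y ^ 2) ^ 2 + 8 * r ^ 2 * y ^ 2 / (r ^ 2 + y ^ 2) ^ 3) y := by
      have a1 : HasDerivAt (fun z : ℝ => -(2 * r ^ 2 * z)) (-(2 * r ^ 2)) y := by
        have := ((hasDerivAt_id y).const_mul (2 * r ^ 2)).neg
        refine this.congr_deriv ?_
        simp
      have a2 := ((hasDerivAt_pow 2 y).const_add (r ^ 2)).pow 2
      have := a1.div a2 (by simpa using pow_ne_zero 2 hq)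
      refine this.congr_deriv ?_
      simp
      field_simp; ring
    have := ((h3.mul h1).add (h2.mul h4)).neg
    refine this.congr_deriv ?_
    have e : γ - 1 - 1 = γ - 2 := by ring
    rw [e]; ring

lemma psi_super {γ N r y : ℝ} (h0 : 0 < γ) (h1 : γ < 1) (hr : 0 < r) (hy : 0 < y) :
    (N * (γ * ((γ - 1) * r ^ (γ - 2))) -
      y ^ γ * (2 * y ^ 2 / (r ^ 2 + y ^ 2) ^ 2 - 8 * r ^ 2 * y ^ 2 / (r ^ 2 + y ^ 2) ^ 3)) +
    (-(γ * ((γ - 1) * y ^ (γ - 2)) * (r ^ 2 / (r ^ 2 + y ^ 2)) +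
      2 * (γ * y ^ (γ - 1) * (-(2 * r ^ 2 * y) / (r ^ 2 + y ^ 2) ^ 2)) +
      y ^ γ * (-(2 * r ^ 2) / (r ^ 2 + y ^ 2) ^ 2 + 8 * r ^ 2 * y ^ 2 / (r ^ 2 + y ^ 2) ^ 3))) +
    (1 - γ) / y * (-(γ * y ^ (γ - 1) * (r ^ 2 / (r ^ 2 + y ^ 2)) +
      y ^ γ * (-(2 * r ^ 2 * y) / (r ^ 2 + y ^ 2) ^ 2))) ≤
    -(N * γ * (1 - γ) - 6) * r ^ (γ - 2) := by
  have e1 : y ^ (γ - 1) = y ^ γ / y := by rw [Real.rpow_sub_one hy.ne']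
  have e2 : y ^ (γ - 2) = y ^ γ / y ^ 2 := by
    rw [Real.rpow_sub hy]; simp
  have e3 : r ^ (γ - 2) = r ^ γ / r ^ 2 := by
    rw [Real.rpow_sub hr]; simp
  have hY := young_aux h0 h1 hr hy.le
  rw [e1, e2, e3]
  set q := r ^ 2 + y ^ 2 with hq
  have hq0 : 0 < q := by positivity
  have hL : (N * (γ * ((γ - 1) * (r ^ γ / r ^ 2))) -
      y ^ γ * (2 * y ^ 2 / q ^ 2 - 8 * r ^ 2 * y ^ 2 / q ^ 3)) +
    (-(γ * ((γ - 1) * (y ^ γ / y ^ 2)) * (r ^ 2 / q) +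
      2 * (γ * (y ^ γ / y) * (-(2 * r ^ 2 * y) / q ^ 2)) +
      y ^ γ * (-(2 * r ^ 2) / q ^ 2 + 8 * r ^ 2 * y ^ 2 / q ^ 3))) +
    (1 - γ) / y * (-(γ * (y ^ γ / y) * (r ^ 2 / q) +
      y ^ γ * (-(2 * r ^ 2 * y) / q ^ 2))) = 
      - (N * γ * (1 - γ)) * (r ^ γ / r ^ 2) + y ^ γ * (2 * (1 + γ) * r ^ 2 + 2 * r ^ 2 - 2 * y ^ 2) / q ^ 2 := by
    field_simp
    ring
  rw [hL]
  have h5 : y ^ γ * (2 * (1 + γ) * r ^ 2 + 2 * r ^ 2 - 2 * y ^ 2) / q ^ 2 ≤ 6 * (r ^ γ / r ^ 2) := by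
    have p := Real.rpow_pos_of_pos hy γ
    have p2 := Real.rpow_pos_of_pos hr γ
    calc _ ≤ (6 * (y ^ γ * r ^ 2)) / q ^ 2 := by
          apply div_le_div_of_nonneg_right _ (by positivity)
          have : 2 * (1 + γ) * r ^ 2 + 2 * r ^ 2 - 2 * y ^ 2 ≤ 6 * r ^ 2 := by nlinarith [sq_nonneg y, sq_nonneg r]
          nlinarith
      _ ≤ (6 * (r ^ γ * q)) / q ^ 2 := by gcongr
      _ = 6 * (r ^ γ / q) := by field_simp
      _ ≤ _ := by
          gcongr
          rw [hq]; nlinarith [sq_nonneg y]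
  linarith

lemma psi_tend {γ N r : ℝ} (h0 : 0 < γ) (hr : 0 < r) :
    Tendsto (fun y : ℝ => (psi γ N r y - psi γ N r 0) / y ^ γ) (𝓝[>] 0) (𝓝 (-1)) := by
  have h1 : Tendsto (fun y : ℝ => -(r ^ 2 / (r ^ 2 + y ^ 2))) (𝓝[>] 0) (𝓝 (-1)) := by
    have : ContinuousAt (fun y : ℝ => -(r ^ 2 / (r ^ 2 + y ^ 2))) 0 := by
      apply ContinuousAt.neg
      apply ContinuousAt.div (by fun_prop) (by fun_prop)
      simp; exact hr.ne'
    have := this.tendsto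
    have e : -(r ^ 2 / (r ^ 2 + (0:ℝ) ^ 2)) = -1 := by field_simp; simp
    rw [e] at this
    exact this.mono_left nhdsWithin_le_nhds
  refine h1.congr' ?_
  filter_upwards [self_mem_nhdsWithin] with y hy
  have := Real.rpow_pos_of_pos (show 0 < y from hy) γ
  rw [psi_zero h0]
  unfold psi
  field_simp; ring

lemma rpow_lip {γ κ a b : ℝ} (h0 : 0 < γ) (h1 : γ < 1) (hκ : 0 < κ) (ha : κ ≤ a) (hb : 0 ≤ b) :
    b ^ γ - a ^ γ ≤ κ ^ (γ - 1) * |b - a| := by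
  have ha0 : 0 < a := lt_of_lt_of_le hκ ha
  have k0 : 0 ≤ b / a := by positivity
  have k1 : (1 + (b / a - 1)) ^ γ ≤ 1 + γ * (b / a - 1) :=
    rpow_one_add_le_one_add_mul_self (by linarith) h0.le h1.le
  have e : 1 + (b / a - 1) = b / a := by ring
  rw [e, Real.div_rpow hb ha0.le] at k1
  have pa := Real.rpow_pos_of_pos ha0 γ
  rw [div_le_iff₀ pa] at k1
  have e2 : a ^ (γ - 1) = a ^ γ / a := by rw [Real.rpow_sub_one ha0.ne']
  have h3 : b ^ γ - a ^ γ ≤ γ * (a ^ (γ - 1) * (b - a)) := by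
    rw [e2]
    have : a ^ γ / a * (b - a) = (b / a - 1) * a ^ γ := by field_simp
    rw [this]; linarith
  have h4 : a ^ (γ - 1) ≤ κ ^ (γ - 1) := Real.rpow_le_rpow_of_nonpos hκ ha (by linarith)
  have pa1 := Real.rpow_pos_of_pos ha0 (γ - 1)
  calc _ ≤ γ * (a ^ (γ - 1) * (b - a)) := h3
    _ ≤ 1 * (a ^ (γ - 1) * |b - a|) := by
        have : a ^ (γ - 1) * (b - a) ≤ a ^ (γ - 1) * |b - a| := by gcongr; exact le_abs_self _
        have : 0 ≤ a ^ (γ - 1) * |b - a| := by positivity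
        nlinarith
    _ ≤ κ ^ (γ - 1) * |b - a| := by rw [one_mul]; gcongr

lemma sq_lip {n : ℕ} {v w : En n} {L : ℝ} (hv : ‖v‖ ≤ L) (hw : ‖w‖ ≤ L) :
    ‖w‖ ^ 2 - ‖v‖ ^ 2 ≤ 2 * L * ‖w - v‖ := by
  have h1 := norm_sub_norm_le w v
  have := norm_nonneg v
  have := norm_nonneg w
  have := norm_nonneg (w - v)
  nlinarith

def Phi4 {n : ℕ} (γ K1 K2 N5 m N' ε0 κ : ℝ) (h x0 : En n) (y0 t1 : ℝ) (t : ℝ) (x : Fin 4 → En n)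
    (y : ℝ) : ℝ :=
  m * (K1 * psi γ N5 (‖x 1 - x 3‖ / 2 + κ) y + K2 * (‖x 1 - x0‖ ^ 2 + (y - y0) ^ 2 + (t1 - t))) +
    N' * (‖x 0 - x 1 - h‖ ^ 2 + ‖x 2 - x 3 - h‖ ^ 2) + ε0

lemma sum_inner_ek {n : ℕ} (d : En n) : ∑ k, ⟪d, ek k⟫ ^ 2 = ‖d‖ ^ 2 := by
  rw [EuclideanSpace.norm_sq_eq]
  apply Finset.sum_congr rfl
  intro k _
  rw [ek, EuclideanSpace.inner_single_right]
  simp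

lemma norm_ek {n : ℕ} (k : Fin n) : ‖(ek k : En n)‖ = 1 := by simp [ek]

lemma SD.norm_sq_line {n : ℕ} (v e : En n) : SD (fun τ : ℝ => ‖v + τ • e‖ ^ 2) 0 (2 * ‖e‖ ^ 2) := by
  refine (SD.quad (‖v‖ ^ 2) (2 * ⟪v, e⟫) (‖e‖ ^ 2) 0).congr (Eventually.of_forall fun τ => ?_)
  simp only
  rw [norm_add_sq_real, inner_smul_right, norm_smul, mul_pow, Real.norm_eq_abs, sq_abs]
  ring

lemma phi4_int {n : ℕ} {γ K1 K2 N5 m N' ε0 κ : ℝ} {h x0 : En n} {y0 t1 : ℝ} (h0 : 0 < γ)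
    (h1 : γ < 1) (hm : 0 < m) (hκ : 0 < κ) (hK1 : 0 < K1) (hK2 : 0 ≤ K2) (hy0 : 0 ≤ y0)
    (hN : 6 ≤ N5 * γ * (1 - γ)) (hK : K2 * (2 * n + 4) < K1 * (N5 * γ * (1 - γ) - 6))
    (t : ℝ) {x : Fin 4 → En n} {y : ℝ} (hy : 0 < y) (hne : x 1 ≠ x 3)
    (hr : ‖x 1 - x 3‖ / 2 + κ ≤ 1) :
    IntSuper γ (Phi4 γ K1 K2 N5 m N' ε0 κ h x0 y0 t1 t) x y := by
  set d := x 1 - x 3 with hd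
  have hd0 : d ≠ 0 := sub_ne_zero.2 hne
  have hdn : 0 < ‖d‖ := norm_pos_iff.2 hd0
  set r := ‖d‖ / 2 + κ with hrdef
  have hr0 : 0 < r := by positivity
  let ρ : En n ≃ₗᵢ[ℝ] En n := (ℝ ∙ d)ᗮ.reflection
  have hρ : ∀ v, ρ v = v - (2 * (⟪d, v⟫ / ‖d‖ ^ 2)) • d := by
    intro v
    simp only [ρ]
    rw [Submodule.reflection_orthogonal_apply, Submodule.reflection_singleton_apply]
    simp only [RCLike.ofReal_real_eq_id, id_eq]
    rw [neg_sub, two_smul, ← add_smul]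
    congr 2
    ring
  let O : Fin 4 → En n ≃ₗᵢ[ℝ] En n := ![.refl ℝ _, .refl ℝ _, ρ, ρ]
  set q1 := (N5 * (γ * ((γ - 1) * r ^ (γ - 2))) -
      y ^ γ * (2 * y ^ 2 / (r ^ 2 + y ^ 2) ^ 2 - 8 * r ^ 2 * y ^ 2 / (r ^ 2 + y ^ 2) ^ 3)) with hq1
  set q2 := (-(γ * ((γ - 1) * y ^ (γ - 2)) * (r ^ 2 / (r ^ 2 + y ^ 2)) +
      2 * (γ * y ^ (γ - 1) * (-(2 * r ^ 2 * y) / (r ^ 2 + y ^ 2) ^ 2)) +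
      y ^ γ * (-(2 * r ^ 2) / (r ^ 2 + y ^ 2) ^ 2 + 8 * r ^ 2 * y ^ 2 / (r ^ 2 + y ^ 2) ^ 3))) with hq2
  set q3 := (-(γ * y ^ (γ - 1) * (r ^ 2 / (r ^ 2 + y ^ 2)) +
      y ^ γ * (-(2 * r ^ 2 * y) / (r ^ 2 + y ^ 2) ^ 2))) with hq3
  have hsup := psi_super (N := N5) h0 h1 hr0 hy
  rw [← hq1, ← hq2, ← hq3] at hsup
  refine ⟨Phi4 γ K1 K2 N5 m N' ε0 κ h x0 y0 t1 t, O,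
    fun k => m * (K1 * ((⟪d, ek k⟫ / ‖d‖) ^ 2 * q1) + K2 * 2),
    m * (K1 * q3 + K2 * (2 * (y - y0))), m * (K1 * q2 + K2 * 2), rfl,
    Eventually.of_forall fun z => le_rfl, ?_, ?_, ?_, ?_⟩
  · intro k
    have s1 : SD (fun τ : ℝ => psi γ N5 (r + (⟪d, ek k⟫ / ‖d‖) * τ) y) 0
        ((⟪d, ek k⟫ / ‖d‖) ^ 2 * q1) := SD.comp_affine r _ (psi_SDr hr0)
    have s2 : SD (fun τ : ℝ => ‖(x 1 - x0) + τ • ek k‖ ^ 2) 0 2 := by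
      have := SD.norm_sq_line (x 1 - x0) (ek k)
      rw [norm_ek] at this
      simpa using this
    have s3 := ((s1.const_mul K1).add ((s2.add (SD.const ((y - y0) ^ 2 + (t1 - t)) 0)).const_mul K2)).const_mul m
    have s4 := s3.add (SD.const (N' * (‖x 0 - x 1 - h‖ ^ 2 + ‖x 2 - x 3 - h‖ ^ 2) + ε0) 0)
    rw [add_zero, add_zero] at s4
    refine s4.congr ?_
    have hev : ∀ᶠ τ : ℝ in 𝓝 0, 0 < 1 + τ * (2 * (⟪d, ek k⟫ / ‖d‖ ^ 2)) := by
      have : ContinuousAt (fun τ : ℝ => 1 + τ * (2 * (⟪d, ek k⟫ / ‖d‖ ^ 2))) 0 := by fun_prop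
      exact continuousAt_const.eventually_lt this (by simp)
    filter_upwards [hev] with τ hτ
    have e1 : x 1 + τ • ek k - (x 3 + τ • ρ (ek k)) = (1 + τ * (2 * (⟪d, ek k⟫ / ‖d‖ ^ 2))) • d := by
      rw [hρ, smul_sub, add_smul, one_smul, smul_smul, hd]
      abel
    have e2 : ‖x 1 + τ • ek k - (x 3 + τ • ρ (ek k))‖ / 2 + κ = r + ⟪d, ek k⟫ / ‖d‖ * τ := by
      rw [e1, norm_smul, Real.norm_eq_abs, abs_of_pos hτ, hrdef]
      field_simp
      ring
    have e3 : x 1 + τ • ek k - x0 = (x 1 - x0) + τ • ek k := by abel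
    simp only [Phi4, O, Matrix.cons_val, LinearIsometryEquiv.coe_refl, id_eq]
    rw [e2, e3, add_sub_add_right_eq_sub, add_sub_add_right_eq_sub]
    ring
  · have a1 := (psi_dy (N := N5) (γ := γ) hr0 hy).const_mul K1
    have a2 : HasDerivAt (fun z : ℝ => ‖x 1 - x0‖ ^ 2 + (z - y0) ^ 2 + (t1 - t)) (2 * (y - y0)) y := by
      have := (((((hasDerivAt_id y).sub_const y0).pow 2).const_add (‖x 1 - x0‖ ^ 2)).add_const (t1 - t))
      refine this.congr_deriv ?_
      simp
    have a3 := (((a1.add (a2.const_mul K2)).const_mul m).add_const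
      (N' * (‖x 0 - x 1 - h‖ ^ 2 + ‖x 2 - x 3 - h‖ ^ 2))).add_const ε0
    exact a3
  · have a1 := (psi_SDy (N := N5) (γ := γ) hr0 hy).const_mul K1
    have a2 : SD (fun z : ℝ => ‖x 1 - x0‖ ^ 2 + (z - y0) ^ 2 + (t1 - t)) y 2 := by
      have := SD.quad (‖x 1 - x0‖ ^ 2 + y0 ^ 2 + (t1 - t)) (-2 * y0) 1 y
      rw [mul_one] at this
      refine this.congr (Eventually.of_forall fun z => ?_)
      simp only
      ring
    have a3 := (((a1.add (a2.const_mul K2)).const_mul m).add (SD.const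
      (N' * (‖x 0 - x 1 - h‖ ^ 2 + ‖x 2 - x 3 - h‖ ^ 2)) y)).add (SD.const ε0 y)
    rw [add_zero, add_zero] at a3
    exact a3
  · have hs : ∑ k, m * (K1 * ((⟪d, ek k⟫ / ‖d‖) ^ 2 * q1) + K2 * 2) = m * (K1 * q1 + n * (K2 * 2)) := by
      rw [← Finset.mul_sum, Finset.sum_add_distrib]
      simp only [div_pow]
      rw [← Finset.mul_sum, ← Finset.sum_mul, ← Finset.sum_div, sum_inner_ek, div_self (by positivity)]
      simp
    rw [hs]
    have hr1 : 1 ≤ r ^ (γ - 2) := Real.one_le_rpow_of_pos_of_le_one_of_nonpos hr0 hr (by linarith)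
    have hyy : (1 - γ) / y * (2 * (y - y0)) ≤ 2 := by
      rw [div_mul_eq_mul_div, div_le_iff₀ hy]
      nlinarith
    have hfin : K1 * (q1 + q2 + (1 - γ) / y * q3) ≤ K1 * (-(N5 * γ * (1 - γ) - 6)) := by
      apply mul_le_mul_of_nonneg_left _ hK1.le
      nlinarith
    have : K1 * (q1 + q2 + (1 - γ) / y * q3) + K2 * (2 * n + 2 + (1 - γ) / y * (2 * (y - y0))) < 0 := by
      have : K2 * (2 * n + 2 + (1 - γ) / y * (2 * (y - y0))) ≤ K2 * (2 * n + 4) :=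
        mul_le_mul_of_nonneg_left (by linarith) hK2
      linarith
    nlinarith

lemma tend_rpow_aux {γ p : ℝ} (h : γ < p) :
    Tendsto (fun y : ℝ => y ^ p / y ^ γ) (𝓝[>] 0) (𝓝 0) := by
  have h1 : Tendsto (fun y : ℝ => y ^ (p - γ)) (𝓝[>] 0) (𝓝 0) := by
    have : ContinuousAt (fun y : ℝ => y ^ (p - γ)) 0 :=
      Real.continuousAt_rpow_const _ _ (Or.inr (by linarith))
    have := this.tendsto
    rw [Real.zero_rpow (by linarith)] at this
    exact this.mono_left nhdsWithin_le_nhds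
  refine h1.congr' ?_
  filter_upwards [self_mem_nhdsWithin] with y hy
  rw [Real.rpow_sub hy]

lemma phi4_base {n : ℕ} {γ K1 K2 N5 m N' ε0 κ δ c1 : ℝ} {h x0 : En n} {y0 t1 : ℝ} (h0 : 0 < γ)
    (h1 : γ < 1) (hm : 0 < m) (hκ : 0 < κ) (hK1 : 0 < K1) (hK2 : 0 ≤ K2) (hN5 : 0 ≤ N5)
    (hN' : 0 ≤ N') (hx0 : ‖x0‖ ≤ 1) (hh : ‖h‖ ≤ 1)
    (hc1 : |c1| ≤ 1) (hδ0 : 0 ≤ δ)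
    (hK : K2 + 1 ≤ γ * K1)
    (hδ : δ * (4 + 4 * (m * (K1 * N5 * κ ^ (γ - 1) + 4 * K2) + 24 * N')) < m)
    (t : ℝ) {x : Fin 4 → En n} (hx : ∀ j, ‖x j‖ < 1) :
    BaseSuper γ δ ![c1, 1, -c1, -1] (Phi4 γ K1 K2 N5 m N' ε0 κ h x0 y0 t1) t x := by
  set G := m * (K1 * N5 * κ ^ (γ - 1) + 4 * K2) + 24 * N' with hG
  have hG0 : 0 ≤ G := by positivity
  refine ⟨-(m * K2), -(γ * (m * K1)), G, ?_, hG0, ?_, ?_, ?_⟩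
  · have a2 : HasDerivAt (fun z : ℝ => ‖x 1 - x0‖ ^ 2 + (0 - y0) ^ 2 + (t1 - z)) (-1) t := by
      have := (((hasDerivAt_id t).const_sub t1).const_add (‖x 1 - x0‖ ^ 2 + (0 - y0) ^ 2))
      exact this
    have a3 := ((((a2.const_mul K2).const_add (K1 * psi γ N5 (‖x 1 - x 3‖ / 2 + κ) 0)).const_mul m).add_const
      (N' * (‖x 0 - x 1 - h‖ ^ 2 + ‖x 2 - x 3 - h‖ ^ 2))).add_const ε0
    refine (a3.congr_deriv ?_).hasDerivWithinAt
    ring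
  · intro j
    have hev : ∀ᶠ z in 𝓝 (x j), ‖z‖ < 1 := by
      have : ContinuousAt (fun z : En n => ‖z‖) (x j) := by fun_prop
      exact this.eventually_lt continuousAt_const (hx j)
    filter_upwards [hev] with z hz
    set x' := Function.update x j z with hx'
    have hd : ∀ i, ‖x' i - x i‖ ≤ ‖z - x j‖ := by
      intro i
      by_cases hi : i = j
      · subst hi; simp [hx']
      · simp [hx', Function.update_of_ne hi]
    have hn' : ∀ i, ‖x' i‖ ≤ 1 := by
      intro i
      by_cases hi : i = j
      · subst hi; simp [hx', hz.le]
      · simp [hx', Function.update_of_ne hi, (hx i).le]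
    set D := ‖z - x j‖ with hD
    have hD0 : 0 ≤ D := norm_nonneg _
    have b1 : (‖x' 1 - x' 3‖ / 2 + κ) ^ γ - (‖x 1 - x 3‖ / 2 + κ) ^ γ ≤ κ ^ (γ - 1) * D := by
      refine (rpow_lip h0 h1 hκ (by linarith [norm_nonneg (x 1 - x 3)]) (by positivity)).trans ?_
      gcongr
      have e1 := abs_norm_sub_norm_le (x' 1 - x' 3) (x 1 - x 3)
      have e2 : x' 1 - x' 3 - (x 1 - x 3) = (x' 1 - x 1) - (x' 3 - x 3) := by abel
      rw [e2] at e1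
      have e3 := norm_sub_le (x' 1 - x 1) (x' 3 - x 3)
      have e4 : ‖x' 1 - x' 3‖ / 2 + κ - (‖x 1 - x 3‖ / 2 + κ) = (‖x' 1 - x' 3‖ - ‖x 1 - x 3‖) / 2 := by ring
      rw [e4, abs_div, abs_two]
      have := hd 1
      have := hd 3
      linarith
    have b2 : ‖x' 1 - x0‖ ^ 2 - ‖x 1 - x0‖ ^ 2 ≤ 4 * D := by
      have := sq_lip (L := 2) (v := x 1 - x0) (w := x' 1 - x0)
        ((norm_sub_le _ _).trans (by linarith [hx 1])) ((norm_sub_le _ _).trans (by linarith [hn' 1]))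
      rw [sub_sub_sub_cancel_right] at this
      have := hd 1
      linarith
    have b3 : ∀ i k, ‖x' i - x' k - h‖ ^ 2 - ‖x i - x k - h‖ ^ 2 ≤ 12 * D := by
      intro i k
      have l1 : ‖x i - x k - h‖ ≤ 3 := by
        have := norm_sub_le (x i - x k) h
        have := norm_sub_le (x i) (x k)
        linarith [hx i, hx k]
      have l2 : ‖x' i - x' k - h‖ ≤ 3 := by
        have := norm_sub_le (x' i - x' k) h
        have := norm_sub_le (x' i) (x' k)
        linarith [hn' i, hn' k]
      have := sq_lip (L := 3) l1 l2
      rw [sub_sub_sub_cancel_right] at this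
      have e2 : x' i - x' k - (x i - x k) = (x' i - x i) - (x' k - x k) := by abel
      rw [e2] at this
      have e3 := norm_sub_le (x' i - x i) (x' k - x k)
      have := hd i
      have := hd k
      linarith
    have b4 := b3 0 1
    have b5 := b3 2 3
    simp only [Phi4]
    rw [psi_zero h0, psi_zero h0, hG]
    have c1' := mul_le_mul_of_nonneg_left b1 (show 0 ≤ m * (K1 * N5) by positivity)
    have c2' := mul_le_mul_of_nonneg_left b2 (show 0 ≤ m * K2 by positivity)
    have c3' := mul_le_mul_of_nonneg_left (add_le_add b4 b5) hN'
    linarith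
  · have hr0 : 0 < ‖x 1 - x 3‖ / 2 + κ := by positivity
    have t1' := (psi_tend (N := N5) h0 hr0).const_mul (m * K1)
    have t2 := ((tend_rpow_aux (γ := γ) (p := 2) (by linarith)).sub
      ((tend_rpow_aux h1).const_mul (2 * y0))).const_mul (m * K2)
    have t3 := t1'.add t2
    have e : m * K1 * -1 + m * K2 * (0 - 2 * y0 * 0) = -(γ * (m * K1)) / γ := by
      field_simp; ring
    rw [e] at t3
    refine t3.congr fun y => ?_
    simp only [Phi4, Real.rpow_two, Real.rpow_one]
    ring
  · have e : ∑ j, |(![c1, 1, -c1, -1] : Fin 4 → ℝ) j| = 2 * |c1| + 2 := by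
      simp [Fin.sum_univ_four]; ring
    rw [e]
    have e2 : ((Fintype.card (Fin 4) : ℕ) : ℝ) = 4 := by simp
    rw [e2]
    have : δ * (2 * |c1| + 2 + 4 * G) ≤ δ * (4 + 4 * G) := by gcongr; linarith
    nlinarith

lemma phi4_cont {n : ℕ} {γ K1 K2 N5 m N' ε0 κ : ℝ} {h x0 : En n} {y0 t1 : ℝ} (h0 : 0 < γ)
    (hκ : 0 < κ) :
    Continuous (fun P : ℝ × (Fin 4 → En n) × ℝ =>
      Phi4 γ K1 K2 N5 m N' ε0 κ h x0 y0 t1 P.1 P.2.1 P.2.2) := by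
  unfold Phi4 psi
  have hr : Continuous fun P : ℝ × (Fin 4 → En n) × ℝ => ‖P.2.1 1 - P.2.1 3‖ / 2 + κ := by fun_prop
  have hy : Continuous fun P : ℝ × (Fin 4 → En n) × ℝ => P.2.2 := by fun_prop
  have a1 : Continuous fun P : ℝ × (Fin 4 → En n) × ℝ => (‖P.2.1 1 - P.2.1 3‖ / 2 + κ) ^ γ :=
    hr.rpow_const fun _ => Or.inr h0.le
  have a2 : Continuous fun P : ℝ × (Fin 4 → En n) × ℝ => P.2.2 ^ γ :=
    hy.rpow_const fun _ => Or.inr h0.le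
  have a3 : Continuous fun P : ℝ × (Fin 4 → En n) × ℝ => (‖P.2.1 1 - P.2.1 3‖ / 2 + κ) ^ 2 /
      ((‖P.2.1 1 - P.2.1 3‖ / 2 + κ) ^ 2 + P.2.2 ^ 2) :=
    (hr.pow 2).div ((hr.pow 2).add (hy.pow 2)) fun P => by positivity
  have a4 := (a1.const_mul N5).sub (a2.mul a3)
  have a5 : Continuous fun P : ℝ × (Fin 4 → En n) × ℝ =>
    K2 * (‖P.2.1 1 - x0‖ ^ 2 + (P.2.2 - y0) ^ 2 + (t1 - P.1)) := by fun_prop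
  have a6 : Continuous fun P : ℝ × (Fin 4 → En n) × ℝ =>
    N' * (‖P.2.1 0 - P.2.1 1 - h‖ ^ 2 + ‖P.2.1 2 - P.2.1 3 - h‖ ^ 2) := by fun_prop
  exact ((((a4.const_mul K1).add a5).const_mul m).add a6).add continuous_const

lemma lt_of_sq_aux {K R z : ℝ} (hR : 0 < R) (hK : K = 128 / R ^ 2) (h : K * z ^ 2 < 2) :
    |z| < R / 8 := by
  have e : K * R ^ 2 = 128 := by rw [hK]; field_simp
  have : z ^ 2 < (R / 8) ^ 2 := by
    by_contra hc
    push Not at hc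
    have hKp : 0 < K := by rw [hK]; positivity
    nlinarith
  exact abs_lt_of_sq_lt_sq this (by positivity)

set_option maxHeartbeats 1000000 in
lemma fourpt (n : ℕ) {γ R : ℝ} (h0 : 0 < γ) (h1 : γ < 1) (hR0 : 0 < R) (hR : R ≤ 1 / 2) :
    ∃ K : ℝ, 0 ≤ K ∧ ∀ m0 m1 N κ : ℝ, 0 < m0 → m0 ≤ m1 → 0 ≤ N → 0 < κ → κ ≤ 1 / 2 → ∃ δ > 0,
      ∀ u : ℝ → En n × ℝ → ℝ, Adm γ δ u → ∀ (c1 ε0 m : ℝ) (h : En n), |c1| ≤ 1 → ‖h‖ ≤ R / 4 →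
      0 ≤ ε0 → m0 ≤ m → m ≤ m1 →
      (∀ t ∈ Icc (-R) 0, ∀ y ∈ Icc 0 R, ∀ x1 x2 : En n, ‖x1‖ ≤ R → ‖x2‖ ≤ R →
        |c1 * u t (x1, y) + u t (x2, y)| ≤ m + N * ‖x1 - x2 - h‖ ^ 2) →
      (∀ t ∈ Icc (-R) 0, ∀ y ∈ Icc 0 R, ∀ x1 x2 x3 : En n, ‖x1‖ ≤ R → ‖x2‖ ≤ R → ‖x3‖ ≤ R →
        c1 * (u t (x1, y) - u t (x3, y)) ≤ ε0 + N * (‖x1 - x2 - h‖ ^ 2 + ‖x3 - x2 - h‖ ^ 2)) →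
      ∀ t ∈ Icc (-(R / 4)) 0, ∀ y ∈ Icc 0 (R / 4), ∀ x x' : En n, ‖x‖ ≤ R / 4 → ‖x'‖ ≤ R / 4 →
        (c1 * u t (x + h, y) + u t (x, y)) - (c1 * u t (x' + h, y) + u t (x', y)) ≤
          ε0 + m * K * (‖x - x'‖ / 2 + κ) ^ γ := by
  set K2 := 128 / R ^ 2 with hK2
  set N5 := 7 / (γ * (1 - γ)) with hN5
  have hg : 0 < γ * (1 - γ) := mul_pos h0 (by linarith)
  have eN5 : N5 * γ * (1 - γ) = 7 := by
    have : (1 - γ) ≠ 0 := by linarith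
    rw [hN5]; field_simp
  have hN52 : 2 ≤ N5 := by
    rw [hN5, le_div_iff₀ hg]; nlinarith
  have hK2p : 0 < K2 := by positivity
  have hRp : 0 < (R / 16) ^ γ := Real.rpow_pos_of_pos (by positivity) γ
  set K1 := 1 + (K2 + 1) / γ + K2 * (2 * n + 4) + 2 / (R / 16) ^ γ with hK1
  have b1 : 0 ≤ (K2 + 1) / γ := by positivity
  have b2 : 0 ≤ K2 * (2 * n + 4) := by positivity
  have b3 : 0 ≤ 2 / (R / 16) ^ γ := by positivity
  have hK1p : 0 < K1 := by linarith
  have hK1a : K2 + 1 ≤ γ * K1 := by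
    have : (K2 + 1) / γ ≤ K1 := by linarith
    rw [div_le_iff₀ h0] at this; linarith
  have hK1b : K2 * (2 * n + 4) < K1 * (N5 * γ * (1 - γ) - 6) := by
    rw [eN5]; linarith
  have hK1c : 2 ≤ K1 * (R / 16) ^ γ := by
    have : 2 / (R / 16) ^ γ ≤ K1 := by linarith
    rw [div_le_iff₀ hRp] at this; exact this
  refine ⟨K1 * N5, by positivity, ?_⟩
  intro m0 m1 N κ hm0 hm01 hN hκ hκ1
  have hκp : 0 < κ ^ (γ - 1) := Real.rpow_pos_of_pos hκ _
  set G1 := m1 * (K1 * N5 * κ ^ (γ - 1) + 4 * K2) + 24 * (N + K2 * m1) with hG1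
  have hm1 : 0 < m1 := by linarith
  have hG1p : 0 ≤ G1 := by positivity
  refine ⟨m0 / (2 * (4 + 4 * G1)), by positivity, ?_⟩
  intro u hu c1 ε0 m h hc1 hh hε0 hmm0 hmm1 hA hB t1 ht1 y0 hy0 xa xb hxa hxb
  have hm : 0 < m := by linarith
  set δ := m0 / (2 * (4 + 4 * G1)) with hδ
  have hδp : 0 < δ := by positivity
  set N' := N + K2 * m with hN'
  have hN'p : 0 ≤ N' := by positivity
  have hδ2 : δ * (4 + 4 * (m * (K1 * N5 * κ ^ (γ - 1) + 4 * K2) + 24 * N')) < m := by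
    have : m * (K1 * N5 * κ ^ (γ - 1) + 4 * K2) + 24 * N' ≤ G1 := by
      rw [hG1, hN']; gcongr
    calc _ ≤ δ * (4 + 4 * G1) := by gcongr
      _ = m0 / 2 := by rw [hδ]; field_simp
      _ < m := by linarith
  have hcomp := comparison (ι := Fin 4) h0 hu ![c1, 1, -c1, -1]
    (Phi4 γ K1 K2 N5 m N' ε0 κ h xa y0 t1) (ta := -R) (tb := t1) (ρ := R) (by linarith) ht1.2 hR0 hR
    (phi4_cont h0 hκ).continuousOn ?_ t1 ![xa + h, xa, xb + h, xb] y0 ?_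
  · have e1 : wf ![c1, 1, -c1, -1] u t1 ![xa + h, xa, xb + h, xb] y0 =
        (c1 * u t1 (xa + h, y0) + u t1 (xa, y0)) - (c1 * u t1 (xb + h, y0) + u t1 (xb, y0)) := by
      simp [wf, Fin.sum_univ_four]; ring
    rw [e1] at hcomp
    refine hcomp.trans ?_
    have hp := psi_le (γ := γ) (N := N5) (r := ‖xa - xb‖ / 2 + κ) hy0.1
    simp only [Phi4, Matrix.cons_val, add_sub_cancel_left, sub_self, norm_zero]
    have := mul_le_mul_of_nonneg_left hp (show 0 ≤ m * K1 by positivity)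
    linarith
  · intro t x y hK hpos
    right
    have hyn : 0 ≤ y := hK.2.2.1
    have ht : t ∈ Icc (-R) 0 := ⟨hK.1.1, hK.1.2.trans ht1.2⟩
    have a1 := hA t ht y hK.2.2 (x 0) (x 1) (hK.2.1 0) (hK.2.1 1)
    have a2 := hA t ht y hK.2.2 (x 2) (x 3) (hK.2.1 2) (hK.2.1 3)
    have ew : wf ![c1, 1, -c1, -1] u t x y = (c1 * u t (x 0, y) + u t (x 1, y)) -
        (c1 * u t (x 2, y) + u t (x 3, y)) := by
      simp [wf, Fin.sum_univ_four]; ring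
    rw [ew] at hpos
    set ξ1 := ‖x 0 - x 1 - h‖ with hξ1
    set ξ2 := ‖x 2 - x 3 - h‖ with hξ2
    have hr0 : 0 < ‖x 1 - x 3‖ / 2 + κ := by positivity
    set r := ‖x 1 - x 3‖ / 2 + κ with hr
    have hps := psi_ge (N := N5) h0 h1 hr0 hyn
    have hrg : 0 < r ^ γ := Real.rpow_pos_of_pos hr0 γ
    have hps2 : r ^ γ ≤ psi γ N5 r y := le_trans (by nlinarith) hps
    simp only [Phi4] at hpos
    rw [← hξ1, ← hξ2, ← hr] at hpos
    have hmain : m * (K1 * r ^ γ + K2 * (‖x 1 - xa‖ ^ 2 + (y - y0) ^ 2 + (t1 - t)) +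
        K2 * (ξ1 ^ 2 + ξ2 ^ 2)) < m * 2 := by
      have := mul_le_mul_of_nonneg_left hps2 (show 0 ≤ m * K1 by positivity)
      have a1' := (abs_le.1 a1).2
      have a2' := (abs_le.1 a2).1
      rw [hN'] at hpos
      linarith
    have hmain2 := lt_of_mul_lt_mul_left hmain hm.le
    have htt : 0 ≤ t1 - t := by linarith [hK.1.2]
    have s1 : K1 * r ^ γ < 2 := by
      have : 0 ≤ K2 * (‖x 1 - xa‖ ^ 2 + (y - y0) ^ 2 + (t1 - t)) := by positivity
      have : 0 ≤ K2 * (ξ1 ^ 2 + ξ2 ^ 2) := by positivity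
      linarith
    have hp1 : 0 ≤ K1 * r ^ γ := by positivity
    have hp2 : 0 ≤ K2 * ‖x 1 - xa‖ ^ 2 := by positivity
    have hp3 : 0 ≤ K2 * (y - y0) ^ 2 := by positivity
    have hp4 : 0 ≤ K2 * (t1 - t) := by positivity
    have hp5 : 0 ≤ K2 * ξ1 ^ 2 := by positivity
    have hp6 : 0 ≤ K2 * ξ2 ^ 2 := by positivity
    have s2 : |‖x 1 - xa‖| < R / 8 := lt_of_sq_aux hR0 hK2 (by linarith)
    have s3 : |y - y0| < R / 8 := lt_of_sq_aux hR0 hK2 (by linarith)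
    have s4 : |ξ1| < R / 8 := lt_of_sq_aux hR0 hK2 (by linarith)
    have s5 : |ξ2| < R / 8 := lt_of_sq_aux hR0 hK2 (by linarith)
    rw [abs_of_nonneg (norm_nonneg _)] at s2
    rw [abs_of_nonneg (hξ1 ▸ norm_nonneg _)] at s4
    rw [abs_of_nonneg (hξ2 ▸ norm_nonneg _)] at s5
    have s6 : K2 * (t1 - t) < 2 := by linarith
    have s7 : t1 - t < R / 4 := by
      have e : K2 * R = 128 / R := by rw [hK2]; field_simp
      have e2 : 8 ≤ 128 / R := by rw [le_div_iff₀ hR0]; linarith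
      by_contra hc
      push Not at hc
      have := mul_le_mul_of_nonneg_left hc hK2p.le
      linarith
    have s8 : r < R / 16 := by
      by_contra hc
      push Not at hc
      have := Real.rpow_le_rpow (by positivity) hc h0.le
      have := mul_le_mul_of_nonneg_left this hK1p.le
      linarith
    have s9 : ‖x 1 - x 3‖ < R / 8 := by rw [hr] at s8; linarith
    have n1 : ‖x 1‖ < 3 * R / 8 := by
      have := norm_add_le (x 1 - xa) xa
      rw [sub_add_cancel] at this; linarith
    have n3 : ‖x 3‖ < R / 2 := by
      have := norm_sub_le (x 1) (x 1 - x 3)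
      rw [sub_sub_cancel] at this; linarith
    have n0 : ‖x 0‖ < R := by
      have h2 := norm_add_le (x 0 - x 1 - h) (x 1 + h)
      have h3 := norm_add_le (x 1) h
      have : x 0 - x 1 - h + (x 1 + h) = x 0 := by abel
      rw [this] at h2; linarith
    have n2 : ‖x 2‖ < R := by
      have h2 := norm_add_le (x 2 - x 3 - h) (x 3 + h)
      have h3 := norm_add_le (x 3) h
      have : x 2 - x 3 - h + (x 3 + h) = x 2 := by abel
      rw [this] at h2; linarith
    have nall : ∀ j, ‖x j‖ < R := by
      intro j; fin_cases j
      · exact n0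
      · show ‖x 1‖ < R
        linarith
      · exact n2
      · show ‖x 3‖ < R
        linarith
    rcases hyn.eq_or_lt with hy | hy
    · right
      refine ⟨nall, hy.symm, by linarith [ht1.1], ?_⟩
      exact phi4_base h0 h1 hm hκ hK1p hK2p.le (by linarith) hN'p (by linarith) (by linarith) hc1
        hδp.le hK1a hδ2 t fun j => lt_of_lt_of_le (nall j) (by linarith)
    · left
      refine ⟨nall, hy, by linarith [(abs_lt.1 s3).2, hy0.2], ?_⟩
      refine phi4_int h0 h1 hm hκ hK1p hK2p.le hy0.1 (by linarith) hK1b t hy ?_ (by linarith)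
      intro heq
      have hb := hB t ht y hK.2.2 (x 0) (x 1) (x 2) (hK.2.1 0) (hK.2.1 1) (hK.2.1 2)
      rw [← hξ1, heq, ← hξ2] at hb
      rw [heq] at hpos
      have q1 : 0 ≤ m * (K1 * psi γ N5 r y) :=
        mul_nonneg hm.le (mul_nonneg hK1p.le (hrg.le.trans hps2))
      have q2 : 0 ≤ m * (K2 * (‖x 3 - xa‖ ^ 2 + (y - y0) ^ 2 + (t1 - t))) := by positivity
      have q3 : N * (ξ1 ^ 2 + ξ2 ^ 2) ≤ N' * (ξ1 ^ 2 + ξ2 ^ 2) := by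
        gcongr; rw [hN']; have : 0 ≤ K2 * m := by positivity
        linarith
      linarith
  · refine ⟨⟨by linarith [ht1.1], le_rfl⟩, ?_, ⟨hy0.1, by linarith [hy0.2]⟩⟩
    intro j; fin_cases j
    · show ‖xa + h‖ ≤ R
      have := norm_add_le xa h; linarith
    · show ‖xa‖ ≤ R
      linarith
    · show ‖xb + h‖ ≤ R
      have := norm_add_le xb h; linarith
    · show ‖xb‖ ≤ R
      linarith

def PP (n : ℕ) (γ R σ : ℝ) : Prop :=
  ∃ C : ℝ, 0 ≤ C ∧ ∀ ε > 0, ∃ δ > 0, ∀ u : ℝ → En n × ℝ → ℝ, Adm γ δ u →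
    ∀ t ∈ Icc (-R) 0, ∀ y ∈ Icc 0 R, ∀ x x' : En n, ‖x‖ ≤ R → ‖x'‖ ≤ R →
      |u t (x, y) - u t (x', y)| ≤ C * ‖x - x'‖ ^ σ + ε

def QQ (n : ℕ) (γ R σ : ℝ) : Prop :=
  ∃ C : ℝ, 0 ≤ C ∧ ∀ ε > 0, ∃ δ > 0, ∀ u : ℝ → En n × ℝ → ℝ, Adm γ δ u →
    ∀ t ∈ Icc (-R) 0, ∀ y ∈ Icc 0 R, ∀ x x' h : En n, ‖x‖ ≤ R → ‖x'‖ ≤ R → ‖h‖ ≤ R →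
      |(u t (x, y) - u t (x + h, y)) - (u t (x', y) - u t (x' + h, y))| ≤
        C * ‖h‖ ^ σ * ‖x - x'‖ ^ γ + ε

lemma small_rpow {γ K ε : ℝ} (h0 : 0 < γ) (hK : 0 ≤ K) (hε : 0 < ε) :
    ∃ κ : ℝ, 0 < κ ∧ κ ≤ 1 / 2 ∧ K * κ ^ γ ≤ ε := by
  have h1 : Tendsto (fun y : ℝ => K * y ^ γ) (𝓝[>] 0) (𝓝 0) := by
    have : ContinuousAt (fun y : ℝ => K * y ^ γ) 0 :=
      continuousAt_const.mul (Real.continuousAt_rpow_const _ _ (Or.inr h0.le))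
    have := this.tendsto
    rw [Real.zero_rpow h0.ne', mul_zero] at this
    exact this.mono_left nhdsWithin_le_nhds
  obtain ⟨κ, h2, h3⟩ := ((h1.eventually (Iio_mem_nhds hε)).and
    (Ioo_mem_nhdsGT (show (0:ℝ) < 1 / 2 by norm_num))).exists
  exact ⟨κ, h3.1, h3.2.le, le_of_lt h2⟩

lemma half_rpow {γ κ z : ℝ} (h0 : 0 < γ) (h1 : γ < 1) (hκ : 0 < κ) (hz : 0 ≤ z) :
    (z / 2 + κ) ^ γ ≤ z ^ γ + κ ^ γ := by
  refine (Real.rpow_add_le_add_rpow (by positivity) hκ.le h0.le h1.le).trans ?_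
  gcongr
  linarith

lemma interp {C σ ε : ℝ} (hC : 0 ≤ C) (h0 : 0 < σ) (h1 : σ ≤ 1) (hε : 0 < ε) :
    ∃ N : ℝ, 0 ≤ N ∧ ∀ z : ℝ, 0 ≤ z → C * z ^ σ ≤ ε + N * z ^ 2 := by
  obtain ⟨κ, k1, k2, k3⟩ := small_rpow h0 hC hε
  refine ⟨C * κ ^ (σ - 2), by positivity, fun z hz => ?_⟩
  rcases le_total z κ with h | h
  · have : C * z ^ σ ≤ C * κ ^ σ := by gcongr
    have : 0 ≤ C * κ ^ (σ - 2) * z ^ 2 := by positivity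
    linarith
  · have hz0 : 0 < z := lt_of_lt_of_le k1 h
    have e : z ^ σ = z ^ (σ - 2) * z ^ 2 := by
      rw [← Real.rpow_two, ← Real.rpow_add hz0]; congr 1; ring
    have : z ^ (σ - 2) ≤ κ ^ (σ - 2) := Real.rpow_le_rpow_of_nonpos k1 h (by linarith)
    rw [e]
    have : C * (z ^ (σ - 2) * z ^ 2) ≤ C * (κ ^ (σ - 2) * z ^ 2) := by gcongr
    linarith

lemma Adm.bd {n : ℕ} {γ δ : ℝ} {u : ℝ → En n × ℝ → ℝ} (h : Adm γ δ u) {t y : ℝ} {x : En n}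
    (ht : t ∈ Icc (-(1 / 2) : ℝ) 0) (hx : ‖x‖ ≤ 1 / 2) (hy : y ∈ Icc (0 : ℝ) (1 / 2)) :
    |u t (x, y)| ≤ 1 :=
  h.bound ⟨by linarith [ht.1], ht.2⟩ (by nlinarith [norm_nonneg x, hy.1, hy.2]) hy.1

lemma PP_init (n : ℕ) {γ : ℝ} (h0 : 0 < γ) (h1 : γ < 1) : PP n γ (1 / 8) γ := by
  obtain ⟨K, hK, hmain⟩ := fourpt n h0 h1 (R := 1 / 2) (by norm_num) le_rfl
  refine ⟨K, hK, fun ε hε => ?_⟩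
  obtain ⟨κ, k1, k2, k3⟩ := small_rpow h0 hK hε
  obtain ⟨δ, hδ, hd⟩ := hmain 1 1 0 κ one_pos le_rfl le_rfl k1 k2
  refine ⟨δ, hδ, fun u hu t ht y hy x x' hx hx' => ?_⟩
  have key : ∀ x x' : En n, ‖x‖ ≤ 1 / 8 → ‖x'‖ ≤ 1 / 8 →
      u t (x, y) - u t (x', y) ≤ K * ‖x - x'‖ ^ γ + ε := by
    intro x x' hx hx'
    have := hd u hu 0 0 1 0 (by simp) (by rw [norm_zero]; norm_num) le_rfl le_rfl le_rfl
      (fun t ht y hy x1 x2 _ h2 => by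
        have := hu.bd ht h2 hy
        simpa using this)
      (fun t ht y hy x1 x2 x3 _ _ _ => by simp) t ⟨by linarith [ht.1], ht.2⟩ y
      ⟨hy.1, by linarith [hy.2]⟩ x x' (by linarith) (by linarith)
    have h3 := mul_le_mul_of_nonneg_left (half_rpow h0 h1 k1 (norm_nonneg (x - x'))) hK
    simp only [zero_mul, zero_add, one_mul] at this
    linarith
  rw [abs_le]
  constructor
  · have := key x' x hx' hx
    rw [norm_sub_rev] at this
    linarith
  · exact key x x' hx hx'

lemma PP_mono {n : ℕ} {γ R σ σ' : ℝ} (hR : R ≤ 1 / 2) (h : PP n γ R σ) (hs : σ' ≤ σ) (h0 : 0 < σ') :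
    PP n γ R σ' := by
  obtain ⟨C, hC, hmain⟩ := h
  refine ⟨C, hC, fun ε hε => ?_⟩
  obtain ⟨δ, hδ, hd⟩ := hmain ε hε
  refine ⟨δ, hδ, fun u hu t ht y hy x x' hx hx' => (hd u hu t ht y hy x x' hx hx').trans ?_⟩
  have : ‖x - x'‖ ≤ 1 := (norm_sub_le _ _).trans (by linarith)
  have := Real.rpow_le_rpow_of_exponent_ge' (norm_nonneg (x - x')) this h0.le hs
  gcongr

lemma QQ_of_PP {n : ℕ} {γ R σ : ℝ} (h0 : 0 < γ) (h1 : γ < 1) (hR0 : 0 < R) (hR : R ≤ 1 / 2)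
    (hs0 : 0 < σ) (hs1 : σ ≤ 1) (h : PP n γ R σ) : QQ n γ (R / 4) σ := by
  obtain ⟨C, hC, hP⟩ := h
  obtain ⟨K, hK, hmain⟩ := fourpt n h0 h1 hR0 hR
  refine ⟨C * K, by positivity, fun ε hε => ?_⟩
  set ε1 := ε / (4 * (1 + K)) with hε1
  have hε1p : 0 < ε1 := by positivity
  have hε1e : ε1 * (1 + K) = ε / 4 := by rw [hε1]; field_simp
  obtain ⟨κ, k1, k2, k3⟩ := small_rpow (K := C * K) h0 (by positivity) (half_pos hε)
  obtain ⟨N, hN, hNi⟩ := interp hC hs0 hs1 hε1p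
  obtain ⟨δ1, hδ1, hd1⟩ := hP ε1 hε1p
  obtain ⟨δ2, hδ2, hd2⟩ := hmain (2 * ε1) (C + 2 * ε1) (2 * N) κ (by positivity) (by linarith)
    (by positivity) k1 k2
  refine ⟨min δ1 δ2, lt_min hδ1 hδ2, fun u hu t ht y hy x x' h hx hx' hh => ?_⟩
  have hu1 := hd1 u (hu.mono (min_le_left _ _))
  have hh1 : ‖h‖ ^ σ ≤ 1 := Real.rpow_le_one (norm_nonneg _) (by linarith) hs0.le
  have hhp : 0 ≤ ‖h‖ ^ σ := by positivity
  have key : ∀ x x' : En n, ‖x‖ ≤ R / 4 → ‖x'‖ ≤ R / 4 →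
      (u t (x, y) - u t (x + h, y)) - (u t (x', y) - u t (x' + h, y)) ≤
        C * K * ‖h‖ ^ σ * ‖x - x'‖ ^ γ + ε := by
    intro x x' hx hx'
    have := hd2 u (hu.mono (min_le_right _ _)) (-1) (2 * ε1) (C * ‖h‖ ^ σ + 2 * ε1) h (by simp) hh
      (by positivity) (by nlinarith) (by nlinarith)
      (fun t ht y hy x1 x2 g1 g2 => by
        have := hu1 t ht y hy x2 x1 g2 g1
        have e : x1 - x2 = h + (x1 - x2 - h) := by abel
        have e2 : ‖x2 - x1‖ ^ σ ≤ ‖h‖ ^ σ + ‖x1 - x2 - h‖ ^ σ := by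
          rw [norm_sub_rev]
          refine le_trans ?_ (Real.rpow_add_le_add_rpow (norm_nonneg _) (norm_nonneg _) hs0.le hs1)
          refine Real.rpow_le_rpow (norm_nonneg _) ?_ hs0.le
          conv_lhs => rw [e]
          exact norm_add_le _ _
        have e3 := hNi ‖x1 - x2 - h‖ (norm_nonneg _)
        have e4 := mul_le_mul_of_nonneg_left e2 hC
        have e5 : -1 * u t (x1, y) + u t (x2, y) = u t (x2, y) - u t (x1, y) := by ring
        rw [e5]
        have e6 : 0 ≤ N * ‖x1 - x2 - h‖ ^ 2 := by positivity
        linarith)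
      (fun t ht y hy x1 x2 x3 g1 g2 g3 => by
        have := hu1 t ht y hy x1 x3 g1 g3
        have e3 := hNi ‖x1 - x3‖ (norm_nonneg _)
        have e5 : ‖x1 - x3‖ ^ 2 ≤ 2 * (‖x1 - x2 - h‖ ^ 2 + ‖x3 - x2 - h‖ ^ 2) := by
          have e : x1 - x3 = (x1 - x2 - h) - (x3 - x2 - h) := by abel
          have := norm_sub_le (x1 - x2 - h) (x3 - x2 - h)
          rw [← e] at this
          nlinarith [norm_nonneg (x1 - x3), sq_nonneg (‖x1 - x2 - h‖ - ‖x3 - x2 - h‖)]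
        have e6 := mul_le_mul_of_nonneg_left e5 hN
        have := (abs_le.1 this).1
        linarith) t ht y hy x x' hx hx'
    have hz : ‖x - x'‖ ≤ 1 / 4 := (norm_sub_le _ _).trans (by linarith)
    have g3 : (‖x - x'‖ / 2 + κ) ^ γ ≤ 1 := Real.rpow_le_one (by positivity) (by linarith) h0.le
    have h3 := mul_le_mul_of_nonneg_left (half_rpow h0 h1 k1 (norm_nonneg (x - x')))
      (show 0 ≤ C * ‖h‖ ^ σ * K by positivity)
    have h4 := mul_le_mul_of_nonneg_left g3 (show 0 ≤ 2 * ε1 * K by positivity)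
    have h5 : C * K * κ ^ γ * ‖h‖ ^ σ ≤ C * K * κ ^ γ * 1 :=
      mul_le_mul_of_nonneg_left hh1 (by positivity)
    linarith
  rw [abs_le]
  constructor
  · have := key x' x hx' hx
    rw [norm_sub_rev] at this
    linarith
  · exact key x x' hx hx'

lemma dyadic {n : ℕ} {p : En n → ℝ} {R C τ ε : ℝ} {F : ℝ → ℝ} (hR : 0 < R)
    (hb : ∀ x, ‖x‖ ≤ R → |p x| ≤ 1) (hε : 0 ≤ ε)
    (hq : ∀ x h : En n, ‖x‖ ≤ R / 2 → ‖h‖ ≤ R / 4 →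
      |(p x - p (x + h)) - (p (x + h) - p (x + h + h))| ≤ C * ‖h‖ ^ τ + ε)
    (hF1 : ∀ z, 0 < z → z ≤ R / 4 → F (2 * z) / 2 + C * z ^ τ / 2 ≤ F z)
    (hF2 : ∀ z, R / 4 ≤ z → z ≤ R / 2 → 2 ≤ F z) :
    ∀ x h : En n, ‖x‖ ≤ R / 2 → ‖h‖ ≤ R / 2 → h ≠ 0 → |p x - p (x + h)| ≤ F ‖h‖ + ε := by
  have main : ∀ k : ℕ, ∀ x h : En n, ‖x‖ ≤ R / 2 → ‖h‖ ≤ R / 2 → R / 4 ≤ 2 ^ k * ‖h‖ →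
      |p x - p (x + h)| ≤ F ‖h‖ + ε := by
    intro k
    have base : ∀ x h : En n, ‖x‖ ≤ R / 2 → ‖h‖ ≤ R / 2 → R / 4 ≤ ‖h‖ →
      |p x - p (x + h)| ≤ F ‖h‖ + ε := by
      intro x h hx hh hk
      have h1 := hb x (by linarith)
      have h2 := hb (x + h) ((norm_add_le _ _).trans (by linarith))
      have h3 := hF2 ‖h‖ hk hh
      have := abs_sub (p x) (p (x + h))
      linarith
    induction k with
    | zero => 
      intro x h hx hh hk
      exact base x h hx hh (by simpa using hk)
    | succ k ih =>
      intro x h hx hh hk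
      rcases le_total (R / 4) ‖h‖ with h1 | h1
      · exact base x h hx hh h1
      · have hpos : 0 < ‖h‖ := by
          by_contra hc
          have : ‖h‖ = 0 := le_antisymm (not_lt.1 hc) (norm_nonneg _)
          rw [this] at hk; linarith
        have e1 : ‖(2:ℝ) • h‖ = 2 * ‖h‖ := by rw [norm_smul]; simp
        have h2 := ih x ((2:ℝ) • h) hx (by rw [e1]; linarith) (by rw [e1]; rw [pow_succ] at hk; linarith)
        have h3 := hq x h hx h1
        have h4 := hF1 ‖h‖ hpos h1
        rw [e1, two_smul, ← add_assoc] at h2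
        rw [abs_le] at h2 h3 ⊢
        constructor <;> linarith [h2.1, h2.2, h3.1, h3.2]
  intro x h hx hh hne
  have hpos : 0 < ‖h‖ := norm_pos_iff.2 hne
  obtain ⟨k, hk⟩ := pow_unbounded_of_one_lt (R / 4 / ‖h‖) (one_lt_two)
  refine main k x h hx hh ?_
  rw [div_lt_iff₀ hpos] at hk
  exact hk.le

lemma PP_of_QQ {n : ℕ} {γ R σ γ0 τ : ℝ} (hγ0 : 0 < γ0) (hγ : γ0 ≤ γ) (hR0 : 0 < R) (hR : R ≤ 1 / 8)
    (hs0 : 0 < σ) (hτ : 0 < τ) (h : QQ n γ R σ)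
    (hF : ∀ C, 0 ≤ C → ∃ (F : ℝ → ℝ) (C' : ℝ), 0 ≤ C' ∧
      (∀ z, 0 < z → z ≤ R / 4 → F (2 * z) / 2 + C * z ^ (σ + γ0) / 2 ≤ F z) ∧
      (∀ z, R / 4 ≤ z → z ≤ R / 2 → 2 ≤ F z) ∧ ∀ z, 0 < z → z ≤ R / 2 → F z ≤ C' * z ^ τ) :
    PP n γ (R / 4) τ := by
  obtain ⟨C, hC, hmain⟩ := h
  obtain ⟨F, C', hC', f1, f2, f3⟩ := hF C hC
  refine ⟨C', hC', fun ε hε => ?_⟩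
  obtain ⟨δ, hδ, hd⟩ := hmain ε hε
  refine ⟨δ, hδ, fun u hu t ht y hy x x' hx hx' => ?_⟩
  by_cases hne : x' - x = 0
  · have : x' = x := sub_eq_zero.1 hne
    subst this
    simp
    positivity
  have hnorm : ‖x' - x‖ ≤ R / 2 := (norm_sub_le _ _).trans (by linarith)
  have ht' : t ∈ Icc (-R) 0 := ⟨by linarith [ht.1], ht.2⟩
  have hy' : y ∈ Icc 0 R := ⟨hy.1, by linarith [hy.2]⟩
  have := dyadic (p := fun x => u t (x, y)) (τ := σ + γ0) (F := F) (C := C) (ε := ε) hR0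
    (fun x hx => hu.bd ⟨by linarith [ht.1], ht.2⟩ (by linarith) ⟨hy.1, by linarith [hy.2]⟩) hε.le
    (fun x h hx hh => by
      have h1 := hd u hu t ht' y hy' x (x + h) h (by linarith)
        ((norm_add_le _ _).trans (by linarith)) (by linarith)
      refine h1.trans ?_
      have e : ‖x - (x + h)‖ = ‖h‖ := by simp
      rw [e]
      by_cases h0 : h = 0
      · subst h0
        simp [Real.zero_rpow hs0.ne', Real.zero_rpow (show σ + γ0 ≠ 0 by linarith)]
      have hp : 0 < ‖h‖ := norm_pos_iff.2 h0
      rw [Real.rpow_add hp, mul_assoc]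
      have : ‖h‖ ^ γ ≤ ‖h‖ ^ γ0 :=
        Real.rpow_le_rpow_of_exponent_ge hp (by linarith) hγ
      gcongr) f1 f2 x (x' - x) (by linarith) hnorm hne
  simp only [add_sub_cancel] at this
  have h4 := f3 ‖x' - x‖ (norm_pos_iff.2 hne) hnorm
  rw [norm_sub_rev x x']
  linarith

lemma PP_step_lt {n : ℕ} {γ R σ γ0 : ℝ} (hγ0 : 0 < γ0) (hγ : γ0 ≤ γ) (h1 : γ < 1) (hR0 : 0 < R)
    (hR : R ≤ 1 / 2) (hs0 : 0 < σ) (hs : σ + γ0 < 1) (h : PP n γ R σ) :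
    PP n γ (R / 16) (σ + γ0) := by
  have hq := QQ_of_PP (by linarith) h1 hR0 hR hs0 (by linarith) h
  have e : R / 16 = R / 4 / 4 := by ring
  rw [e]
  set ρ := R / 4 with hρ
  have hρ0 : 0 < ρ := by positivity
  refine PP_of_QQ hγ0 hγ hρ0 (by linarith) hs0 (by linarith) hq ?_
  intro C hC
  set τ := σ + γ0 with hτ
  have hτ0 : 0 < τ := by linarith
  have h2 : (2:ℝ) ^ τ < 2 := by
    have := Real.rpow_lt_rpow_of_exponent_lt (one_lt_two) hs
    rwa [Real.rpow_one] at this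
  have hp : 0 < (ρ / 4) ^ τ := by positivity
  set C2 := C / (2 - 2 ^ τ) + 2 / (ρ / 4) ^ τ with hC2
  have q1 : 0 ≤ C / (2 - 2 ^ τ) := div_nonneg hC (by linarith)
  have q2 : 0 ≤ 2 / (ρ / 4) ^ τ := by positivity
  refine ⟨fun z => C2 * z ^ τ, C2, by linarith, ?_, ?_, fun z _ _ => le_rfl⟩
  · intro z hz _
    have hzp : 0 < z ^ τ := by positivity
    simp only
    rw [Real.mul_rpow (by norm_num) hz.le]
    have : C ≤ C2 * (2 - 2 ^ τ) := by
      rw [← div_le_iff₀ (by linarith)]; linarith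
    nlinarith
  · intro z hz _
    have : 2 / (ρ / 4) ^ τ ≤ C2 := by linarith
    rw [div_le_iff₀ hp] at this
    refine this.trans ?_
    simp only
    gcongr

lemma PP_step_gt {n : ℕ} {γ R σ γ0 : ℝ} (hγ0 : 0 < γ0) (hγ : γ0 ≤ γ) (h1 : γ < 1) (hR0 : 0 < R)
    (hR : R ≤ 1 / 2) (hs0 : 0 < σ) (hs1 : σ ≤ 1) (hs : 1 < σ + γ0) (h : PP n γ R σ) :
    PP n γ (R / 16) 1 := by
  have hq := QQ_of_PP (by linarith) h1 hR0 hR hs0 hs1 h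
  have e : R / 16 = R / 4 / 4 := by ring
  rw [e]
  set ρ := R / 4 with hρ
  have hρ0 : 0 < ρ := by positivity
  refine PP_of_QQ hγ0 hγ hρ0 (by linarith) hs0 one_pos hq ?_
  intro C hC
  set τ := σ + γ0 with hτ
  have hτ0 : 0 < τ := by linarith
  have h2 : 2 < (2:ℝ) ^ τ := by
    have := Real.rpow_lt_rpow_of_exponent_lt (one_lt_two) hs
    rwa [Real.rpow_one] at this
  set C2 := C / (2 ^ τ - 2) with hC2
  have q1 : 0 ≤ C2 := div_nonneg hC (by linarith)
  have q3 : C2 * (2 ^ τ - 2) = C := div_mul_cancel₀ _ (by linarith)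
  refine ⟨fun z => (2 + C2) / (ρ / 4) * z - C2 * z ^ τ, (2 + C2) / (ρ / 4), by positivity, ?_, ?_, ?_⟩
  · intro z hz _
    simp only
    rw [Real.mul_rpow (by norm_num) hz.le]
    have hzp : 0 < z ^ τ := by positivity
    have : C * z ^ τ = C2 * 2 ^ τ * z ^ τ - 2 * (C2 * z ^ τ) := by rw [← q3]; ring
    rw [this]
    apply le_of_eq; ring
  · intro z hz hz2
    have hz0 : 0 < z := by linarith
    have h3 : z ^ τ ≤ 1 := Real.rpow_le_one hz0.le (by linarith) hτ0.le
    have h4 : 2 + C2 ≤ (2 + C2) / (ρ / 4) * z := by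
      calc 2 + C2 = (2 + C2) / (ρ / 4) * (ρ / 4) := by field_simp
        _ ≤ _ := by gcongr
    have h5 := mul_le_mul_of_nonneg_left h3 q1
    simp only
    linarith
  · intro z hz _
    rw [Real.rpow_one]
    have : 0 ≤ C2 * z ^ τ := by positivity
    linarith

lemma PP_one (n : ℕ) {γ : ℝ} (h0 : 0 < γ) (h1 : γ < 1) : ∃ R, 0 < R ∧ R ≤ 1 / 2 ∧ PP n γ R 1 := by
  obtain ⟨M, hM⟩ := exists_nat_gt (1 / γ)
  have hM0 : (0:ℝ) < M := lt_trans (by positivity) hM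
  set γ0 : ℝ := 1 / (M + 1 / 2) with hγ0
  have hγ0p : 0 < γ0 := by positivity
  have hγ0e : γ0 * (M + 1 / 2) = 1 := by rw [hγ0]; field_simp
  have hγ : γ0 ≤ γ := by
    rw [hγ0, div_le_iff₀ (by positivity)]
    rw [div_lt_iff₀ h0] at hM
    nlinarith
  have main : ∀ k : ℕ, k + 1 ≤ M → ∃ R, 0 < R ∧ R ≤ 1 / 2 ∧ PP n γ R ((k + 1 : ℕ) * γ0) := by
    intro k
    induction k with
    | zero =>
      intro _
      refine ⟨1 / 8, by norm_num, by norm_num, ?_⟩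
      simpa using PP_mono (by norm_num) (PP_init n h0 h1) hγ hγ0p
    | succ k ih =>
      intro hk
      obtain ⟨R, r1, r2, r3⟩ := ih (by omega)
      refine ⟨R / 16, by positivity, by linarith, ?_⟩
      have e : ((k + 1 + 1 : ℕ) : ℝ) * γ0 = ((k + 1 : ℕ) : ℝ) * γ0 + γ0 := by push_cast; ring
      rw [e]
      refine PP_step_lt hγ0p hγ h1 r1 r2 (by positivity) ?_ r3
      rw [← e]
      have : ((k + 1 + 1 : ℕ) : ℝ) ≤ M := by exact_mod_cast hk
      nlinarith
  have hM1 : 1 ≤ M := by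
    have : 0 < M := by exact_mod_cast hM0
    omega
  obtain ⟨R, r1, r2, r3⟩ := main (M - 1) (by omega)
  rw [Nat.sub_add_cancel hM1] at r3
  refine ⟨R / 16, by positivity, by linarith, PP_step_gt hγ0p hγ h1 r1 r2 (by positivity) ?_ ?_ r3⟩
  · nlinarith
  · nlinarith

/-- final regularity statement -/
lemma PQ (n : ℕ) {γ : ℝ} (h0 : 0 < γ) (h1 : γ < 1) :
    ∃ R, 0 < R ∧ R ≤ 1 / 2 ∧ PP n γ R 1 ∧ QQ n γ R 1 := by
  obtain ⟨R, r1, r2, r3⟩ := PP_one n h0 h1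
  refine ⟨R / 4, by positivity, by linarith, ?_, QQ_of_PP h0 h1 r1 r2 one_pos le_rfl r3⟩
  obtain ⟨C, hC, hP⟩ := r3
  refine ⟨C, hC, fun ε hε => ?_⟩
  obtain ⟨δ, hδ, hd⟩ := hP ε hε
  refine ⟨δ, hδ, fun u hu t ht y hy x x' hx hx' => hd u hu t ⟨?_, ht.2⟩ y ⟨hy.1, ?_⟩ x x' ?_ ?_⟩ 
  · linarith [ht.1]
  · linarith [hy.2]
  · linarith
  · linarith

lemma rpow_tangent {p A B : ℝ} (h0 : 0 < p) (h2 : p ≤ 2) (hA : 0 < A) (hB : 0 ≤ B) :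
    B ^ (p / 2) ≤ A ^ (p / 2) + p / 2 * A ^ (p / 2 - 1) * (B - A) := by
  have k0 : 0 ≤ B / A := by positivity
  have k1 : (1 + (B / A - 1)) ^ (p / 2) ≤ 1 + p / 2 * (B / A - 1) :=
    rpow_one_add_le_one_add_mul_self (by linarith) (by positivity) (by linarith)
  rw [add_sub_cancel, Real.div_rpow hB hA.le, div_le_iff₀ (by positivity)] at k1
  refine k1.trans (le_of_eq ?_)
  rw [Real.rpow_sub_one hA.ne']
  field_simp

def Phi2 {n : ℕ} (γ p K L N' E0 r : ℝ) (h : En n) (t0 : ℝ) (t : ℝ) (x : Fin 2 → En n)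
    (y : ℝ) : ℝ :=
  E0 + L * ((‖x 1‖ ^ 2 + y ^ 2 + r ^ 2) ^ (p / 2) + K * (y ^ γ - y ^ p) + 2 * K * γ * (t - t0)) +
    N' * ‖x 0 - x 1 - h‖ ^ 2

lemma phi2_cont {n : ℕ} {γ p K L N' E0 r : ℝ} {h : En n} {t0 : ℝ} (h0 : 0 < γ) (hp : 0 < p) :
    Continuous (fun P : ℝ × (Fin 2 → En n) × ℝ =>
      Phi2 γ p K L N' E0 r h t0 P.1 P.2.1 P.2.2) := by
  unfold Phi2
  have a1 : Continuous fun P : ℝ × (Fin 2 → En n) × ℝ => (‖P.2.1 1‖ ^ 2 + P.2.2 ^ 2 + r ^ 2) ^ (p / 2) :=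
    Continuous.rpow_const (by fun_prop) fun _ => Or.inr (by positivity)
  have hy : Continuous fun P : ℝ × (Fin 2 → En n) × ℝ => P.2.2 := by fun_prop
  have a2 : Continuous fun P : ℝ × (Fin 2 → En n) × ℝ => P.2.2 ^ γ :=
    hy.rpow_const fun _ => Or.inr h0.le
  have a3 : Continuous fun P : ℝ × (Fin 2 → En n) × ℝ => P.2.2 ^ p :=
    hy.rpow_const fun _ => Or.inr hp.le
  fun_prop

lemma phi2_int {n : ℕ} {γ p K L N' E0 r : ℝ} {h : En n} {t0 : ℝ} (h0 : 0 < γ) (h1 : γ < 1)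
    (hp : γ < p) (hp2 : p ≤ 2) (hL : 0 < L) (hr : 0 < r) (hK : n + 2 < K * (p - γ))
    (t : ℝ) {x : Fin 2 → En n} {y : ℝ} (hy : 0 < y) :
    IntSuper γ (Phi2 γ p K L N' E0 r h t0 t) x y := by
  have hp0 : 0 < p := by linarith
  set A := ‖x 1‖ ^ 2 + y ^ 2 + r ^ 2 with hA
  have hA0 : 0 < A := by positivity
  set B := p / 2 * A ^ (p / 2 - 1) with hB
  have hAy : A ^ (p / 2 - 1) ≤ y ^ (p - 2) := by
    have h3 : y ^ 2 ≤ A := by rw [hA]; nlinarith [sq_nonneg ‖x 1‖, sq_nonneg r]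
    have := Real.rpow_le_rpow_of_nonpos (z := p / 2 - 1) (by positivity) h3 (by linarith)
    refine this.trans (le_of_eq ?_)
    rw [← Real.rpow_two, ← Real.rpow_mul hy.le]
    congr 1; ring
  let Ψ : (Fin 2 → En n) → ℝ → ℝ := fun X z =>
    E0 + L * (A ^ (p / 2) + B * ((‖X 1‖ ^ 2 + z ^ 2 + r ^ 2) - A) + K * (z ^ γ - z ^ p) +
      2 * K * γ * (t - t0)) + N' * ‖X 0 - X 1 - h‖ ^ 2
  refine ⟨Ψ, fun _ => .refl ℝ _, fun _ => L * (B * 2),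
    L * (B * (2 * y) + K * (γ * y ^ (γ - 1) - p * y ^ (p - 1))),
    L * (B * 2 + K * (γ * ((γ - 1) * y ^ (γ - 2)) - p * ((p - 1) * y ^ (p - 2)))), ?_, ?_, ?_, ?_, ?_, ?_⟩
  · simp only [Ψ, Phi2, ← hA]; ring
  · refine Eventually.of_forall fun z => ?_
    simp only [Ψ, Phi2]
    have := rpow_tangent (B := ‖z.1 1‖ ^ 2 + z.2 ^ 2 + r ^ 2) hp0 hp2 hA0 (by positivity)
    have := mul_le_mul_of_nonneg_left this hL.le
    rw [← hB] at this
    linarith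
  · intro k
    have s2 : SD (fun τ : ℝ => ‖x 1 + τ • ek k‖ ^ 2) 0 2 := by
      have := SD.norm_sq_line (x 1) (ek k)
      rw [norm_ek] at this
      simpa using this
    have s3 := ((s2.const_mul B).const_mul L).add (SD.const (E0 + L * (A ^ (p / 2) + B * ((y ^ 2 + r ^ 2) - A) + K * (y ^ γ - y ^ p) +
      2 * K * γ * (t - t0)) + N' * ‖x 0 - x 1 - h‖ ^ 2) 0)
    rw [add_zero] at s3
    refine s3.congr (Eventually.of_forall fun τ => ?_)
    simp only [Ψ, LinearIsometryEquiv.coe_refl, id_eq]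
    rw [add_sub_add_right_eq_sub (x 0) (x 1) (τ • ek k)]
    ring
  · have a1 : HasDerivAt (fun z : ℝ => ‖x 1‖ ^ 2 + z ^ 2 + r ^ 2 - A) (2 * y) y := by
      have := ((((hasDerivAt_id y).pow 2).const_add (‖x 1‖ ^ 2)).add_const (r ^ 2)).sub_const A
      refine this.congr_deriv ?_
      simp
    have a2 := (Real.hasDerivAt_rpow_const (x := y) (p := γ) (Or.inl hy.ne')).sub
      (Real.hasDerivAt_rpow_const (x := y) (p := p) (Or.inl hy.ne'))
    have a3 := ((((((a1.const_mul B).const_add (A ^ (p / 2))).add (a2.const_mul K)).add_const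
      (2 * K * γ * (t - t0))).const_mul L).const_add E0).add_const (N' * ‖x 0 - x 1 - h‖ ^ 2)
    exact a3
  · have a1 : SD (fun z : ℝ => ‖x 1‖ ^ 2 + z ^ 2 + r ^ 2 - A) y 2 := by
      have := SD.quad (‖x 1‖ ^ 2 + r ^ 2 - A) 0 1 y
      rw [mul_one] at this
      refine this.congr (Eventually.of_forall fun z => ?_)
      simp only
      ring
    have a2 := (SD.rpow (γ := γ) hy).sub (SD.rpow (γ := p) hy)
    have a3 := (((((a1.const_mul B).add (a2.const_mul K)).const_mul L)).add (SD.const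
      (E0 + L * (A ^ (p / 2) + 2 * K * γ * (t - t0)) + N' * ‖x 0 - x 1 - h‖ ^ 2) y))
    rw [add_zero] at a3
    refine a3.congr (Eventually.of_forall fun z => ?_)
    simp only [Ψ]
    ring
  · have e1 : y ^ (γ - 1) = y ^ (γ - 2) * y := by
      rw [← Real.rpow_add_one hy.ne']; congr 1; ring
    have e2 : y ^ (p - 1) = y ^ (p - 2) * y := by
      rw [← Real.rpow_add_one hy.ne']; congr 1; ring
    have hyp : 0 < y ^ (p - 2) := Real.rpow_pos_of_pos hy _
    have hT : ∑ _k : Fin n, L * (B * 2) + L * (B * 2 + K * (γ * ((γ - 1) * y ^ (γ - 2)) - p * ((p - 1) * y ^ (p - 2)))) +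
        (1 - γ) / y * (L * (B * (2 * y) + K * (γ * y ^ (γ - 1) - p * y ^ (p - 1)))) =
        L * p * (A ^ (p / 2 - 1) * (n + 2 - γ) - K * (p - γ) * y ^ (p - 2)) := by
      rw [e1, e2, hB]
      simp only [Finset.sum_const, Finset.card_univ, Fintype.card_fin, nsmul_eq_mul]
      field_simp
      ring
    rw [hT]
    apply mul_neg_of_pos_of_neg (by positivity)
    have n0 : (0:ℝ) ≤ n := Nat.cast_nonneg n
    have q1 : A ^ (p / 2 - 1) * (n + 2 - γ) ≤ y ^ (p - 2) * (n + 2 - γ) :=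
      mul_le_mul_of_nonneg_right hAy (by linarith)
    have q2 : y ^ (p - 2) * (n + 2 - γ) < y ^ (p - 2) * (K * (p - γ)) :=
      mul_lt_mul_of_pos_left (by linarith) hyp
    linarith

lemma phi2_base {n : ℕ} {γ p K L N' E0 r δ c1 : ℝ} {h : En n} {t0 : ℝ} (h0 : 0 < γ)
    (h1 : γ < 1) (hp : γ < p) (hp2 : p ≤ 2) (hL : 0 < L) (hr : 0 < r) (hN' : 0 ≤ N')
    (hh : ‖h‖ ≤ 1) (hc1 : |c1| ≤ 1) (hδ0 : 0 ≤ δ)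
    (hδ : δ * (2 + 2 * (L * (2 * r ^ (p - 2)) + 12 * N')) < L * (K * γ))
    (t : ℝ) {x : Fin 2 → En n} (hx : ∀ j, ‖x j‖ < 1) :
    BaseSuper γ δ ![c1, 1] (Phi2 γ p K L N' E0 r h t0) t x := by
  have hp0 : 0 < p := by linarith
  have hrp : 0 < r ^ (p - 2) := Real.rpow_pos_of_pos hr _
  set G := L * (2 * r ^ (p - 2)) + 12 * N' with hG
  have hG0 : 0 ≤ G := by positivity
  refine ⟨L * (2 * K * γ), γ * (L * K), G, ?_, hG0, ?_, ?_, ?_⟩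
  · have a2 : HasDerivAt (fun z : ℝ => 2 * K * γ * (z - t0)) (2 * K * γ) t := by
      have := ((hasDerivAt_id t).sub_const t0).const_mul (2 * K * γ)
      refine this.congr_deriv ?_
      simp
    have a3 := (((a2.const_add ((‖x 1‖ ^ 2 + 0 ^ 2 + r ^ 2) ^ (p / 2) + K * (0 ^ γ - 0 ^ p))).const_mul L).const_add
      E0).add_const (N' * ‖x 0 - x 1 - h‖ ^ 2)
    exact a3.hasDerivWithinAt
  · intro j
    have hev : ∀ᶠ z in 𝓝 (x j), ‖z‖ < 1 := by
      have : ContinuousAt (fun z : En n => ‖z‖) (x j) := by fun_prop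
      exact this.eventually_lt continuousAt_const (hx j)
    filter_upwards [hev] with z hz
    set x' := Function.update x j z with hx'
    have hd : ∀ i, ‖x' i - x i‖ ≤ ‖z - x j‖ := by
      intro i
      by_cases hi : i = j
      · subst hi; simp [hx']
      · simp [hx', Function.update_of_ne hi]
    have hn' : ∀ i, ‖x' i‖ ≤ 1 := by
      intro i
      by_cases hi : i = j
      · subst hi; simp [hx', hz.le]
      · simp [hx', Function.update_of_ne hi, (hx i).le]
    set D := ‖z - x j‖ with hD
    have hD0 : 0 ≤ D := norm_nonneg _
    have b2 : ‖x' 1‖ ^ 2 - ‖x 1‖ ^ 2 ≤ 2 * D := by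
      have := sq_lip (L := 1) (v := x 1) (w := x' 1) (hx 1).le (hn' 1)
      have := hd 1
      linarith
    have b1 : (‖x' 1‖ ^ 2 + 0 ^ 2 + r ^ 2) ^ (p / 2) - (‖x 1‖ ^ 2 + 0 ^ 2 + r ^ 2) ^ (p / 2) ≤
        2 * r ^ (p - 2) * D := by
      have hA0 : 0 < ‖x 1‖ ^ 2 + 0 ^ 2 + r ^ 2 := by positivity
      have tg := rpow_tangent (B := ‖x' 1‖ ^ 2 + 0 ^ 2 + r ^ 2) hp0 hp2 hA0 (by positivity)
      have hle : (‖x 1‖ ^ 2 + 0 ^ 2 + r ^ 2) ^ (p / 2 - 1) ≤ r ^ (p - 2) := by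
        have h3 : r ^ 2 ≤ ‖x 1‖ ^ 2 + 0 ^ 2 + r ^ 2 := by nlinarith [sq_nonneg ‖x 1‖]
        have := Real.rpow_le_rpow_of_nonpos (z := p / 2 - 1) (by positivity) h3 (by linarith)
        refine this.trans (le_of_eq ?_)
        rw [← Real.rpow_two, ← Real.rpow_mul hr.le]
        congr 1; ring
      set B := p / 2 * (‖x 1‖ ^ 2 + 0 ^ 2 + r ^ 2) ^ (p / 2 - 1) with hB
      have hB0 : 0 ≤ B := by positivity
      have hB1 : B ≤ r ^ (p - 2) := by
        calc B ≤ 1 * r ^ (p - 2) := by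
              rw [hB]; exact mul_le_mul (by linarith) hle (by positivity) (by norm_num)
          _ = _ := one_mul _
      have q1 := mul_le_mul_of_nonneg_left b2 hB0
      have q2 : B * (2 * D) ≤ r ^ (p - 2) * (2 * D) := mul_le_mul_of_nonneg_right hB1 (by positivity)
      linarith
    have b4 : ‖x' 0 - x' 1 - h‖ ^ 2 - ‖x 0 - x 1 - h‖ ^ 2 ≤ 12 * D := by
      have l1 : ‖x 0 - x 1 - h‖ ≤ 3 := by
        have := norm_sub_le (x 0 - x 1) h
        have := norm_sub_le (x 0) (x 1)
        linarith [hx 0, hx 1]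
      have l2 : ‖x' 0 - x' 1 - h‖ ≤ 3 := by
        have := norm_sub_le (x' 0 - x' 1) h
        have := norm_sub_le (x' 0) (x' 1)
        linarith [hn' 0, hn' 1]
      have := sq_lip (L := 3) l1 l2
      rw [sub_sub_sub_cancel_right] at this
      have e2 : x' 0 - x' 1 - (x 0 - x 1) = (x' 0 - x 0) - (x' 1 - x 1) := by abel
      rw [e2] at this
      have e3 := norm_sub_le (x' 0 - x 0) (x' 1 - x 1)
      have := hd 0
      have := hd 1
      linarith
    simp only [Phi2]
    rw [hG]
    have c1' := mul_le_mul_of_nonneg_left b1 hL.le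
    have c3' := mul_le_mul_of_nonneg_left b4 hN'
    linarith
  · set A := ‖x 1‖ ^ 2 + r ^ 2 with hA
    have hA0 : 0 < A := by positivity
    have u1 : Tendsto (fun y : ℝ => ((A + y ^ 2) ^ (p / 2) - A ^ (p / 2)) / y ^ γ) (𝓝[>] 0) (𝓝 0) := by
      have t2 := (tend_rpow_aux (γ := γ) (p := 2) (by linarith)).const_mul (p / 2 * A ^ (p / 2 - 1))
      rw [mul_zero] at t2
      refine tendsto_of_tendsto_of_tendsto_of_le_of_le' tendsto_const_nhds t2 ?_ ?_
      · filter_upwards [self_mem_nhdsWithin] with y hy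
        have hy0 : 0 < y := hy
        apply div_nonneg _ (Real.rpow_nonneg hy0.le _)
        rw [sub_nonneg]
        exact Real.rpow_le_rpow hA0.le (by nlinarith) (by positivity)
      · filter_upwards [self_mem_nhdsWithin] with y hy
        have hy0 : 0 < y := hy
        rw [← mul_div_assoc]
        apply div_le_div_of_nonneg_right _ (Real.rpow_nonneg hy0.le _)
        have := rpow_tangent (B := A + y ^ 2) hp0 hp2 hA0 (by positivity)
        rw [Real.rpow_two]
        linarith
    have t3 := ((u1.sub ((tend_rpow_aux hp).const_mul K)).const_mul L).add_const (L * K)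
    have e : L * (0 - K * 0) + L * K = γ * (L * K) / γ := by
      field_simp; ring
    rw [e] at t3
    refine t3.congr' ?_
    filter_upwards [self_mem_nhdsWithin] with y hy
    have hy0 : (0:ℝ) < y := hy
    have : 0 < y ^ γ := Real.rpow_pos_of_pos hy0 _
    simp only [Phi2]
    rw [Real.zero_rpow h0.ne', Real.zero_rpow hp0.ne']
    have e1 : ‖x 1‖ ^ 2 + y ^ 2 + r ^ 2 = A + y ^ 2 := by rw [hA]; ring
    have e2 : ‖x 1‖ ^ 2 + 0 ^ 2 + r ^ 2 = A := by rw [hA]; ring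
    rw [e1, e2]
    field_simp
    ring
  · have e : ∑ j, |(![c1, 1] : Fin 2 → ℝ) j| = |c1| + 1 := by
      simp [Fin.sum_univ_two]
    rw [e]
    have e2 : ((Fintype.card (Fin 2) : ℕ) : ℝ) = 2 := by simp
    rw [e2]
    have : δ * (|c1| + 1 + 2 * G) ≤ δ * (2 + 2 * G) := mul_le_mul_of_nonneg_left (by linarith) hδ0
    linarith

set_option maxHeartbeats 1000000 in
lemma twopt (n : ℕ) {γ p R : ℝ} (h0 : 0 < γ) (h1 : γ < 1) (hp : γ < p) (hp2 : p ≤ 2)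
    (hR0 : 0 < R) (hR : R ≤ 1 / 2) :
    ∃ C : ℝ, 0 < C ∧ ∀ μ r m0 m1 N : ℝ, 1 ≤ μ → 0 < r → 0 < m0 → m0 ≤ m1 → 0 ≤ N → ∃ δ > 0,
      ∀ u : ℝ → En n × ℝ → ℝ, Adm γ δ u → ∀ (c1 E0 m t0 : ℝ) (h : En n), |c1| ≤ 1 → ‖h‖ ≤ R / 4 →
      m0 ≤ m → m ≤ m1 → -1 ≤ t0 →
      (∀ t ∈ Icc t0 0, ∀ y ∈ Icc 0 R, ∀ x1 x2 : En n, ‖x1‖ ≤ R → ‖x2‖ ≤ R →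
        c1 * u t (x1, y) + u t (x2, y) - E0 ≤ m + N * ‖x1 - x2 - h‖ ^ 2) →
      (∀ x1 x2 : En n, ‖x1‖ ≤ R → ‖x2‖ ≤ R → c1 * u t0 (x1, 0) + u t0 (x2, 0) - E0 ≤
        m * μ * (‖x2‖ ^ 2 + r ^ 2) ^ (p / 2) + N * ‖x1 - x2 - h‖ ^ 2) →
      ∀ t ∈ Icc t0 0, ∀ y ∈ Icc 0 R, ∀ x : En n, ‖x‖ ≤ R / 2 →
        c1 * u t (x + h, y) + u t (x, y) - E0 ≤
          C * m * μ * ((‖x‖ ^ 2 + y ^ 2 + r ^ 2) ^ (p / 2) + y ^ γ + (t - t0)) := by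
  have hp0 : 0 < p := by linarith
  have hpg : 0 < p - γ := by linarith
  set K := (n + 3) / (p - γ) with hK
  have hK0 : 0 < K := by positivity
  have hK1 : n + 2 < K * (p - γ) := by rw [hK, div_mul_cancel₀ _ hpg.ne']; linarith
  have hRp : 0 < (R / 2) ^ p := Real.rpow_pos_of_pos (by positivity) p
  set C3 := 1 + 1 / (R / 2) ^ p with hC3
  have hC31 : 1 ≤ C3 := by rw [hC3]; have : 0 < 1 / (R / 2) ^ p := by positivity
                           linarith
  have hC3R : 1 ≤ C3 * (R / 2) ^ p := by
    rw [hC3, add_mul, one_mul, div_mul_cancel₀ _ hRp.ne']; linarith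
  refine ⟨C3 * (1 + K + 2 * K * γ), by positivity, ?_⟩
  intro μ r m0 m1 N hμ hr hm0 hm01 hN
  have hm1 : 0 < m1 := by linarith
  have hrp : 0 < r ^ (p - 2) := Real.rpow_pos_of_pos hr _
  set G1 := m1 * C3 * μ * (2 * r ^ (p - 2)) + 12 * (N + 16 * m1 / R ^ 2) with hG1
  have hG1p : 0 ≤ G1 := by positivity
  set δ := m0 * C3 * μ * (K * γ) / (2 * (2 + 2 * G1)) with hδ
  have hδp : 0 < δ := by positivity
  refine ⟨δ, hδp, ?_⟩
  intro u hu c1 E0 m t0 h hc1 hh hmm0 hmm1 ht0 hA hB t1 ht1 y0 hy0 xa hxa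
  have hm : 0 < m := by linarith
  set L := m * C3 * μ with hLdef
  have hL : 0 < L := by positivity
  set N' := N + 16 * m / R ^ 2 with hN'
  have hN'p : 0 ≤ N' := by positivity
  have hδ2 : δ * (2 + 2 * (L * (2 * r ^ (p - 2)) + 12 * N')) < L * (K * γ) := by
    have : L * (2 * r ^ (p - 2)) + 12 * N' ≤ G1 := by
      rw [hG1, hN', hLdef]; gcongr
    calc _ ≤ δ * (2 + 2 * G1) := by gcongr
      _ = m0 * C3 * μ * (K * γ) / 2 := by rw [hδ]; field_simp
      _ < m0 * C3 * μ * (K * γ) := half_lt_self (by positivity)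
      _ ≤ L * (K * γ) := by rw [hLdef]; gcongr
  have hcomp := comparison (ι := Fin 2) h0 hu ![c1, 1]
    (Phi2 γ p K L N' E0 r h t0) (ta := t0) (tb := 0) (ρ := R) ht0 le_rfl hR0 hR
    (phi2_cont h0 hp0).continuousOn ?_ t1 ![xa + h, xa] y0 ?_
  · have e1 : wf ![c1, 1] u t1 ![xa + h, xa] y0 = c1 * u t1 (xa + h, y0) + u t1 (xa, y0) := by
      simp [wf, Fin.sum_univ_two]
    rw [e1] at hcomp
    simp only [Phi2, Matrix.cons_val, add_sub_cancel_left, sub_self, norm_zero] at hcomp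
    set W := (‖xa‖ ^ 2 + y0 ^ 2 + r ^ 2) ^ (p / 2) with hW
    have w0 : 0 ≤ W := by positivity
    have w1 : 0 ≤ y0 ^ γ := Real.rpow_nonneg hy0.1 _
    have w2 : 0 ≤ y0 ^ p := Real.rpow_nonneg hy0.1 _
    have w3 : 0 ≤ t1 - t0 := by linarith [ht1.1]
    have key : W + K * (y0 ^ γ - y0 ^ p) + 2 * K * γ * (t1 - t0) ≤
        (1 + K + 2 * K * γ) * (W + y0 ^ γ + (t1 - t0)) := by
      have z1 : 0 ≤ K * y0 ^ p := by positivity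
      have z2 : 0 ≤ (K + 2 * K * γ) * W := by positivity
      have z3 : 0 ≤ (1 + 2 * K * γ) * y0 ^ γ := by positivity
      have z4 : 0 ≤ (1 + K) * (t1 - t0) := by positivity
      linarith
    have := mul_le_mul_of_nonneg_left key hL.le
    rw [hLdef] at this hcomp
    linarith
  · intro t x y hK' hpos
    right
    have hyn : 0 ≤ y := hK'.2.2.1
    have a1 := hA t hK'.1 y hK'.2.2 (x 0) (x 1) (hK'.2.1 0) (hK'.2.1 1)
    have ew : wf ![c1, 1] u t x y = c1 * u t (x 0, y) + u t (x 1, y) := by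
      simp [wf, Fin.sum_univ_two]
    rw [ew] at hpos
    simp only [Phi2] at hpos
    set ξ := ‖x 0 - x 1 - h‖ with hξ
    have hξ0 : 0 ≤ ξ := norm_nonneg _
    set A := ‖x 1‖ ^ 2 + y ^ 2 + r ^ 2 with hAdef
    have hA0 : 0 ≤ A := by positivity
    have hAp : 0 ≤ A ^ (p / 2) := by positivity
    have htt : 0 ≤ t - t0 := by linarith [hK'.1.1]
    have hyy : 0 ≤ y ^ γ - y ^ p := by
      rw [sub_nonneg]
      rcases hyn.eq_or_lt with hy | hy
      · rw [← hy, Real.zero_rpow h0.ne', Real.zero_rpow hp0.ne']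
      · exact Real.rpow_le_rpow_of_exponent_ge hy (by linarith [hK'.2.2.2]) hp.le
    have z1 : 0 ≤ L * (K * (y ^ γ - y ^ p)) := by positivity
    have z2 : 0 ≤ L * (2 * K * γ * (t - t0)) := by positivity
    have z3 : 0 ≤ 16 * m / R ^ 2 * ξ ^ 2 := by positivity
    have z4 : 0 ≤ L * A ^ (p / 2) := by positivity
    rw [hN'] at hpos
    have s1 : L * A ^ (p / 2) < m := by linarith
    have s2 : 16 * m / R ^ 2 * ξ ^ 2 < m := by linarith
    have hAR : A < (R / 2) ^ 2 := by
      by_contra hc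
      push Not at hc
      have g1 := Real.rpow_le_rpow (z := p / 2) (by positivity) hc (by positivity)
      have g2 : ((R / 2) ^ 2) ^ (p / 2) = (R / 2) ^ p := by
        rw [← Real.rpow_two, ← Real.rpow_mul (by positivity)]; congr 1; ring
      rw [g2] at g1
      have g3 := mul_le_mul_of_nonneg_left g1 hL.le
      have g4 : m * 1 * 1 ≤ m * (C3 * (R / 2) ^ p) * μ := by gcongr
      rw [hLdef] at g3 s1
      linarith
    have n1 : ‖x 1‖ < R / 2 := by
      apply lt_of_pow_lt_pow_left₀ 2 (by positivity)
      have : 0 ≤ y ^ 2 := by positivity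
      have : 0 ≤ r ^ 2 := by positivity
      linarith
    have ny : y < R / 2 := by
      apply lt_of_pow_lt_pow_left₀ 2 (by positivity)
      have : 0 ≤ ‖x 1‖ ^ 2 := by positivity
      have : 0 ≤ r ^ 2 := by positivity
      linarith
    have nξ : ξ < R / 4 := by
      apply lt_of_pow_lt_pow_left₀ 2 (by positivity)
      have e : 16 * m / R ^ 2 * ξ ^ 2 = m * (16 * ξ ^ 2 / R ^ 2) := by ring
      rw [e] at s2
      have : 16 * ξ ^ 2 / R ^ 2 < 1 := by
        by_contra hc
        push Not at hc
        have := mul_le_mul_of_nonneg_left hc hm.le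
        linarith
      rw [div_lt_one (by positivity)] at this
      linarith
    have n0 : ‖x 0‖ < R := by
      have h2 := norm_add_le (x 0 - x 1 - h) (x 1 + h)
      have h3 := norm_add_le (x 1) h
      have : x 0 - x 1 - h + (x 1 + h) = x 0 := by abel
      rw [this] at h2; linarith
    have nall : ∀ j, ‖x j‖ < R := by
      intro j; fin_cases j
      · exact n0
      · show ‖x 1‖ < R
        linarith
    rcases hyn.eq_or_lt with hy | hy
    · right
      refine ⟨nall, hy.symm, ?_, ?_⟩
      · rcases hK'.1.1.eq_or_lt with h3 | h3
        · exfalso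
          have hb := hB (x 0) (x 1) (hK'.2.1 0) (hK'.2.1 1)
          rw [← hξ] at hb
          rw [← h3, ← hy] at hpos
          have eA : A = ‖x 1‖ ^ 2 + r ^ 2 := by rw [hAdef, ← hy]; ring
          rw [← eA] at hb
          rw [← h3] at z2
          rw [← hy] at z1
          have : m * 1 * μ * A ^ (p / 2) ≤ m * C3 * μ * A ^ (p / 2) := by gcongr
          rw [← hLdef] at this
          linarith
        · exact h3
      · exact phi2_base h0 h1 hp hp2 hL hr hN'p (by linarith) hc1 hδp.le hδ2 t
          fun j => lt_of_lt_of_le (nall j) (by linarith)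
    · left
      exact ⟨nall, hy, by linarith, phi2_int h0 h1 hp hp2 hL hr hK1 t hy⟩
  · refine ⟨ht1, ?_, hy0⟩
    intro j; fin_cases j
    · show ‖xa + h‖ ≤ R
      have := norm_add_le xa h; linarith
    · show ‖xa‖ ≤ R
      linarith

lemma vert {n : ℕ} {γ R : ℝ} (h0 : 0 < γ) (h1 : γ < 1) (hR0 : 0 < R) (hR : R ≤ 1 / 2)
    (hP : PP n γ R 1) : ∃ K : ℝ, 0 < K ∧ ∀ r, 0 < r → r ≤ R → ∃ δ > 0,
      ∀ u : ℝ → En n × ℝ → ℝ, Adm γ δ u → ∀ t ∈ Icc (-R) 0,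
        |u t (0, r) - u t (0, 0)| ≤ K * r ^ γ := by
  obtain ⟨C1, hC1, hP⟩ := hP
  obtain ⟨C, hC, hT⟩ := twopt n (p := 1) h0 h1 h1 (by norm_num) hR0 hR
  refine ⟨C * 2 * (C1 + 1) * 3, by positivity, fun r hr hrR => ?_⟩
  obtain ⟨δ1, hδ1, hP⟩ := hP r hr
  obtain ⟨δ2, hδ2, hT⟩ := hT (C1 + 1) r 2 2 0 (by linarith) hr (by norm_num) le_rfl le_rfl
  refine ⟨min δ1 δ2, lt_min hδ1 hδ2, fun u hu t ht => ?_⟩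
  have key : ∀ u : ℝ → En n × ℝ → ℝ, Adm γ (min δ1 δ2) u →
      u t (0, r) - u t (0, 0) ≤ C * 2 * (C1 + 1) * 3 * r ^ γ := by
    intro u hu
    have hb : ∀ {τ y : ℝ} {x : En n}, τ ∈ Icc t 0 → ‖x‖ ≤ R → y ∈ Icc 0 R → |u τ (x, y)| ≤ 1 :=
      fun hτ hx hy => hu.bd ⟨by linarith [ht.1, hτ.1], hτ.2⟩ (by linarith) ⟨hy.1, by linarith [hy.2]⟩
    have hz : |u t (0, 0)| ≤ 1 := hb ⟨le_rfl, ht.2⟩ (by rw [norm_zero]; exact hR0.le) ⟨le_rfl, hR0.le⟩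
    have := hT u (hu.mono (min_le_right _ _)) 0 (u t (0, 0)) 2 t 0 (by simp) (by rw [norm_zero]; positivity) le_rfl le_rfl
      (by linarith [ht.1]) (fun τ hτ y hy x1 x2 _ hx2 => by
        have := (abs_le.1 (hb hτ hx2 hy)).2
        have := (abs_le.1 hz).1
        linarith) (fun x1 x2 _ hx2 => by
        have hp := (abs_le.1 (hP u (hu.mono (min_le_left _ _)) t ht 0 ⟨le_rfl, hR0.le⟩ x2 0 hx2 (by rw [norm_zero]; exact hR0.le))).2
        rw [sub_zero, Real.rpow_one] at hp
        rw [← Real.sqrt_eq_rpow]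
        have s1 : ‖x2‖ ≤ Real.sqrt (‖x2‖ ^ 2 + r ^ 2) := by
          apply Real.le_sqrt_of_sq_le; nlinarith
        have s2 : r ≤ Real.sqrt (‖x2‖ ^ 2 + r ^ 2) := by
          apply Real.le_sqrt_of_sq_le; nlinarith [sq_nonneg ‖x2‖]
        have := mul_le_mul_of_nonneg_left s1 hC1
        have : 0 ≤ (C1 + 1) * Real.sqrt (‖x2‖ ^ 2 + r ^ 2) := by positivity
        linarith) t ⟨le_rfl, ht.2⟩ r ⟨hr.le, hrR⟩ 0 (by rw [norm_zero]; positivity)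
    have e : ((‖(0 : En n)‖ ^ 2 + r ^ 2 + r ^ 2) ^ ((1:ℝ) / 2) + r ^ γ + (t - t)) ≤ 3 * r ^ γ := by
      have g1 : r ≤ r ^ γ := by
        have := Real.rpow_le_rpow_of_exponent_ge hr (by linarith : r ≤ 1) h1.le
        rwa [Real.rpow_one] at this
      have g2 : (‖(0 : En n)‖ ^ 2 + r ^ 2 + r ^ 2) ^ ((1:ℝ) / 2) ≤ 2 * r := by
        rw [← Real.sqrt_eq_rpow, norm_zero]
        apply Real.sqrt_le_iff.2
        constructor
        · positivity
        · nlinarith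
      linarith
    have := mul_le_mul_of_nonneg_left e (show 0 ≤ C * 2 * (C1 + 1) by positivity)
    linarith
  rw [abs_le]
  have k1 := key u hu
  have k2 := key _ hu.neg
  constructor <;> linarith

set_option maxHeartbeats 2000000 in
lemma horiz {n : ℕ} {γ R η : ℝ} (h0 : 0 < γ) (h1 : γ < 1) (hR0 : 0 < R) (hR : R ≤ 1 / 2)
    (hP : PP n γ R 1) (hQ : QQ n γ R 1) (hη : 0 < η) (hη1 : η ≤ 1) :
    ∃ C : ℝ, 0 < C ∧ ∀ r, 0 < r → r ≤ R / 8 → r ^ γ ≤ R → ∃ δ > 0,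
      ∀ u : ℝ → En n × ℝ → ℝ, Adm γ δ u → ∀ t ∈ Icc (-(r ^ γ)) 0, ∀ y ∈ Icc 0 r, ∀ h : En n, ‖h‖ ≤ r →
        |(u t (0, y) - u t (h, y)) - (u (-(r ^ γ)) (0, 0) - u (-(r ^ γ)) (h, 0))| ≤
          C * r ^ (1 + γ - η) := by
  obtain ⟨CP, hCP, hP⟩ := hP
  obtain ⟨CQ, hCQ, hQ⟩ := hQ
  obtain ⟨C, hC, hT⟩ := twopt n (p := γ + η) (R := R / 2) h0 h1 (by linarith) (by linarith)
    (by positivity) (by linarith)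
  set C0 := 2 * CP + CQ + 1 with hC0
  have hC0p : 1 ≤ C0 := by linarith
  refine ⟨C * C0 * 10, by positivity, fun r hr hr8 hrR => ?_⟩
  have hrg : 0 < r ^ γ := Real.rpow_pos_of_pos hr _
  have hre : 0 < r ^ (-η) := Real.rpow_pos_of_pos hr _
  have hrg1 : r ^ γ ≤ 1 := by linarith
  set ε := r * r ^ γ / 3 with hε
  have hεp : 0 < ε := by positivity
  have hεr : 3 * ε ≤ r := by
    have : r * r ^ γ ≤ r * 1 := by gcongr
    rw [hε]; linarith
  obtain ⟨N, hN, hI⟩ := interp hCP one_pos le_rfl hεp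
  obtain ⟨δ1, hδ1, hP⟩ := hP ε hεp
  obtain ⟨δ2, hδ2, hQ⟩ := hQ ε hεp
  have hμ : 1 ≤ r ^ (-η) := Real.one_le_rpow_of_pos_of_le_one_of_nonpos hr (by linarith) (by linarith)
  obtain ⟨δ3, hδ3, hT⟩ := hT (r ^ (-η)) r (C0 * r) (C0 * (r + r)) N hμ hr
    (by positivity) (by gcongr; linarith) hN
  set δ := min δ1 (min δ2 δ3) with hδ
  have d1 : δ ≤ δ1 := min_le_left _ _
  have d2 : δ ≤ δ2 := (min_le_right _ _).trans (min_le_left _ _)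
  have d3 : δ ≤ δ3 := (min_le_right _ _).trans (min_le_right _ _)
  refine ⟨δ, lt_min hδ1 (lt_min hδ2 hδ3), fun u hu t ht y hy h hh => ?_⟩
  set t0 := -(r ^ γ) with ht0
  have key : ∀ u : ℝ → En n × ℝ → ℝ, Adm γ δ u →
      (u t (0, y) - u t (h, y)) - (u t0 (0, 0) - u t0 (h, 0)) ≤ C * C0 * 10 * r ^ (1 + γ - η) := by
    intro u hu
    have hPu : ∀ τ ∈ Icc t0 0, ∀ y ∈ Icc 0 (R / 2), ∀ x x' : En n, ‖x‖ ≤ R → ‖x'‖ ≤ R →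
        u τ (x, y) - u τ (x', y) ≤ CP * ‖x - x'‖ + ε := by
      intro τ hτ y hy x x' hx hx'
      have := (abs_le.1 (hP u (hu.mono d1) τ ⟨by linarith [hτ.1], hτ.2⟩ y ⟨hy.1, by linarith [hy.2]⟩ x x' hx hx')).2
      rwa [Real.rpow_one] at this
    have z0 : (0:ℝ) ∈ Icc 0 (R / 2) := ⟨le_rfl, by positivity⟩
    have tt0 : t0 ∈ Icc t0 0 := ⟨le_rfl, by linarith⟩
    have nz : ‖(0 : En n)‖ ≤ R := by rw [norm_zero]; exact hR0.le
    have nh : ‖h‖ ≤ R := by linarith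
    have hE := hPu t0 tt0 0 z0 h 0 nh nz
    rw [sub_zero] at hE
    have hI' : ∀ v : En n, CP * ‖v‖ ≤ ε + N * ‖v‖ ^ 2 := fun v => by
      have := hI ‖v‖ (norm_nonneg _)
      rwa [Real.rpow_one] at this
    have hmm : C0 * (‖h‖ + r) ≤ C0 * (r + r) := by gcongr
    have hh0 := norm_nonneg h
    have res := hT u (hu.mono d3) (-1) (u t0 (0, 0) - u t0 (h, 0)) (C0 * (‖h‖ + r)) t0 h (by simp)
      (by linarith) (by gcongr; linarith) hmm (by linarith)
      (fun τ hτ y hy x1 x2 hx1 hx2 => by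
        have p1 := hPu τ hτ y hy x2 x1 (by linarith) (by linarith)
        have p2 : ‖x2 - x1‖ ≤ ‖x1 - x2 - h‖ + ‖h‖ := by
          have := norm_add_le (x1 - x2 - h) h
          rw [sub_add_cancel, norm_sub_rev] at this
          exact this
        have p3 := mul_le_mul_of_nonneg_left p2 hCP
        have p4 := hI' (x1 - x2 - h)
        have p5 : (2 * CP) * ‖h‖ + 1 * r ≤ C0 * ‖h‖ + C0 * r := by
          gcongr; linarith
        linarith)
      (fun x1 x2 hx1 hx2 => by
        have nxh : ‖x2 + h‖ ≤ R := by
          have := norm_add_le x2 h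
          linarith
        have p1 := hPu t0 tt0 0 z0 (x2 + h) x1 nxh (by linarith)
        have p2 : ‖x2 + h - x1‖ = ‖x1 - x2 - h‖ := by
          rw [← norm_neg]; congr 1; abel
        rw [p2] at p1
        have p4 := hI' (x1 - x2 - h)
        have p6 := (abs_le.1 (hQ u (hu.mono d2) t0 ⟨by linarith, by linarith⟩ 0 ⟨le_rfl, hR0.le⟩ x2 0 h
          (by linarith) nz nh)).2
        rw [sub_zero, zero_add, Real.rpow_one] at p6
        set S := ‖x2‖ ^ 2 + r ^ 2 with hS
        have hS0 : 0 < S := by positivity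
        have q0 : S ^ ((γ + η) / 2) = S ^ (γ / 2) * S ^ (η / 2) := by
          rw [← Real.rpow_add hS0]; congr 1; ring
        have sq_rp : ∀ (z c : ℝ), 0 ≤ z → z ^ 2 ≤ S → 0 < c → z ^ c ≤ S ^ (c / 2) := by
          intro z c hz hzS hc
          have := Real.rpow_le_rpow (z := c / 2) (by positivity) hzS (by positivity)
          refine le_trans (le_of_eq ?_) this
          rw [← Real.rpow_two, ← Real.rpow_mul hz]; congr 1; ring
        have q1 : ‖x2‖ ^ γ ≤ S ^ (γ / 2) := sq_rp _ _ (norm_nonneg _) (by rw [hS]; nlinarith) h0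
        have q2 : r ^ γ ≤ S ^ (γ / 2) := sq_rp _ _ hr.le (by rw [hS]; nlinarith [sq_nonneg ‖x2‖]) h0
        have q3 : r ^ η ≤ S ^ (η / 2) := sq_rp _ _ hr.le (by rw [hS]; nlinarith [sq_nonneg ‖x2‖]) hη
        have q4 : S ^ (γ / 2) ≤ r ^ (-η) * S ^ ((γ + η) / 2) := by
          rw [q0, Real.rpow_neg hr.le]
          have hrη : 0 < r ^ η := Real.rpow_pos_of_pos hr _
          have : 0 ≤ S ^ (γ / 2) := by positivity
          rw [← div_eq_inv_mul, le_div_iff₀ hrη]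
          exact mul_le_mul_of_nonneg_left q3 this
        have q5 : CQ * ‖h‖ * ‖x2‖ ^ γ + r * r ^ γ ≤ C0 * (‖h‖ + r) * (r ^ (-η) * S ^ ((γ + η) / 2)) := by
          have g1 : CQ * ‖h‖ * ‖x2‖ ^ γ ≤ C0 * ‖h‖ * (r ^ (-η) * S ^ ((γ + η) / 2)) := by
            have : CQ ≤ C0 := by linarith
            have := q1.trans q4
            gcongr
          have g2 : r * r ^ γ ≤ C0 * r * (r ^ (-η) * S ^ ((γ + η) / 2)) := by
            have g3 := q2.trans q4
            have : 1 * r * r ^ γ ≤ C0 * r * (r ^ (-η) * S ^ ((γ + η) / 2)) := by gcongr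
            linarith
          linarith
        have q6 : 3 * ε = r * r ^ γ := by rw [hε]; ring
        linarith)
      t ht y ⟨hy.1, by linarith [hy.2]⟩ 0 (by rw [norm_zero]; positivity)
    rw [zero_add, norm_zero] at res
    have hrp : r ^ (γ + η) ≤ r ^ γ :=
      Real.rpow_le_rpow_of_exponent_ge hr (by linarith) (by linarith)
    have f1 : (0 ^ 2 + y ^ 2 + r ^ 2) ^ ((γ + η) / 2) ≤ 2 * r ^ γ := by
      have : 0 ^ 2 + y ^ 2 + r ^ 2 ≤ 2 * r ^ 2 := by nlinarith [hy.1, hy.2]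
      have := Real.rpow_le_rpow (z := (γ + η) / 2) (by positivity) this (by positivity)
      refine this.trans ?_
      rw [Real.mul_rpow (by norm_num) (by positivity)]
      have e1 : (r ^ 2) ^ ((γ + η) / 2) = r ^ (γ + η) := by
        rw [← Real.rpow_two, ← Real.rpow_mul hr.le]; congr 1; ring
      have e2 : (2:ℝ) ^ ((γ + η) / 2) ≤ 2 := by
        have := Real.rpow_le_rpow_of_exponent_le (x := 2) (by norm_num) (show (γ + η) / 2 ≤ 1 by linarith)
        rwa [Real.rpow_one] at this
      rw [e1]
      gcongr
    have f2 : y ^ γ ≤ r ^ γ := Real.rpow_le_rpow hy.1 hy.2 h0.le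
    have f3 : t - t0 ≤ r ^ γ := by linarith [ht.2]
    have f4 : (0 ^ 2 + y ^ 2 + r ^ 2) ^ ((γ + η) / 2) + y ^ γ + (t - t0) ≤ 5 * r ^ γ := by linarith
    have f5 : C * (C0 * (‖h‖ + r)) * r ^ (-η) * ((0 ^ 2 + y ^ 2 + r ^ 2) ^ ((γ + η) / 2) + y ^ γ + (t - t0)) ≤
        C * (C0 * (r + r)) * r ^ (-η) * (5 * r ^ γ) := by
      apply mul_le_mul _ f4 _ (by positivity)
      · gcongr
      · have : 0 ≤ y ^ γ := Real.rpow_nonneg hy.1 _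
        have : 0 ≤ t - t0 := by linarith [ht.1]
        positivity
    have f6 : r ^ (1 + γ - η) = r * r ^ γ * r ^ (-η) := by
      rw [sub_eq_add_neg, Real.rpow_add hr, Real.rpow_add hr, Real.rpow_one]
    rw [f6]
    linarith
  rw [abs_le]
  have k1 := key u hu
  have k2 := key _ hu.neg
  constructor <;> linarith

lemma hyers {f : ℝ → ℝ} {r e S0 : ℝ} (hr : 0 < r) (hS : ∀ τ ∈ Icc 0 r, |f τ| ≤ S0)
    (hf : ∀ τ σ, |τ| ≤ r → |σ| ≤ r → |f (τ + σ) - f τ - f σ| ≤ e) :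
    ∀ τ, |τ| ≤ r → |f τ - τ * (f r / r)| ≤ 5 * e := by
  set E : ℝ → ℝ := fun τ => f τ - τ * (f r / r) with hE
  have hEadd : ∀ τ σ, |τ| ≤ r → |σ| ≤ r → |E (τ + σ) - E τ - E σ| ≤ e := by
    intro τ σ h1 h2
    have : E (τ + σ) - E τ - E σ = f (τ + σ) - f τ - f σ := by simp only [hE]; ring
    rw [this]; exact hf τ σ h1 h2
  have hEr : E r = 0 := by simp only [hE]; field_simp; ring
  have hE0 : ∀ τ ∈ Icc 0 r, |E τ| ≤ S0 + |f r| := by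
    intro τ hτ
    have h1 : |τ * (f r / r)| ≤ |f r| := by
      rw [abs_mul, abs_div, abs_of_pos hr, abs_of_nonneg hτ.1, ← mul_div_assoc, div_le_iff₀ hr, mul_comm]
      exact mul_le_mul_of_nonneg_left hτ.2 (abs_nonneg _)
    have := abs_sub (f τ) (τ * (f r / r))
    linarith [hS τ hτ]
  have step : ∀ S, (∀ τ ∈ Icc 0 r, |E τ| ≤ S) → ∀ τ ∈ Icc 0 r, |E τ| ≤ S / 2 + 3 / 2 * e := by
    intro S hS'
    have half : ∀ τ ∈ Icc 0 (r / 2), |E τ| ≤ (S + e) / 2 := by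
      intro τ hτ
      have a1 : |τ| ≤ r := by rw [abs_of_nonneg hτ.1]; linarith [hτ.2]
      have a2 := abs_le.1 (hEadd τ τ a1 a1)
      have a3 := abs_le.1 (hS' (τ + τ) ⟨by linarith [hτ.1], by linarith [hτ.2]⟩)
      rw [abs_le]
      constructor <;> linarith
    intro τ hτ
    have e0 : 0 ≤ e := (abs_nonneg _).trans (hEadd 0 0 (by simpa using hr.le) (by simpa using hr.le))
    rcases le_total τ (r / 2) with h | h
    · linarith [half τ ⟨hτ.1, h⟩]
    · have a1 : |τ| ≤ r := by rw [abs_of_nonneg hτ.1]; exact hτ.2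
      have a2 : |r - τ| ≤ r := by rw [abs_of_nonneg (by linarith [hτ.2])]; linarith [hτ.1]
      have a3 := abs_le.1 (hEadd τ (r - τ) a1 a2)
      rw [add_sub_cancel, hEr] at a3
      have a4 := abs_le.1 (half (r - τ) ⟨by linarith [hτ.2], by linarith⟩)
      rw [abs_le]
      constructor <;> linarith
  have iter : ∀ k : ℕ, ∀ τ ∈ Icc 0 r, |E τ| ≤ (S0 + |f r|) * (1 / 2) ^ k + 3 * e := by
    intro k
    have e0 : 0 ≤ e := (abs_nonneg _).trans (hEadd 0 0 (by simpa using hr.le) (by simpa using hr.le))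
    induction k with
    | zero => intro τ hτ; simp only [pow_zero, mul_one]; linarith [hE0 τ hτ]
    | succ k ih =>
      intro τ hτ
      have := step _ ih τ hτ
      rw [pow_succ]
      linarith
  have pos : ∀ τ ∈ Icc 0 r, |E τ| ≤ 3 * e := by
    intro τ hτ
    have lim : Tendsto (fun k : ℕ => (S0 + |f r|) * (1 / 2 : ℝ) ^ k + 3 * e) atTop (𝓝 ((S0 + |f r|) * 0 + 3 * e)) :=
      ((tendsto_pow_atTop_nhds_zero_of_lt_one (by norm_num) (by norm_num)).const_mul _).add_const _
    rw [mul_zero, zero_add] at lim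
    exact ge_of_tendsto' lim fun k => iter k τ hτ
  intro τ hτ
  change |E τ| ≤ 5 * e
  have e0 : 0 ≤ e := (abs_nonneg _).trans (hEadd 0 0 (by simpa using hr.le) (by simpa using hr.le))
  rcases le_total 0 τ with h | h
  · have := pos τ ⟨h, (le_abs_self τ).trans hτ⟩
    linarith
  · have a1 := abs_le.1 (pos (-τ) ⟨by linarith, (neg_le_abs τ).trans hτ⟩)
    have a2 := abs_le.1 (hEadd τ (-τ) hτ (by rwa [abs_neg]))
    have a3 := abs_le.1 (hEadd 0 0 (by simpa using hr.le) (by simpa using hr.le))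
    rw [add_neg_cancel] at a2
    rw [add_zero] at a3
    rw [abs_le]
    constructor <;> linarith

lemma affine {n : ℕ} {g : En n → ℝ} {r e S0 : ℝ} (hr : 0 < r) (hg0 : g 0 = 0)
    (hS : ∀ x, ‖x‖ ≤ r → |g x| ≤ S0)
    (hg : ∀ x h : En n, ‖x‖ ≤ r → ‖h‖ ≤ r → |g (x + h) - g x - g h| ≤ e) :
    ∃ A : En n, ‖A‖ ≤ n * (S0 / r) ∧ ∀ x, ‖x‖ ≤ r → |g x - ⟪A, x⟫| ≤ 6 * n * e := by
  have nsm : ∀ (τ : ℝ) (i : Fin n), ‖τ • (ek i : En n)‖ = |τ| := fun τ i => by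
    rw [norm_smul, norm_ek, mul_one, Real.norm_eq_abs]
  set A : En n := ∑ i, (g (r • ek i) / r) • (ek i : En n) with hA
  have hAx : ∀ x : En n, ⟪A, x⟫ = ∑ i, x i * (g (r • ek i) / r) := by
    intro x
    rw [hA, sum_inner]
    apply Finset.sum_congr rfl
    intro i _
    rw [real_inner_smul_left, ek, EuclideanSpace.inner_single_left]
    simp [mul_comm]
  refine ⟨A, ?_, ?_⟩
  · calc ‖A‖ ≤ ∑ i : Fin n, ‖(g (r • ek i) / r) • (ek i : En n)‖ := norm_sum_le _ _
      _ ≤ ∑ i : Fin n, S0 / r := by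
        apply Finset.sum_le_sum
        intro i _
        rw [nsm, abs_div, abs_of_pos hr]
        apply div_le_div_of_nonneg_right _ hr.le
        apply hS
        rw [nsm, abs_of_pos hr]
      _ = n * (S0 / r) := by simp
  · intro x hx
    have hxi : ∀ i, |x i| ≤ r := fun i => by
      have := EuclideanSpace.norm_eq x
      have h2 := PiLp.norm_apply_le x i
      rw [Real.norm_eq_abs] at h2
      linarith
    have h1 : ∀ i, |g (x i • ek i) - x i * (g (r • ek i) / r)| ≤ 5 * e := by
      intro i
      refine hyers (f := fun τ => g (τ • ek i)) hr (S0 := S0) (fun τ hτ => hS _ ?_) ?_ _ (hxi i)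
      · rw [nsm, abs_of_nonneg hτ.1]; exact hτ.2
      · intro τ σ hτ hσ
        rw [add_smul]
        exact hg _ _ (by rwa [nsm]) (by rwa [nsm])
    have hps : ∀ s : Finset (Fin n), ‖∑ i ∈ s, x i • (ek i : En n)‖ ≤ r := by
      intro s
      refine le_trans ?_ hx
      rw [EuclideanSpace.norm_eq, EuclideanSpace.norm_eq]
      apply Real.sqrt_le_sqrt
      apply Finset.sum_le_sum
      intro j _
      have : (∑ i ∈ s, x i • (ek i : En n)) j = if j ∈ s then x j else 0 := by
        simp [ek, Finset.sum_apply, Pi.single_apply]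
      rw [this]
      split_ifs
      · exact le_rfl
      · rw [norm_zero]; have := sq_nonneg ‖x j‖; linarith
    have h2 : ∀ s : Finset (Fin n), |g (∑ i ∈ s, x i • (ek i : En n)) - ∑ i ∈ s, g (x i • ek i)| ≤ s.card * e := by
      intro s
      induction s using Finset.induction_on with
      | empty => simp [hg0]
      | insert i s hi ih =>
        rw [Finset.sum_insert hi, Finset.sum_insert hi, Finset.card_insert_of_notMem hi]
        have a1 := abs_le.1 (hg (x i • ek i) (∑ i ∈ s, x i • (ek i : En n)) (by rw [nsm]; exact hxi i) (hps s))
        have a2 := abs_le.1 ih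
        push_cast
        rw [abs_le]
        constructor <;> linarith
    have h3 := h2 Finset.univ
    have hxs : ∑ i, x i • (ek i : En n) = x := by
      ext j
      simp [ek, Finset.sum_apply, Pi.single_apply]
    rw [hxs] at h3
    have h4 : |∑ i, g (x i • ek i) - ∑ i, x i * (g (r • ek i) / r)| ≤ n * (5 * e) := by
      rw [← Finset.sum_sub_distrib]
      refine (Finset.abs_sum_le_sum_abs _ _).trans ?_
      refine (Finset.sum_le_sum fun i _ => h1 i).trans ?_
      simp
    rw [hAx]
    simp only [Finset.card_univ, Fintype.card_fin] at h3
    have a1 := abs_le.1 h3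
    have a2 := abs_le.1 h4
    rw [abs_le]
    constructor <;> linarith

def Phi1 {n : ℕ} (γ a2 a3 a4 a5 a6 : ℝ) (A : En n) (D H : ℝ → ℝ) (t0 : ℝ) (t : ℝ)
    (x : Fin 1 → En n) (y : ℝ) : ℝ :=
  ⟪A, x 0⟫ + D t + H t * y ^ γ / γ + a2 * ‖x 0‖ ^ 2 - a3 * y ^ 2 + a4 * y ^ γ + a5 * (t - t0) + a6

lemma phi1_cont {n : ℕ} {γ a2 a3 a4 a5 a6 : ℝ} {A : En n} {D H : ℝ → ℝ} {t0 : ℝ} (h0 : 0 < γ)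
    (hD : Continuous D) (hH : Continuous H) :
    Continuous (fun P : ℝ × (Fin 1 → En n) × ℝ =>
      Phi1 γ a2 a3 a4 a5 a6 A D H t0 P.1 P.2.1 P.2.2) := by
  unfold Phi1
  have hy : Continuous fun P : ℝ × (Fin 1 → En n) × ℝ => P.2.2 := by fun_prop
  have a2 : Continuous fun P : ℝ × (Fin 1 → En n) × ℝ => P.2.2 ^ γ :=
    hy.rpow_const fun _ => Or.inr h0.le
  have a3 : Continuous fun P : ℝ × (Fin 1 → En n) × ℝ => ⟪A, P.2.1 0⟫ :=
    continuous_const.inner (by fun_prop)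
  fun_prop

lemma phi1_int {n : ℕ} {γ a2 a3 a4 a5 a6 : ℝ} {A : En n} {D H : ℝ → ℝ} {t0 : ℝ} (h0 : 0 < γ)
    (h : n * (2 * a2) < a3 * (4 - 2 * γ))
    (t : ℝ) {x : Fin 1 → En n} {y : ℝ} (hy : 0 < y) :
    IntSuper γ (Phi1 γ a2 a3 a4 a5 a6 A D H t0 t) x y := by
  refine ⟨Phi1 γ a2 a3 a4 a5 a6 A D H t0 t, fun _ => .refl ℝ _, fun _ => a2 * 2,
    (H t / γ + a4) * (γ * y ^ (γ - 1)) - a3 * (2 * y),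
    (H t / γ + a4) * (γ * ((γ - 1) * y ^ (γ - 2))) - a3 * 2, rfl, Eventually.of_forall fun z => le_rfl,
    ?_, ?_, ?_, ?_⟩
  · intro k
    have s2 : SD (fun τ : ℝ => ‖x 0 + τ • ek k‖ ^ 2) 0 2 := by
      have := SD.norm_sq_line (x 0) (ek k)
      rw [norm_ek] at this
      simpa using this
    have s3 := (s2.const_mul a2).add (SD.quad (⟪A, x 0⟫ + D t + H t * y ^ γ / γ - a3 * y ^ 2 + a4 * y ^ γ +
      a5 * (t - t0) + a6) ⟪A, ek k⟫ 0 0)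
    rw [mul_zero, add_zero] at s3
    refine s3.congr (Eventually.of_forall fun τ => ?_)
    simp only [Phi1, LinearIsometryEquiv.coe_refl, id_eq]
    rw [inner_add_right, real_inner_smul_right]
    ring
  · have b1 := (Real.hasDerivAt_rpow_const (x := y) (p := γ) (Or.inl hy.ne')).const_mul (H t / γ + a4)
    have b2 : HasDerivAt (fun z : ℝ => a3 * z ^ 2) (a3 * (2 * y)) y := by
      have := ((hasDerivAt_id y).pow 2).const_mul a3
      refine this.congr_deriv ?_
      simp
    have b3 := (b1.sub b2).add_const (⟪A, x 0⟫ + D t + a2 * ‖x 0‖ ^ 2 + a5 * (t - t0) + a6)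
    refine b3.congr_of_eventuallyEq (Eventually.of_forall fun z => ?_)
    simp only [Phi1, Pi.sub_apply]
    ring
  · have b1 := (SD.rpow (γ := γ) hy).const_mul (H t / γ + a4)
    have b2 := SD.quad (⟪A, x 0⟫ + D t + a2 * ‖x 0‖ ^ 2 + a5 * (t - t0) + a6) 0 (-a3) y
    have b3 := b1.add b2
    have e : (H t / γ + a4) * (γ * ((γ - 1) * y ^ (γ - 2))) + 2 * -a3 =
      (H t / γ + a4) * (γ * ((γ - 1) * y ^ (γ - 2))) - a3 * 2 := by ring
    rw [e] at b3
    refine b3.congr (Eventually.of_forall fun z => ?_)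
    simp only [Phi1]
    ring
  · have e1 : y ^ (γ - 1) = y ^ (γ - 2) * y := by
      rw [← Real.rpow_add_one hy.ne']; congr 1; ring
    have hT : ∑ _k : Fin n, a2 * 2 + ((H t / γ + a4) * (γ * ((γ - 1) * y ^ (γ - 2))) - a3 * 2) +
        (1 - γ) / y * ((H t / γ + a4) * (γ * y ^ (γ - 1)) - a3 * (2 * y)) =
        n * (2 * a2) - a3 * (4 - 2 * γ) := by
      rw [e1]
      simp only [Finset.sum_const, Finset.card_univ, Fintype.card_fin, nsmul_eq_mul]
      field_simp
      ring
    rw [hT]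
    linarith

lemma phi1_base {n : ℕ} {γ a2 a3 a4 a5 a6 δ : ℝ} {A : En n} {D H : ℝ → ℝ} {t0 : ℝ} (h0 : 0 < γ)
    (h1 : γ < 1) (hD : ∀ t, HasDerivAt D (H t) t) (ha2 : 0 ≤ a2)
    (hδ : γ * a4 + δ * (1 + (‖A‖ + 2 * a2)) < a5)
    (t : ℝ) {x : Fin 1 → En n} (hx : ∀ j, ‖x j‖ < 1) :
    BaseSuper γ δ ![1] (Phi1 γ a2 a3 a4 a5 a6 A D H t0) t x := by
  refine ⟨H t + a5, H t + γ * a4, ‖A‖ + 2 * a2, ?_, by positivity, ?_, ?_, ?_⟩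
  · have b1 := ((hD t).add (((hasDerivAt_id t).sub_const t0).const_mul a5)).add_const
      (⟪A, x 0⟫ + a2 * ‖x 0‖ ^ 2 + a6)
    have b2 : HasDerivAt (fun τ => Phi1 γ a2 a3 a4 a5 a6 A D H t0 τ x 0) (H t + a5) t := by
      refine (b1.congr_of_eventuallyEq (Eventually.of_forall fun z => ?_)).congr_deriv (by ring)
      simp only [Phi1, Pi.add_apply, id_eq]
      rw [Real.zero_rpow h0.ne']
      ring
    exact b2.hasDerivWithinAt
  · intro j
    have hj : j = 0 := Subsingleton.elim _ _
    subst hj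
    have hev : ∀ᶠ z in 𝓝 (x 0), ‖z‖ < 1 := by
      have : ContinuousAt (fun z : En n => ‖z‖) (x 0) := by fun_prop
      exact this.eventually_lt continuousAt_const (hx 0)
    filter_upwards [hev] with z hz
    simp only [Phi1, Function.update_self]
    have b2 := mul_le_mul_of_nonneg_left (sq_lip (L := 1) (v := x 0) (w := z) (hx 0).le hz.le) ha2
    have b3 : ⟪A, z⟫ - ⟪A, x 0⟫ ≤ ‖A‖ * ‖z - x 0‖ := by
      rw [← inner_sub_right]; exact real_inner_le_norm _ _
    linarith
  · have t3 := ((tend_rpow_aux (γ := γ) (p := 2) (by linarith)).const_mul (-a3)).add_const (H t / γ + a4)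
    have e : -a3 * 0 + (H t / γ + a4) = (H t + γ * a4) / γ := by
      field_simp; ring
    rw [e] at t3
    refine t3.congr' ?_
    filter_upwards [self_mem_nhdsWithin] with y hy
    have hy0 : (0:ℝ) < y := hy
    have : 0 < y ^ γ := Real.rpow_pos_of_pos hy0 _
    simp only [Phi1]
    rw [Real.zero_rpow h0.ne', Real.rpow_two]
    field_simp
    ring
  · simp
    linarith

set_option maxHeartbeats 1000000 in
lemma onept {n : ℕ} {γ δ r B : ℝ} {u : ℝ → En n × ℝ → ℝ} (h0 : 0 < γ) (h1 : γ < 1) (hu : Adm γ δ u)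
    (hr : 0 < r) (hr2 : r ≤ 1 / 2) (hB : 0 < B) (A : En n) (D H : ℝ → ℝ) (hHc : Continuous H)
    (hD : ∀ t, HasDerivAt D (H t) t)
    (hH : ∀ t ∈ Icc (-(r ^ γ)) 0, H t * r ^ γ / γ = u t (0, r) - u t (0, 0))
    (hD0 : D (-(r ^ γ)) = u (-(r ^ γ)) (0, 0))
    (hA : ∀ t ∈ Icc (-(r ^ γ)) 0, ∀ y ∈ Icc 0 r, ∀ x : En n, ‖x‖ ≤ r →
      |u t (x, y) - u t (0, y) - ⟪A, x⟫| ≤ B)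
    (hδ : δ * (1 + (‖A‖ + 4 * B / r ^ 2)) < B / r ^ γ) :
    ∀ t ∈ Icc (-(r ^ γ)) 0, ∀ y ∈ Icc 0 r, ∀ x : En n, ‖x‖ ≤ r →
      u t (x, y) - ⟪A, x⟫ - D t - H t * y ^ γ / γ ≤ (4 * n + 12) * B := by
  have hrg : 0 < r ^ γ := Real.rpow_pos_of_pos hr _
  have hrg1 : r ^ γ ≤ 1 := Real.rpow_le_one hr.le (by linarith) h0.le
  set t0 := -(r ^ γ) with ht0
  have n0 : (0:ℝ) ≤ n := Nat.cast_nonneg n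
  set a2 := 2 * B / r ^ 2 with ha2
  set a3 := (2 * n + 1) * B / r ^ 2 with ha3
  set a4 := (2 * n + 4) * B / r ^ γ with ha4
  set a5 := (γ * (2 * n + 4) + 1) * B / r ^ γ with ha5
  have ha2r : a2 * r ^ 2 = 2 * B := by rw [ha2]; field_simp
  have ha3r : a3 * r ^ 2 = (2 * n + 1) * B := by rw [ha3]; field_simp
  have ha4r : a4 * r ^ γ = (2 * n + 4) * B := by rw [ha4]; field_simp
  have ha5r : a5 * r ^ γ = (γ * (2 * n + 4) + 1) * B := by rw [ha5]; field_simp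
  have p2 : 0 ≤ a2 := by positivity
  have p3 : 0 ≤ a3 := by positivity
  have p4 : 0 ≤ a4 := by positivity
  have p5 : 0 ≤ a5 := by positivity
  have z0 : (0:ℝ) ∈ Icc 0 r := ⟨le_rfl, hr.le⟩
  have rr : r ∈ Icc 0 r := ⟨hr.le, le_rfl⟩
  intro t ht y hy x hx
  have hcomp := comparison (ι := Fin 1) h0 hu ![1]
    (Phi1 γ a2 a3 a4 a5 B A D H t0) (ta := t0) (tb := 0) (ρ := r) (by linarith) le_rfl hr hr2
    (phi1_cont h0 (continuous_iff_continuousAt.2 fun t => (hD t).continuousAt) hHc).continuousOn ?_ t ![x] y ?_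
  · have e1 : wf ![1] u t ![x] y = u t (x, y) := by simp [wf]
    rw [e1] at hcomp
    simp only [Phi1, Matrix.cons_val] at hcomp
    have b1 : a2 * ‖x‖ ^ 2 ≤ a2 * r ^ 2 := by gcongr
    have b2 : 0 ≤ a3 * y ^ 2 := by positivity
    have b3 : a4 * y ^ γ ≤ a4 * r ^ γ := by
      gcongr
      exact hy.1
      exact hy.2
    have b4 : a5 * (t - t0) ≤ a5 * r ^ γ := by
      gcongr; linarith [ht.2]
    have b5 : γ * (2 * n + 4) * B ≤ 1 * (2 * n + 4) * B := by gcongr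
    linarith
  · intro t x y hK hpos
    have ew : ∀ t (x : Fin 1 → En n) y, wf ![1] u t x y = u t (x 0, y) := by intro t x y; simp [wf]
    simp only [ew] at hpos ⊢
    simp only [Phi1] at hpos
    have hx0 := hK.2.1 0
    have aa := abs_le.1 (hA t hK.1 y hK.2.2 (x 0) hx0)
    rcases hx0.eq_or_lt with hxr | hxr
    · left
      refine ⟨t, 0, y, ⟨hK.1, fun j => by simpa using hr.le, hK.2.2⟩, ?_⟩
      simp only [Phi1, Pi.zero_apply, inner_zero_right, norm_zero]
      rw [hxr]
      linarith
    have nall : ∀ j, ‖x j‖ < r := fun j => by rwa [Subsingleton.elim j 0]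
    rcases hK.2.2.2.eq_or_lt with hyr | hyr
    · left
      refine ⟨t, x, 0, ⟨hK.1, hK.2.1, z0⟩, ?_⟩
      simp only [Phi1]
      have bb := abs_le.1 (hA t hK.1 0 z0 (x 0) hx0)
      rw [hyr] at aa
      rw [hyr, Real.zero_rpow h0.ne']
      have := hH t hK.1
      simp only [mul_zero, zero_div, add_zero, sub_zero, ne_eq, OfNat.ofNat_ne_zero, not_false_eq_true, zero_pow]
      linarith
    right
    rcases hK.2.2.1.eq_or_lt with hy0 | hy0
    · right
      refine ⟨nall, hy0.symm, ?_, ?_⟩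
      · rcases hK.1.1.eq_or_lt with h3 | h3
        · exfalso
          rw [← hy0] at aa hpos
          rw [← h3] at aa hpos
          rw [Real.zero_rpow h0.ne', hD0] at hpos
          simp only [mul_zero, zero_div, add_zero, sub_zero, ne_eq, OfNat.ofNat_ne_zero, not_false_eq_true, zero_pow] at hpos
          have : 0 ≤ a2 * ‖x 0‖ ^ 2 := by positivity
          linarith
        · exact h3
      · refine phi1_base h0 h1 hD p2 ?_ t fun j => lt_of_lt_of_le (nall j) (by linarith)
        have e1 : 2 * a2 = 4 * B / r ^ 2 := by rw [ha2]; ring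
        have e2 : a5 = γ * a4 + B / r ^ γ := by rw [ha4, ha5]; ring
        rw [e1, e2]
        linarith
    · left
      refine ⟨nall, hy0, hyr, phi1_int h0 ?_ t hy0⟩
      have q : 0 < B / r ^ 2 := by positivity
      have e2 : a2 = 2 * (B / r ^ 2) := by rw [ha2]; ring
      have e3 : a3 = (2 * n + 1) * (B / r ^ 2) := by rw [ha3]; ring
      rw [e2, e3]
      have : n * (2 * 2) < (2 * n + 1) * (4 - 2 * γ) := by nlinarith
      have := mul_lt_mul_of_pos_right this q
      linarith
  · refine ⟨ht, ?_, hy⟩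
    intro j
    rw [Subsingleton.elim j 0]
    exact hx

set_option maxHeartbeats 1000000 in
lemma core {n : ℕ} {γ δ r B L : ℝ} {u : ℝ → En n × ℝ → ℝ} (h0 : 0 < γ) (h1 : γ < 1) (hu : Adm γ δ u)
    (hr : 0 < r) (hr2 : r ≤ 1 / 2) (hrg2 : r ^ γ ≤ 1 / 2) (hB : 0 < B) (A : En n)
    (hL0 : 0 ≤ L) (hL : ∀ t ∈ Icc (-(r ^ γ)) 0, |u t (0, r) - u t (0, 0)| ≤ L * r ^ γ)
    (hA : ∀ t ∈ Icc (-(r ^ γ)) 0, ∀ y ∈ Icc 0 r, ∀ x : En n, ‖x‖ ≤ r →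
      |u t (x, y) - u t (0, y) - ⟪A, x⟫| ≤ B)
    (hδ : δ * (1 + (‖A‖ + 4 * B / r ^ 2)) < B / r ^ γ) :
    ∃ D : ℝ → ℝ, ∀ t ∈ Icc (-(r ^ γ)) 0, DifferentiableWithinAt ℝ D (Icc (-(r ^ γ)) 0) t ∧
      |D t| ≤ 1 + γ * L ∧ |derivWithin D (Icc (-(r ^ γ)) 0) t| ≤ γ * L ∧
      ∀ y ∈ Icc 0 r, ∀ x : En n, ‖x‖ ≤ r →
        |u t (x, y) - ⟪A, x⟫ - D t - derivWithin D (Icc (-(r ^ γ)) 0) t / γ * y ^ γ|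
          ≤ (4 * n + 12) * B := by
  have hrg : 0 < r ^ γ := Real.rpow_pos_of_pos hr _
  have hle : -(r ^ γ) ≤ 0 := by linarith
  have hcu : ∀ y ∈ Icc 0 r, ContinuousOn (fun t => u t ((0 : En n), y)) (Icc (-(r ^ γ)) 0) := by
    intro y hy
    have : ContinuousOn (fun t : ℝ => ((t, ((0 : En n), y)) : ℝ × (En n × ℝ))) (Icc (-(r ^ γ)) 0) := by
      fun_prop
    refine hu.cont.comp this ?_
    intro t ht
    refine ⟨⟨by linarith [ht.1], ht.2⟩, ?_, hy.1⟩
    have h2 : y ≤ 1 := by linarith [hy.2]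
    simp only [norm_zero]
    nlinarith [hy.1]
  set H0 : ℝ → ℝ := fun t => γ * (u t (0, r) - u t (0, 0)) / r ^ γ with hH0
  have hH0c : ContinuousOn H0 (Icc (-(r ^ γ)) 0) := by
    have c1 := hcu r ⟨hr.le, le_rfl⟩
    have c2 := hcu 0 ⟨le_rfl, hr.le⟩
    exact ((c1.sub c2).const_mul γ |>.div_const _)
  set H : ℝ → ℝ := IccExtend hle ((Icc (-(r ^ γ)) 0).restrict H0) with hHdef
  have hHc : Continuous H := (continuousOn_iff_continuous_restrict.1 hH0c).Icc_extend'
  have hHe : ∀ t ∈ Icc (-(r ^ γ)) 0, H t = H0 t := by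
    intro t ht
    rw [hHdef, IccExtend_of_mem hle _ ht]; rfl
  have hHb0 : ∀ t ∈ Icc (-(r ^ γ)) 0, |H t| ≤ γ * L := by
    intro t ht
    rw [hHe t ht, hH0]
    simp only []
    rw [abs_div, abs_mul, abs_of_pos h0, abs_of_pos hrg, div_le_iff₀ hrg]
    have := mul_le_mul_of_nonneg_left (hL t ht) h0.le
    linarith
  have z0 : (0:ℝ) ∈ Icc 0 r := ⟨le_rfl, hr.le⟩
  set D : ℝ → ℝ := fun t => u (-(r ^ γ)) (0, 0) + ∫ τ in (-(r ^ γ))..t, H τ with hDdef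
  have hD : ∀ t, HasDerivAt D (H t) t := by
    intro t
    exact (hHc.integral_hasStrictDerivAt _ t).hasDerivAt.const_add _
  have hD0 : D (-(r ^ γ)) = u (-(r ^ γ)) (0, 0) := by simp [hDdef]
  have hHr : ∀ t ∈ Icc (-(r ^ γ)) 0, H t * r ^ γ / γ = u t (0, r) - u t (0, 0) := by
    intro t ht
    rw [hHe t ht, hH0]; field_simp
  have up := onept h0 h1 hu hr hr2 hB A D H hHc hD hHr hD0 hA hδ
  have dn := onept h0 h1 hu.neg hr hr2 hB (-A) (fun t => - D t) (fun t => - H t) hHc.neg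
    (fun t => (hD t).neg) (fun t ht => by have := hHr t ht; rw [neg_mul, neg_div, this]; ring)
    (by simp only [hD0])
    (fun t ht y hy x hx => by
      have := hA t ht y hy x hx
      rw [← abs_neg] at this
      rw [inner_neg_left]
      convert this using 2
      ring) (by rw [norm_neg]; exact hδ)
  refine ⟨D, fun t ht => ?_⟩
  have hdw : derivWithin D (Icc (-(r ^ γ)) 0) t = H t :=
    (hD t).hasDerivWithinAt.derivWithin (uniqueDiffOn_Icc (by linarith) t ht)
  refine ⟨(hD t).differentiableAt.differentiableWithinAt, ?_, by rw [hdw]; exact hHb0 t ht, ?_⟩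
  · have i1 : |u (-(r ^ γ)) ((0 : En n), 0)| ≤ 1 :=
      hu.bd ⟨by linarith, by linarith⟩ (by simp) ⟨le_rfl, by norm_num⟩
    have i2 : ‖∫ τ in (-(r ^ γ))..t, H τ‖ ≤ γ * L * |t - -(r ^ γ)| := by
      apply intervalIntegral.norm_integral_le_of_norm_le_const
      intro τ hτ
      rw [uIoc_of_le ht.1] at hτ
      exact hHb0 τ ⟨hτ.1.le, hτ.2.trans ht.2⟩
    have i3 : |t - -(r ^ γ)| ≤ 1 := by
      rw [abs_le]; constructor <;> linarith [ht.1, ht.2]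
    have i4 := mul_le_mul_of_nonneg_left i3 (mul_nonneg h0.le hL0)
    have i5 := abs_add_le (u (-(r ^ γ)) ((0 : En n), 0)) (∫ τ in (-(r ^ γ))..t, H τ)
    rw [Real.norm_eq_abs] at i2
    simp only [hDdef]
    linarith
  · intro y hy x hx
    have a1 := up t ht y hy x hx
    have a2 := dn t ht y hy x hx
    rw [inner_neg_left] at a2
    have e : - H t * y ^ γ / γ = -(H t * y ^ γ / γ) := by ring
    have e2 : H t / γ * y ^ γ = H t * y ^ γ / γ := by ring
    rw [hdw, e2, abs_le]
    rw [e] at a2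
    constructor <;> linarith

set_option maxHeartbeats 1000000 in
lemma iof (n : ℕ) {γ : ℝ} (h0 : 0 < γ) (h1 : γ < 1) :
    ∃ K > 0, ∀ α ∈ Ioo (0:ℝ) γ, ∃ δ > 0, ∃ r ∈ Ioo (0 : ℝ) 1, ∀ u : ℝ → En n × ℝ → ℝ, Adm γ δ u →
      ∃ (A : En n) (D : ℝ → ℝ), ‖A‖ ≤ K ∧
        ∀ t ∈ Icc (-(r ^ γ)) 0, DifferentiableWithinAt ℝ D (Icc (-(r ^ γ)) 0) t ∧
      |D t| ≤ K ∧ |derivWithin D (Icc (-(r ^ γ)) 0) t| ≤ K ∧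
      ∀ y ∈ Icc 0 r, ∀ x : En n, ‖x‖ ≤ r →
        |u t (x, y) - ⟪A, x⟫ - D t - derivWithin D (Icc (-(r ^ γ)) 0) t / γ * y ^ γ|
          ≤ r ^ (1 + α) := by
  obtain ⟨R, hR0, hR, hP, hQ⟩ := PQ n h0 h1
  obtain ⟨K1, hK1, hV⟩ := vert h0 h1 hR0 hR hP
  obtain ⟨CP, hCP, hP'⟩ := id hP
  obtain ⟨CQ, hCQ, hQ'⟩ := id hQ
  have n0 : (0:ℝ) ≤ n := Nat.cast_nonneg n
  have q1 : 0 ≤ n * (CP + 1) := by positivity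
  have q2 : 0 ≤ γ * K1 := by positivity
  refine ⟨n * (CP + 1) + 1 + γ * K1, by positivity, ?_⟩
  intro α hα
  set η := (γ - α) / 2 with hη
  have hη0 : 0 < η := by rw [hη]; linarith [hα.2]
  have hη1 : η ≤ 1 := by rw [hη]; linarith [hα.1]
  obtain ⟨C, hC, hHz⟩ := horiz h0 h1 hR0 hR hP hQ hη0 hη1
  set CT := C + 6 * n * (CQ + 1) with hCT
  have hCT0 : 0 < CT := by positivity
  obtain ⟨κ1, hκ1, hκ1', hκ1e⟩ := small_rpow (γ := γ) (K := 1) h0 zero_le_one hR0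
  obtain ⟨κ2, hκ2, hκ2', hκ2e⟩ := small_rpow (γ := η) (K := (4 * n + 12) * CT) (ε := 1) hη0 (by positivity) one_pos
  set r := min (R / 8) (min κ1 κ2) with hrdef
  have hr : 0 < r := lt_min (by positivity) (lt_min hκ1 hκ2)
  have r1 : r ≤ R / 8 := min_le_left _ _
  have r2 : r ≤ κ1 := (min_le_right _ _).trans (min_le_left _ _)
  have r3 : r ≤ κ2 := (min_le_right _ _).trans (min_le_right _ _)
  have hrR : r ^ γ ≤ R := by
    have := Real.rpow_le_rpow hr.le r2 h0.le
    linarith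
  have hrη : (4 * n + 12) * CT * r ^ η ≤ 1 := by
    have := Real.rpow_le_rpow hr.le r3 hη0.le
    have := mul_le_mul_of_nonneg_left this (by positivity : 0 ≤ (4 * n + 12) * CT)
    linarith
  have hrg : 0 < r ^ γ := Real.rpow_pos_of_pos hr _
  have hr2 : r ≤ 1 / 2 := by linarith
  have hrle : r ≤ R := by linarith
  clear_value r
  obtain ⟨δ1, hδ1, hV1⟩ := hV r hr hrle
  obtain ⟨δ2, hδ2, hH1⟩ := hHz r hr r1 hrR
  obtain ⟨δ3, hδ3, hP1⟩ := hP' r hr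
  have hrp : 0 < r ^ (1 + γ) := Real.rpow_pos_of_pos hr _
  obtain ⟨δ4, hδ4, hQ1⟩ := hQ' (r ^ (1 + γ)) hrp
  have hrq : 0 < r ^ (1 + γ - η) := Real.rpow_pos_of_pos hr _
  set B := CT * r ^ (1 + γ - η) with hB
  have hB0 : 0 < B := by positivity
  set W := 1 + (n * (CP + 1) + 4 * B / r ^ 2) with hW
  have hW0 : 0 < W := by positivity
  set δ5 := B / r ^ γ / (2 * W) with hδ5
  have hδ50 : 0 < δ5 := by positivity
  have hδ5W : δ5 * W < B / r ^ γ := by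
    have : δ5 * W = B / r ^ γ / 2 := by rw [hδ5]; field_simp
    rw [this]
    exact half_lt_self (by positivity)
  set δ := min (min δ1 δ2) (min (min δ3 δ4) δ5) with hδ
  have hδ0 : 0 < δ := lt_min (lt_min hδ1 hδ2) (lt_min (lt_min hδ3 hδ4) hδ50)
  have d1 : δ ≤ δ1 := (min_le_left _ _).trans (min_le_left _ _)
  have d2 : δ ≤ δ2 := (min_le_left _ _).trans (min_le_right _ _)
  have d3 : δ ≤ δ3 := (min_le_right _ _).trans ((min_le_left _ _).trans (min_le_left _ _))
  have d4 : δ ≤ δ4 := (min_le_right _ _).trans ((min_le_left _ _).trans (min_le_right _ _))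
  have d5 : δ ≤ δ5 := (min_le_right _ _).trans (min_le_right _ _)
  clear_value δ
  refine ⟨δ, hδ0, r, ⟨hr, by linarith⟩, ?_⟩
  intro u hu
  have ht0 : -(r ^ γ) ∈ Icc (-R) 0 := ⟨by linarith, by linarith⟩
  have zR : (0:ℝ) ∈ Icc 0 R := ⟨le_rfl, hR0.le⟩
  have ht00 : -(r ^ γ) ∈ Icc (-(r ^ γ)) 0 := ⟨le_rfl, by linarith⟩
  have erp : r ^ (1 + γ) = r * r ^ γ := by rw [Real.rpow_add hr, Real.rpow_one]
  obtain ⟨A, hA1, hA2⟩ := affine (g := fun x : En n => u (-(r ^ γ)) (x, 0) - u (-(r ^ γ)) (0, 0))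
    (r := r) (e := (CQ + 1) * r ^ (1 + γ)) (S0 := CP * r + r) hr (by simp)
    (by
      intro x hx
      have := hP1 u (hu.mono d3) _ ht0 0 zR x 0 (hx.trans hrle) (by simpa using hR0.le)
      rw [sub_zero, Real.rpow_one] at this
      have h2 := mul_le_mul_of_nonneg_left hx hCP
      linarith)
    (by
      intro x h hx hh
      have := hQ1 u (hu.mono d4) _ ht0 0 zR 0 x h (by simpa using hR0.le) (hx.trans hrle) (hh.trans hrle)
      rw [Real.rpow_one, zero_sub, norm_neg, zero_add] at this
      have h2 : ‖h‖ * ‖x‖ ^ γ ≤ r * r ^ γ :=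
        mul_le_mul hh (Real.rpow_le_rpow (norm_nonneg _) hx h0.le) (by positivity) hr.le
      have h3 := mul_le_mul_of_nonneg_left h2 hCQ
      rw [← erp] at h3
      refine le_trans (le_of_eq ?_) (this.trans ?_)
      · congr 1; ring
      · rw [mul_assoc]; linarith)
  have hA1' : ‖A‖ ≤ n * (CP + 1) := by
    refine hA1.trans (le_of_eq ?_)
    field_simp
  have hmono : r ^ (1 + γ) ≤ r ^ (1 + γ - η) :=
    Real.rpow_le_rpow_of_exponent_ge hr (by linarith) (by linarith)
  obtain ⟨D, hD⟩ := core (L := K1) (B := B) h0 h1 hu hr hr2 (by linarith) hB0 A hK1.le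
    (fun t ht => hV1 u (hu.mono d1) t ⟨by linarith [ht.1], ht.2⟩)
    (by
      intro t ht y hy x hx
      have a1 := abs_le.1 (hH1 u (hu.mono d2) t ht y hy x hx)
      have a2 := abs_le.1 (hA2 x hx)
      have a3 : 6 * n * ((CQ + 1) * r ^ (1 + γ)) ≤ 6 * n * ((CQ + 1) * r ^ (1 + γ - η)) := by
        gcongr
      have a4 : B = C * r ^ (1 + γ - η) + 6 * n * ((CQ + 1) * r ^ (1 + γ - η)) := by
        rw [hB, hCT]; ring
      rw [abs_le]
      constructor <;> linarith)
    (by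
      have : δ * (1 + (‖A‖ + 4 * B / r ^ 2)) ≤ δ5 * W := by
        rw [hW]
        apply mul_le_mul d5 (by linarith) (by positivity) hδ50.le
      linarith)
  refine ⟨A, D, by linarith, fun t ht => ?_⟩
  obtain ⟨c1, c2, c3, c4⟩ := hD t ht
  refine ⟨c1, by linarith, by linarith, fun y hy x hx => (c4 y hy x hx).trans ?_⟩
  have ee : r ^ (1 + γ - η) = r ^ (1 + α) * r ^ η := by
    rw [← Real.rpow_add hr]; congr 1; rw [hη]; ring
  have hra : 0 < r ^ (1 + α) := Real.rpow_pos_of_pos hr _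
  have := mul_le_mul_of_nonneg_left hrη hra.le
  rw [hB, ee]
  linarith

/-- **The improvement of flatness lemma** (Lemma 8.1): if `b` and `f` are small in `L^∞`
and `‖u‖_∞ ≤ 1`, then on a smaller parabolic cylinder `u` is `r^{1+α}`-close to a function
of the form `A·x + D(t) + (D'(t)/(1-a)) y^{1-a}` (here `1 - a = 2s`). -/
theorem improvement_of_flatness (n : ℕ) (hn : 1 ≤ n) (s : ℝ) (hs : s ∈ Ioo (0 : ℝ) (1/2))
    (M : ℝ) (hM : 0 ≤ M) :
    ∃ K > 0, ∀ (α : ℝ), α ∈ Ioo (0 : ℝ) (2*s) →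
    ∃ δ > 0, ∃ r ∈ Ioo (0 : ℝ) 1,
      ∀ (b : ℝ → En n → En n) (f : ℝ → En n → ℝ) (u : ℝ → En n × ℝ → ℝ),
      (∀ t ∈ Icc (-1 : ℝ) 0, (∀ x ∈ flatBall n 1, ‖b t x‖ ≤ M) ∧
        ∀ x ∈ flatBall n 1, ∀ x' ∈ flatBall n 1,
          ‖b t x - b t x'‖ ≤ M * ‖x - x'‖ ^ (1 - 2*s)) →
      (∀ t ∈ Icc (-1 : ℝ) 0, ∀ x ∈ flatBall n 1, ‖b t x‖ ≤ δ) →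
      (∀ t ∈ Icc (-1 : ℝ) 0, ∀ x ∈ flatBall n 1, |f t x| ≤ δ) →
      IsExtDDSolution (1 - 2*s) b f u →
      (∀ t ∈ Icc (-1 : ℝ) 0, ∀ p ∈ halfBall n 1, |u t p| ≤ 1) →
      ∃ (A : En n) (D : ℝ → ℝ),
        ‖A‖ ≤ K ∧
        (∀ t ∈ Icc (-(r ^ (2*s))) 0,
          DifferentiableWithinAt ℝ D (Icc (-(r ^ (2*s))) 0) t ∧
          |D t| ≤ K ∧ |derivWithin D (Icc (-(r ^ (2*s))) 0) t| ≤ K) ∧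
        ∀ t ∈ Icc (-(r ^ (2*s))) 0, ∀ p ∈ halfBallWithBase n r,
          |u t p - ⟪A, p.1⟫ - D t -
            (derivWithin D (Icc (-(r ^ (2*s))) 0) t / (2*s)) * p.2 ^ (2*s)| ≤
            r ^ (1 + α) := by
  obtain ⟨K, hK, h⟩ := iof n (γ := 2 * s) (by linarith [hs.1]) (by linarith [hs.2])
  refine ⟨K, hK, fun α hα => ?_⟩
  obtain ⟨δ, hδ, r, hr, h⟩ := h α hα
  refine ⟨δ, hδ, r, hr, fun b f u _ hb hf hsol hbd => ?_⟩
  obtain ⟨A, D, hA, hD⟩ := h u ⟨b, f, hb, hf, hsol, hbd⟩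
  refine ⟨A, D, hA, fun t ht => ⟨(hD t ht).1, (hD t ht).2.1, (hD t ht).2.2.1⟩, ?_⟩
  rintro t ht ⟨x, y⟩ ⟨hp1, hp2⟩
  simp only at hp1 hp2
  have hy : y ≤ r := by
    have : y ^ 2 ≤ r ^ 2 := by nlinarith [sq_nonneg ‖x‖]
    exact le_of_sq_le_sq this hr.1.le
  have hx : ‖x‖ ≤ r := by
    have : ‖x‖ ^ 2 ≤ r ^ 2 := by nlinarith [sq_nonneg y]
    exact le_of_sq_le_sq this hr.1.le
  exact (hD t ht).2.2.2 y ⟨hp2, hy⟩ x hx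

end
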